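/- arXiv:cs/0202011 — 2 statements merged into one kernel-verified Lean document; each statement's English description precedes it below -/
import Mathlib

section
/- Let P be a simple polygon with counterclockwise vertex order. Then the interior of the kernel of P equals the intersection of Wedge(v) over all strictly convex vertices v of P. -/
open scoped BigOperators

/-- Points in the plane. -/
abbrev Pt := ℝ × ℝ

/-- 2×2 determinant (cross product) of two plane vectors. -/
noncomputable def det2 (p q : Pt) : ℝ := p.1 * q.2 - p.2 * q.1

/-- Open half-plane strictly to the left of the directed line from `p` to `q`. -/
def Lhp (p q : Pt) : Set Pt := {x | 0 < det2 (q - p) (x - p)}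

/-- Open half-plane strictly to the right of the directed line from `p` to `q`. -/
def Rhp (p q : Pt) : Set Pt := {x | det2 (q - p) (x - p) < 0}

/-- The boundary of the polygon with vertices `v 0, …, v (n-1)`:
the union of its (cyclically consecutive) edges. -/
def polyBoundary {n : ℕ} [NeZero n] (v : Fin n → Pt) : Set Pt :=
  ⋃ i : Fin n, segment ℝ (v i) (v (i + 1))

/-- `v` describes a simple polygon: at least 3 distinct vertices, and two distinct
edges may only meet at a common endpoint. -/
def IsSimplePolygon {n : ℕ} [NeZero n] (v : Fin n → Pt) : Prop :=
  3 ≤ n ∧ Function.Injective v ∧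
    ∀ i j : Fin n, i ≠ j →
      segment ℝ (v i) (v (i + 1)) ∩ segment ℝ (v j) (v (j + 1)) ⊆
        ({v i, v (i + 1)} ∩ {v j, v (j + 1)} : Set Pt)

/-- The interior of the polygon: the union of the bounded connected components of the
complement of the boundary. -/
def polyInterior {n : ℕ} [NeZero n] (v : Fin n → Pt) : Set Pt :=
  {x | x ∉ polyBoundary v ∧
    Bornology.IsBounded (connectedComponentIn (polyBoundary v)ᶜ x)}

/-- The (closed) polygonal region: interior together with boundary. -/
def polyRegion {n : ℕ} [NeZero n] (v : Fin n → Pt) : Set Pt :=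
  polyBoundary v ∪ polyInterior v

/-- Twice the signed area of the polygon. -/
noncomputable def signedArea2 {n : ℕ} [NeZero n] (v : Fin n → Pt) : ℝ :=
  ∑ i : Fin n, det2 (v i) (v (i + 1))

/-- The vertices are listed in counterclockwise order. -/
def IsCCW {n : ℕ} [NeZero n] (v : Fin n → Pt) : Prop := 0 < signedArea2 v

/-- The vertex `v i` of a counterclockwise polygon is strictly convex
(interior angle strictly less than 180°). -/
def StrictlyConvexAt {n : ℕ} [NeZero n] (v : Fin n → Pt) (i : Fin n) : Prop :=
  0 < det2 (v i - v (i - 1)) (v (i + 1) - v i)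

/-- The vertex `v i` of a counterclockwise polygon is reflex
(interior angle greater than or equal to 180°). -/
def ReflexAt {n : ℕ} [NeZero n] (v : Fin n → Pt) (i : Fin n) : Prop :=
  det2 (v i - v (i - 1)) (v (i + 1) - v i) ≤ 0

/-- The wedge of vertex `v i`:  `L(v⁻, v) ∩ R(v⁺, v) ∩ interior P`. -/
def Wedge {n : ℕ} [NeZero n] (v : Fin n → Pt) (i : Fin n) : Set Pt :=
  Lhp (v (i - 1)) (v i) ∩ Rhp (v (i + 1)) (v i) ∩ polyInterior v

/-- `x` sees `y` inside the polygon `v`: the segment `xy` is contained in the region. -/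
def Sees {n : ℕ} [NeZero n] (v : Fin n → Pt) (x y : Pt) : Prop :=
  segment ℝ x y ⊆ polyRegion v

/-- The kernel of the polygon: the points of the region that see every point of it. -/
def polyKernel {n : ℕ} [NeZero n] (v : Fin n → Pt) : Set Pt :=
  {x ∈ polyRegion v | ∀ y ∈ polyRegion v, segment ℝ x y ⊆ polyRegion v}

/-- The open triangle on three points. -/
def openTriangle (a b c : Pt) : Set Pt := interior (convexHull ℝ {a, b, c})

/-- `a b c d` (in counterclockwise order) form a strictly convex quadrilateral. -/
def StrictConvexQuad (a b c d : Pt) : Prop :=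
  0 < det2 (b - a) (c - b) ∧ 0 < det2 (c - b) (d - c) ∧
    0 < det2 (d - c) (a - d) ∧ 0 < det2 (a - d) (b - a)

/-- The closed region of a quadrilateral cell. -/
noncomputable def quadSet (q : Pt × Pt × Pt × Pt) : Set Pt :=
  convexHull ℝ {q.1, q.2.1, q.2.2.1, q.2.2.2}

/-- The closed region of a triangular cell. -/
noncomputable def triSet (t : Pt × Pt × Pt) : Set Pt :=
  convexHull ℝ {t.1, t.2.1, t.2.2}

/-- The vertices of a quadrilateral cell. -/
noncomputable def quadVerts (q : Pt × Pt × Pt × Pt) : Finset Pt :=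
  {q.1, q.2.1, q.2.2.1, q.2.2.2}

/-- The vertices of a triangular cell. -/
noncomputable def triVerts (t : Pt × Pt × Pt) : Finset Pt :=
  {t.1, t.2.1, t.2.2}

/-- A strictly convex quadrangulation of a finite planar point set `S`:
a decomposition of `conv S` into strictly convex quadrilaterals and at most one
(nondegenerate) triangle, with pairwise disjoint interiors, whose vertex set contains
`S`, and such that no point of `S` is interior to a cell. -/
structure ConvexQuadrangulation (S : Finset Pt) where
  quads : Finset (Pt × Pt × Pt × Pt)
  tris : Finset (Pt × Pt × Pt)
  tris_card : tris.card ≤ 1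
  quads_convex : ∀ q ∈ quads, StrictConvexQuad q.1 q.2.1 q.2.2.1 q.2.2.2
  tris_nondeg : ∀ t ∈ tris, 0 < det2 (t.2.1 - t.1) (t.2.2 - t.2.1)
  covers : ((⋃ q ∈ quads, quadSet q) ∪ ⋃ t ∈ tris, triSet t) = convexHull ℝ (S : Set Pt)
  cells_disjoint : ((quadSet '' quads) ∪ (triSet '' tris)).Pairwise
    fun A B => interior A ∩ interior B = ∅
  verts_cover : (S : Set Pt) ⊆
    ((quads.biUnion quadVerts ∪ tris.biUnion triVerts : Finset Pt) : Set Pt)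
  no_pt_in_quad_interior : ∀ q ∈ quads, ∀ p ∈ S, p ∉ interior (quadSet q)
  no_pt_in_tri_interior : ∀ t ∈ tris, ∀ p ∈ S, p ∉ interior (triSet t)

/-- The Steiner points of a quadrangulation: vertices of the decomposition not in `S`. -/
noncomputable def steinerPoints (S : Finset Pt) (Q : ConvexQuadrangulation S) : Finset Pt :=
  (Q.quads.biUnion quadVerts ∪ Q.tris.biUnion triVerts) \ S


section
namespace KW

/-- A point as a complex number. -/
def cp (p : Pt) : ℂ := ⟨p.1, p.2⟩

/-- Dot product. -/
def dot (p q : Pt) : ℝ := p.1 * q.1 + p.2 * q.2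

/-- Oriented angle from `a` to `b`, in `(-π, π]`. -/
noncomputable def ang (a b : Pt) : ℝ := Complex.arg (cp b / cp a)

lemma cp_eq_zero {p : Pt} : cp p = 0 ↔ p = 0 := by
  simp [cp, Complex.ext_iff, Prod.ext_iff]

lemma cp_ne_zero {p : Pt} (h : p ≠ 0) : cp p ≠ 0 := fun h' => h (cp_eq_zero.1 h')

lemma cp_sub (p q : Pt) : cp (p - q) = cp p - cp q := by
  simp [cp, Complex.ext_iff]

lemma continuous_cp : Continuous cp := by
  have : cp = fun p : Pt => Complex.equivRealProdCLM.symm p := by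
    funext p
    simp [cp, Complex.ext_iff]
  rw [this]
  exact Complex.equivRealProdCLM.symm.continuous

lemma dot_self_pos {a : Pt} (h : a ≠ 0) : 0 < dot a a := by
  unfold dot
  by_contra hc
  apply h
  have h1 : a.1 = 0 := by nlinarith [mul_self_nonneg a.1, mul_self_nonneg a.2]
  have h2 : a.2 = 0 := by nlinarith [mul_self_nonneg a.1, mul_self_nonneg a.2]
  exact Prod.ext h1 h2

lemma im_div (a b : Pt) : (cp b / cp a).im = det2 a b / dot a a := by
  simp [cp, det2, dot, Complex.div_im, Complex.normSq_apply]
  ring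

lemma re_div (a b : Pt) : (cp b / cp a).re = dot a b / dot a a := by
  simp [cp, dot, Complex.div_re, Complex.normSq_apply]
  ring

lemma ang_pos {a b : Pt} (h : 0 < det2 a b) : 0 < ang a b ∧ ang a b < Real.pi := by
  have ha : a ≠ 0 := by
    rintro rfl
    simp [det2] at h
  have h1 : 0 < (cp b / cp a).im := by
    rw [im_div]
    exact div_pos h (dot_self_pos ha)
  constructor
  · have h2 : 0 ≤ ang a b := Complex.arg_nonneg_iff.2 h1.le
    rcases h2.lt_or_eq with h3 | h3
    · exact h3
    · exfalso
      have := (Complex.arg_eq_zero_iff).1 h3.symm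
      linarith [this.2]
  · exact Complex.arg_lt_pi_iff.2 (Or.inr h1.ne')

lemma ang_gt (a b : Pt) : -Real.pi < ang a b := Complex.neg_pi_lt_arg _
lemma ang_le (a b : Pt) : ang a b ≤ Real.pi := Complex.arg_le_pi _

lemma ang_neg {a b : Pt} (h : det2 a b < 0) : ang a b < 0 := by
  have ha : a ≠ 0 := by
    rintro rfl
    simp [det2] at h
  refine Complex.arg_neg_iff.2 ?_
  rw [im_div]
  exact div_neg_of_neg_of_pos h (dot_self_pos ha)

/-- angles add up modulo `2π`. -/
lemma ang_add {a b c : Pt} (ha : a ≠ 0) (hb : b ≠ 0) (hc : c ≠ 0) :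
    ∃ k : ℤ, ang a c = ang a b + ang b c + 2 * Real.pi * k := by
  have h := Complex.arg_mul_coe_angle (x := cp b / cp a) (y := cp c / cp b)
    (div_ne_zero (cp_ne_zero hb) (cp_ne_zero ha)) (div_ne_zero (cp_ne_zero hc) (cp_ne_zero hb))
  have h2 : cp b / cp a * (cp c / cp b) = cp c / cp a := by
    have := cp_ne_zero hb
    have := cp_ne_zero ha
    field_simp
  rw [h2, ← Real.Angle.coe_add, Real.Angle.angle_eq_iff_two_pi_dvd_sub] at h
  obtain ⟨k, hk⟩ := h
  exact ⟨k, by unfold ang; linarith⟩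

lemma int_zero {k : ℤ} {x : ℝ} (h : x = 2 * Real.pi * k) (h1 : -(2 * Real.pi) < x)
    (h2 : x < 2 * Real.pi) : k = 0 := by
  have hp := Real.pi_pos
  have a1 : (k : ℝ) < 1 := by
    by_contra hc
    push Not at hc
    nlinarith
  have a2 : (-1 : ℝ) < k := by
    by_contra hc
    push Not at hc
    nlinarith
  have b1 : k < 1 := by exact_mod_cast a1
  have b2 : -1 < k := by exact_mod_cast a2
  omega

lemma ang_half_bound {u z : Pt} (h : 0 < dot u z) :
    -(Real.pi / 2) < ang u z ∧ ang u z < Real.pi / 2 := by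
  have hu : u ≠ 0 := by
    rintro rfl
    simp [dot] at h
  have : |ang u z| < Real.pi / 2 := by
    refine Complex.abs_arg_lt_pi_div_two_iff.2 (Or.inl ?_)
    rw [re_div]
    exact div_pos h (dot_self_pos hu)
  exact abs_lt.1 this

/-- In an open half-plane angles are differences. -/
lemma ang_half {u z w : Pt} (hz : 0 < dot u z) (hw : 0 < dot u w) :
    ang z w = ang u w - ang u z := by
  have hu : u ≠ 0 := by
    rintro rfl
    simp [dot] at hz
  have hz0 : z ≠ 0 := by
    rintro rfl
    simp [dot] at hz
  have hw0 : w ≠ 0 := by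
    rintro rfl
    simp [dot] at hw
  obtain ⟨k, hk⟩ := ang_add hu hz0 hw0
  have h1 := ang_half_bound hz
  have h2 := ang_half_bound hw
  have h3 := ang_gt z w
  have h4 := ang_le z w
  have hp := Real.pi_pos
  have : k = 0 := int_zero (x := ang u w - ang u z - ang z w) (by linarith) (by linarith) (by linarith)
  subst this
  push_cast at hk
  linarith

lemma slit_of_not_mem {p a b : Pt} (h : p ∉ segment ℝ a b) :
    cp (b - p) / cp (a - p) ∈ Complex.slitPlane := by
  have ha : a - p ≠ 0 := by
    intro h0
    apply h
    rw [sub_eq_zero] at h0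
    rw [← h0]
    exact left_mem_segment ℝ _ _
  have hd := dot_self_pos ha
  by_contra hc
  rw [Complex.mem_slitPlane_iff] at hc
  push Not at hc
  obtain ⟨h1, h2⟩ := hc
  set r := cp (b - p) / cp (a - p) with hr
  have hb : cp (b - p) = r * cp (a - p) := by
    rw [hr, div_mul_cancel₀ _ (cp_ne_zero ha)]
  have e1 := congrArg Complex.re hb
  have e2 := congrArg Complex.im hb
  simp only [cp, Complex.mul_re, Complex.mul_im, h2, Prod.fst_sub, Prod.snd_sub, zero_mul,
    sub_zero, add_zero] at e1 e2
  apply h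
  have hs : 0 < 1 - r.re := by linarith
  refine ⟨(-r.re) / (1 - r.re), 1 / (1 - r.re), by apply div_nonneg <;> linarith,
    by positivity, by field_simp; ring, ?_⟩
  apply Prod.ext
  · simp only [Prod.fst_add, Prod.smul_fst, smul_eq_mul]
    field_simp
    linarith
  · simp only [Prod.snd_add, Prod.smul_snd, smul_eq_mul]
    field_simp
    linarith

lemma ang_lt_pi_of_not_mem {p a b : Pt} (h : p ∉ segment ℝ a b) :
    ang (a - p) (b - p) < Real.pi := by
  have := (Complex.mem_slitPlane_iff_arg.1 (slit_of_not_mem h)).1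
  exact lt_of_le_of_ne (ang_le _ _) this

lemma ang_continuousAt {p a b : Pt} (h : p ∉ segment ℝ a b) :
    ContinuousAt (fun q => ang (a - q) (b - q)) p := by
  have ha : a - p ≠ 0 := by
    intro h0
    apply h
    rw [sub_eq_zero] at h0
    rw [← h0]
    exact left_mem_segment ℝ _ _
  have h1 : ContinuousAt (fun q : Pt => cp (b - q) / cp (a - q)) p := by
    apply ContinuousAt.div
    · exact (continuous_cp.comp (continuous_const.sub continuous_id)).continuousAt
    · exact (continuous_cp.comp (continuous_const.sub continuous_id)).continuousAt
    · exact cp_ne_zero ha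
  exact ContinuousAt.comp (f := fun q : Pt => cp (b - q) / cp (a - q)) (g := Complex.arg)
    (Complex.continuousAt_arg (slit_of_not_mem h)) h1

lemma convexHull_seg_closed (a b : Pt) : IsClosed (segment ℝ a b) := by
  rw [segment_eq_image]
  exact (isCompact_Icc.image (by fun_prop)).isClosed

lemma seg_compact (a b : Pt) : IsCompact (segment ℝ a b) := by
  rw [segment_eq_image]
  exact isCompact_Icc.image (by fun_prop)

/-- separation of a closed convex set from `0` by a dot product -/
lemma sep {t : Set Pt} (hc : Convex ℝ t) (hcl : IsClosed t) (h0 : (0 : Pt) ∉ t) :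
    ∃ u : Pt, ∀ z ∈ t, 0 < dot u z := by
  obtain ⟨f, s, h1, h2⟩ := geometric_hahn_banach_point_closed hc hcl h0
  refine ⟨(f (1, 0), f (0, 1)), fun z hz => ?_⟩
  have h3 := h2 z hz
  rw [map_zero] at h1
  have : f z = z.1 * f (1, 0) + z.2 * f (0, 1) := by
    conv_lhs => rw [show z = z.1 • ((1, 0) : Pt) + z.2 • ((0, 1) : Pt) by ext <;> simp]
    rw [map_add, map_smul, map_smul]
    simp
  unfold dot
  simp only
  nlinarith

end KW
end

section
namespace KW
open Metric

variable {n : ℕ} [NeZero n]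

/-- `2π` times the winding number. -/
noncomputable def W (v : Fin n → Pt) (p : Pt) : ℝ := ∑ i : Fin n, ang (v i - p) (v (i + 1) - p)

lemma sum_shift (f : Fin n → ℝ) : ∑ i : Fin n, f (i + 1) = ∑ i, f i :=
  Equiv.sum_comp (Equiv.addRight (1 : Fin n)) f

lemma not_mem_bd {v : Fin n → Pt} {p : Pt} :
    p ∉ polyBoundary v ↔ ∀ i, p ∉ segment ℝ (v i) (v (i + 1)) := by
  simp [polyBoundary]

lemma vert_ne {v : Fin n → Pt} {p : Pt} (h : p ∉ polyBoundary v) (i : Fin n) : v i - p ≠ 0 := by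
  intro h0
  rw [sub_eq_zero] at h0
  apply not_mem_bd.1 h i
  rw [← h0]
  exact left_mem_segment ℝ _ _

/-- General telescoping: with reference direction `d`. -/
lemma W_tele {v : Fin n → Pt} {p d : Pt} (k : Fin n → ℤ)
    (hk : ∀ i, ang (v i - p) (v (i + 1) - p)
      = ang d (v (i + 1) - p) - ang d (v i - p) + 2 * Real.pi * k i) :
    W v p = 2 * Real.pi * (∑ i, k i : ℤ) := by
  unfold W
  rw [Finset.sum_congr rfl (fun i _ => hk i), Finset.sum_add_distrib, Finset.sum_sub_distrib,
    sum_shift (fun i => ang d (v i - p))]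
  push_cast
  rw [Finset.mul_sum]
  ring

lemma W_int {v : Fin n → Pt} {p : Pt} (h : p ∉ polyBoundary v) :
    ∃ k : ℤ, W v p = 2 * Real.pi * k := by
  have : ∀ i : Fin n, ∃ k : ℤ, ang (v i - p) (v (i + 1) - p)
      = ang (1, 0) (v (i + 1) - p) - ang (1, 0) (v i - p) + 2 * Real.pi * k := by
    intro i
    obtain ⟨k, hk⟩ := ang_add (a := ((1, 0) : Pt)) (b := v i - p) (c := v (i + 1) - p) (by simp)
      (vert_ne h i) (vert_ne h (i + 1))
    refine ⟨-k, ?_⟩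
    push_cast
    linarith
  choose k hk using this
  exact ⟨_, W_tele k hk⟩

lemma W_half {v : Fin n → Pt} {p u : Pt} (h : ∀ i, 0 < dot u (v i - p)) : W v p = 0 := by
  have := W_tele (v := v) (p := p) (d := u) (fun _ => 0) (fun i => by
    rw [ang_half (h i) (h (i + 1))]; simp)
  simpa using this

lemma dot_seg {u p a b z : Pt} (ha : 0 < dot u (a - p)) (hb : 0 < dot u (b - p))
    (hz : z ∈ segment ℝ a b) : 0 < dot u (z - p) := by
  obtain ⟨s, t, hs, ht, hst, rfl⟩ := hz
  have : dot u (s • a + t • b - p) = s * dot u (a - p) + t * dot u (b - p) := by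
    simp only [dot, Prod.fst_sub, Prod.snd_sub, Prod.fst_add, Prod.snd_add, Prod.smul_fst,
      Prod.smul_snd, smul_eq_mul]
    linear_combination (u.1 * p.1 + u.2 * p.2) * hst
  rw [this]
  rcases hs.lt_or_eq with h | h
  · nlinarith [mul_pos h ha, mul_nonneg ht hb.le]
  · subst h
    have : t = 1 := by linarith
    subst this
    linarith

lemma half_not_mem {v : Fin n → Pt} {p u : Pt} (h : ∀ i, 0 < dot u (v i - p)) :
    p ∉ polyBoundary v := by
  rw [not_mem_bd]
  intro i hi
  have := dot_seg (h i) (h (i + 1)) hi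
  simp [dot] at this

lemma W_continuousAt {v : Fin n → Pt} {p : Pt} (h : p ∉ polyBoundary v) :
    ContinuousAt (W v) p := by
  have h := not_mem_bd.1 h
  unfold W
  exact tendsto_finsetSum _ fun i _ => ang_continuousAt (h i)

lemma bd_closed (v : Fin n → Pt) : IsClosed (polyBoundary v) :=
  isClosed_iUnion_of_finite fun _ => convexHull_seg_closed _ _

/-- Two points joined by a preconnected set off the boundary. -/
def Conn (v : Fin n → Pt) (p q : Pt) : Prop :=
  ∃ S : Set Pt, IsPreconnected S ∧ S ⊆ (polyBoundary v)ᶜ ∧ p ∈ S ∧ q ∈ S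

lemma Conn.symm {v : Fin n → Pt} {p q : Pt} (h : Conn v p q) : Conn v q p := by
  obtain ⟨S, a, b, c, d⟩ := h
  exact ⟨S, a, b, d, c⟩

lemma Conn.trans {v : Fin n → Pt} {p q r : Pt} (h : Conn v p q) (h' : Conn v q r) :
    Conn v p r := by
  obtain ⟨S, a, b, c, d⟩ := h
  obtain ⟨S', a', b', c', d'⟩ := h'
  exact ⟨S ∪ S', a.union q d c' a', Set.union_subset b b', Or.inl c, Or.inr d'⟩

lemma Conn.mem_comp {v : Fin n → Pt} {p q : Pt} (h : Conn v p q) :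
    q ∈ connectedComponentIn (polyBoundary v)ᶜ p := by
  obtain ⟨S, a, b, c, d⟩ := h
  exact a.subset_connectedComponentIn c b d

lemma W_eq_of_preconn {v : Fin n → Pt} {S : Set Pt} (hS : IsPreconnected S)
    (hb : S ⊆ (polyBoundary v)ᶜ) {p q : Pt} (hp : p ∈ S) (hq : q ∈ S) : W v p = W v q := by
  have key : ∀ p ∈ S, ∀ q ∈ S, ¬ (W v p < W v q) := by
    intro p hp q hq hlt
    have hc : ContinuousOn (W v) S := fun x hx => (W_continuousAt (hb hx)).continuousWithinAt
    have hI := (hS.image _ hc).ordConnected.out (Set.mem_image_of_mem _ hp)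
      (Set.mem_image_of_mem _ hq)
    obtain ⟨k, hk⟩ := W_int (hb hp)
    obtain ⟨l, hl⟩ := W_int (hb hq)
    have hpi := Real.pi_pos
    have hkl : k < l := by
      have : (k : ℝ) < l := by
        by_contra hc
        push Not at hc
        nlinarith
      exact_mod_cast this
    have hkl' : (k : ℝ) + 1 ≤ l := by exact_mod_cast hkl
    obtain ⟨r, hr, hrW⟩ := @hI (W v p + Real.pi) ⟨by linarith, by nlinarith⟩
    obtain ⟨m, hm⟩ := W_int (hb hr)
    have h2 : (2 * m : ℝ) = 2 * k + 1 := by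
      have : Real.pi * (2 * m) = Real.pi * (2 * k + 1) := by nlinarith
      exact mul_left_cancel₀ hpi.ne' this
    have h3 : 2 * m = 2 * k + 1 := by exact_mod_cast h2
    omega
  exact le_antisymm (not_lt.1 (key q hq p hp)) (not_lt.1 (key p hp q hq))

lemma Conn.W_eq {v : Fin n → Pt} {p q : Pt} (h : Conn v p q) : W v p = W v q := by
  obtain ⟨S, a, b, c, d⟩ := h
  exact W_eq_of_preconn a b c d

/-! Combinatorial consequences of simplicity. -/

lemma one_ne {v : Fin n → Pt} (h : IsSimplePolygon v) : (1 : Fin n) ≠ 0 := by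
  have h3 := h.1
  intro h1
  have := congrArg Fin.val h1
  simp at this
  omega

lemma two_ne {v : Fin n → Pt} (h : IsSimplePolygon v) : (1 : Fin n) + 1 ≠ 0 := by
  have h3 := h.1
  intro h1
  have := congrArg Fin.val h1
  rw [Fin.val_add, Fin.val_one', Nat.mod_eq_of_lt (a := 1) (by omega),
    Nat.mod_eq_of_lt (by omega)] at this
  simp at this

lemma edge_ne {v : Fin n → Pt} (h : IsSimplePolygon v) (i : Fin n) : v i ≠ v (i + 1) := by
  intro h1
  have := h.2.1 h1
  exact one_ne h (by simpa using this)

lemma edge_ne_zero {v : Fin n → Pt} (h : IsSimplePolygon v) (i : Fin n) : v (i + 1) - v i ≠ 0 :=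
  sub_ne_zero.2 (edge_ne h i).symm

lemma nbr_ne {v : Fin n → Pt} (h : IsSimplePolygon v) (i : Fin n) : v i ≠ v (i + 1 + 1) := by
  intro h1
  have := h.2.1 h1
  rw [add_assoc] at this
  exact two_ne h (by simpa using this)

lemma open_not_mem {v : Fin n → Pt} (h : IsSimplePolygon v) {i j : Fin n} (hij : j ≠ i) {m : Pt}
    (hm : m ∈ openSegment ℝ (v i) (v (i + 1))) : m ∉ segment ℝ (v j) (v (j + 1)) := by
  intro hj
  have h1 := (h.2.2 i j hij.symm ⟨openSegment_subset_segment _ _ _ hm, hj⟩).1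
  rcases h1 with h1 | h1
  · rw [h1, left_mem_openSegment_iff] at hm
    exact edge_ne h i hm
  · rw [h1, right_mem_openSegment_iff] at hm
    exact edge_ne h i hm

lemma vert_not_mem {v : Fin n → Pt} (h : IsSimplePolygon v) {j k : Fin n} (h1 : k ≠ j + 1)
    (h2 : k ≠ j) : v (j + 1) ∉ segment ℝ (v k) (v (k + 1)) := by
  intro hj
  have h3 := (h.2.2 j k h2.symm ⟨right_mem_segment _ _ _, hj⟩).2
  rcases h3 with h3 | h3
  · exact h1 (h.2.1 h3).symm
  · have := h.2.1 h3
    exact h2 (add_right_cancel this).symm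

lemma not_fold {v : Fin n → Pt} (h : IsSimplePolygon v) (j : Fin n) :
    (0 : Pt) ∉ segment ℝ (v (j + 1) - v j) (v (j + 1 + 1) - v (j + 1)) := by
  rintro ⟨a, b, ha, hb, hab, he⟩
  have hz : v (j + 1) - a • (v (j + 1) - v j) = v (j + 1) + b • (v (j + 1 + 1) - v (j + 1)) := by
    rw [sub_eq_iff_eq_add, add_assoc, add_comm (b • _), he, add_zero]
  have hne : j ≠ j + 1 := by
    intro h'
    exact one_ne h (by simpa using h'.symm)
  have hm : v (j + 1) - a • (v (j + 1) - v j) ∈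
      ({v j, v (j + 1)} ∩ {v (j + 1), v (j + 1 + 1)} : Set Pt) := h.2.2 j (j + 1) hne
    ⟨⟨a, b, ha, hb, hab, by
      have : b = 1 - a := by linarith
      subst this
      module⟩, by
      rw [hz]
      exact ⟨a, b, ha, hb, hab, by
        have : a = 1 - b := by linarith
        subst this
        module⟩⟩
  have hv : v (j + 1) - a • (v (j + 1) - v j) = v (j + 1) := by
    rcases hm.1 with h1 | h1
    · rcases hm.2 with h2 | h2
      · exact h2
      · rw [h1] at h2
        exact absurd h2 (nbr_ne h j)
    · exact h1
  have ha0 : a = 0 := by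
    have : a • (v (j + 1) - v j) = 0 := by simpa using hv
    exact (smul_eq_zero.1 this).resolve_right (edge_ne_zero h j)
  have hb0 : b = 0 := by
    have : b • (v (j + 1 + 1) - v (j + 1)) = 0 := by simpa [ha0] using he
    exact (smul_eq_zero.1 this).resolve_right (edge_ne_zero h (j + 1))
  linarith

lemma not_fold_sep {v : Fin n → Pt} (h : IsSimplePolygon v) (j : Fin n) :
    ∃ u : Pt, 0 < dot u (v (j + 1) - v j) ∧ 0 < dot u (v (j + 1 + 1) - v (j + 1)) := by
  obtain ⟨u, hu⟩ := sep (convex_segment _ _) (convexHull_seg_closed _ _) (not_fold h j)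
  exact ⟨u, hu _ (left_mem_segment _ _ _), hu _ (right_mem_segment _ _ _)⟩

end KW
end

section
namespace KW
open Metric

variable {n : ℕ} [NeZero n]

/-- Positive to the left of the edge `i`, negative to the right. -/
noncomputable def ef (v : Fin n → Pt) (i : Fin n) (p : Pt) : ℝ := det2 (v (i + 1) - v i) (p - v i)

lemma ef_continuous (v : Fin n → Pt) (i : Fin n) : Continuous (ef v i) := by
  unfold ef det2
  fun_prop

lemma ef_comb (v : Fin n → Pt) (i : Fin n) {a b : ℝ} (hab : a + b = 1) (p q : Pt) :
    ef v i (a • p + b • q) = a * ef v i p + b * ef v i q := by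
  have : a = 1 - b := by linarith
  subst this
  simp only [ef, det2, Prod.fst_sub, Prod.snd_sub, Prod.fst_add, Prod.snd_add, Prod.smul_fst,
      Prod.smul_snd, smul_eq_mul]
  ring

lemma ef_left (v : Fin n → Pt) (i : Fin n) : ef v i (v i) = 0 := by
  simp [ef, det2]

lemma ef_right (v : Fin n → Pt) (i : Fin n) : ef v i (v (i + 1)) = 0 := by
  simp [ef, det2]; ring

lemma ef_seg {v : Fin n → Pt} {i : Fin n} {p : Pt} (h : p ∈ segment ℝ (v i) (v (i + 1))) :
    ef v i p = 0 := by
  obtain ⟨a, b, -, -, hab, rfl⟩ := h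
  rw [ef_comb v i hab, ef_left, ef_right]
  ring

lemma half_convex (v : Fin n → Pt) (i : Fin n) (s : ℝ) : Convex ℝ {p | 0 < s * ef v i p} := by
  intro p hp q hq a b ha hb hab
  simp only [Set.mem_ofPred_eq] at *
  rw [ef_comb v i hab]
  rcases ha.lt_or_eq with h | h
  · nlinarith [mul_pos h hp, mul_nonneg hb hq.le]
  · subst h
    have : b = 1 := by linarith
    subst this
    linarith

lemma near_avoid (v : Fin n → Pt) {K : Set Pt} (hK : IsCompact K) (P : Fin n → Prop)
    (h : ∀ j, P j → Disjoint K (segment ℝ (v j) (v (j + 1)))) :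
    ∃ δ > 0, ∀ p ∈ thickening δ K, ∀ j, P j → p ∉ segment ℝ (v j) (v (j + 1)) := by
  have hcl : IsClosed (⋃ j : {j // P j}, segment ℝ (v j) (v (j + 1))) :=
    isClosed_iUnion_of_finite fun _ => convexHull_seg_closed _ _
  have hd : Disjoint K (⋃ j : {j // P j}, segment ℝ (v j) (v (j + 1))) := by
    rw [Set.disjoint_iUnion_right]
    exact fun j => h j.1 j.2
  obtain ⟨δ, hδ, hdis⟩ := hd.exists_thickenings hK hcl
  refine ⟨δ, hδ, fun p hp j hj hpj => ?_⟩
  exact Set.disjoint_left.1 hdis hp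
    (self_subset_thickening hδ _ (Set.mem_iUnion.2 ⟨⟨j, hj⟩, hpj⟩))

/-- points on side `s` of edge `i` close to its relative interior are connected to `x` -/
def LC (v : Fin n → Pt) (x : Pt) (s : ℝ) (i : Fin n) : Prop :=
  ∀ m ∈ openSegment ℝ (v i) (v (i + 1)), ∃ δ > 0, ∀ p ∈ ball m δ, 0 < s * ef v i p → Conn v x p

lemma LC_of_freq {v : Fin n → Pt} (h : IsSimplePolygon v) {x : Pt} {s : ℝ} {i : Fin n} {m : Pt}
    (hm : m ∈ openSegment ℝ (v i) (v (i + 1)))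
    (hf : ∀ δ > 0, ∃ p ∈ ball m δ, 0 < s * ef v i p ∧ Conn v x p) : LC v x s i := by
  intro m' hm'
  have hsub : segment ℝ m m' ⊆ openSegment ℝ (v i) (v (i + 1)) :=
    (convex_openSegment _ _).segment_subset hm hm'
  obtain ⟨δ, hδ, hav⟩ := near_avoid v (seg_compact m m') (fun j => j ≠ i) (fun j hj =>
    Set.disjoint_left.2 fun p hp => open_not_mem h hj (hsub hp))
  obtain ⟨p, hp, hps, hpc⟩ := hf δ hδ
  refine ⟨δ, hδ, fun q hq hqs => hpc.trans
    ⟨thickening δ (segment ℝ m m') ∩ {p | 0 < s * ef v i p}, ?_, ?_, ⟨?_, hps⟩, ⟨?_, hqs⟩⟩⟩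
  · exact (((convex_segment m m').thickening δ).inter (half_convex v i s)).isPreconnected
  · rintro r ⟨hr1, hr2⟩
    rw [Set.mem_compl_iff, not_mem_bd]
    intro j
    by_cases hj : j = i
    · subst hj
      intro hr
      rw [Set.mem_ofPred_eq, ef_seg hr] at hr2
      simp at hr2
    · exact hav r hr1 j hj
  · exact mem_thickening_iff.2 ⟨m, left_mem_segment _ _ _, hp⟩
  · exact mem_thickening_iff.2 ⟨m', right_mem_segment _ _ _, hq⟩

/-- the turn at `v (j+1)` -/
noncomputable def turn (v : Fin n → Pt) (j : Fin n) : ℝ :=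
  det2 (v (j + 1) - v j) (v (j + 1 + 1) - v (j + 1))

lemma ef_seg_next {v : Fin n → Pt} {j : Fin n} {p : Pt}
    (h : p ∈ segment ℝ (v (j + 1)) (v (j + 1 + 1))) : ∃ t ≥ 0, ef v j p = t * turn v j := by
  obtain ⟨a, b, -, hb, hab, rfl⟩ := h
  refine ⟨b, hb, ?_⟩
  rw [ef_comb v j hab, ef_right]
  simp only [ef, turn, det2, Prod.fst_sub, Prod.snd_sub]
  ring

lemma ef_seg_prev {v : Fin n → Pt} {j : Fin n} {p : Pt}
    (h : p ∈ segment ℝ (v j) (v (j + 1))) : ∃ t ≥ 0, ef v (j + 1) p = t * turn v j := by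
  obtain ⟨a, b, ha, hb, hab, rfl⟩ := h
  refine ⟨a, ha, ?_⟩
  rw [ef_comb v (j + 1) hab, ef_left]
  simp only [ef, turn, det2, Prod.fst_sub, Prod.snd_sub]
  ring

/-- Local structure at a vertex. -/
lemma vertex_local {v : Fin n → Pt} (h : IsSimplePolygon v) (j : Fin n) {s : ℝ} (hs : s ≠ 0) :
    ∃ ε > 0, ∃ S : Set Pt, IsPreconnected S ∧ S ⊆ (polyBoundary v)ᶜ ∧
      (∀ p ∈ ball (v (j + 1)) ε, 0 < s * ef v j p → 0 < s * ef v (j + 1) p → p ∈ S) ∧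
      (s * turn v j ≤ 0 → ∀ p ∈ ball (v (j + 1)) ε,
        (0 < s * ef v j p ∨ 0 < s * ef v (j + 1) p) → p ∈ S) := by
  obtain ⟨ε, hε, hav⟩ := near_avoid v (isCompact_singleton (x := v (j + 1)))
    (fun k => k ≠ j + 1 ∧ k ≠ j) (fun k hk => by
      rw [Set.disjoint_singleton_left]
      exact vert_not_mem h hk.1 hk.2)
  rw [thickening_singleton] at hav
  refine ⟨ε, hε, ?_⟩
  by_cases hT : s * turn v j ≤ 0
  · refine ⟨(ball (v (j + 1)) ε ∩ {p | 0 < s * ef v j p}) ∪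
      (ball (v (j + 1)) ε ∩ {p | 0 < s * ef v (j + 1) p}), ?_, ?_, ?_, ?_⟩
    · obtain ⟨u, hu1, hu2⟩ := not_fold_sep h j
      have hcont : Filter.Tendsto (fun t : ℝ => v (j + 1) + (t * s) • ((-u.2, u.1) : Pt))
          (nhdsWithin 0 (Set.Ioi 0)) (nhds (v (j + 1))) := by
        have : Continuous (fun t : ℝ => v (j + 1) + (t * s) • ((-u.2, u.1) : Pt)) := by fun_prop
        have h2 := this.tendsto 0
        simp only [zero_mul, zero_smul, add_zero] at h2
        exact h2.mono_left nhdsWithin_le_nhds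
      obtain ⟨t, ht1, ht2⟩ := ((hcont.eventually (ball_mem_nhds _ hε)).and
        self_mem_nhdsWithin).exists
      have hs2 : 0 < s * s := mul_self_pos.2 hs
      have e1 : s * ef v j (v (j + 1) + (t * s) • ((-u.2, u.1) : Pt)) =
          t * (s * s) * dot u (v (j + 1) - v j) := by
        simp [ef, det2, dot]
        ring
      have e2 : s * ef v (j + 1) (v (j + 1) + (t * s) • ((-u.2, u.1) : Pt)) =
          t * (s * s) * dot u (v (j + 1 + 1) - v (j + 1)) := by
        simp [ef, det2, dot]
        ring
      refine IsPreconnected.union (v (j + 1) + (t * s) • ((-u.2, u.1) : Pt)) ⟨ht1, ?_⟩ ⟨ht1, ?_⟩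
        ((convex_ball _ _).inter (half_convex v j s)).isPreconnected
        ((convex_ball _ _).inter (half_convex v (j + 1) s)).isPreconnected
      · rw [Set.mem_ofPred_eq, e1]; positivity
      · rw [Set.mem_ofPred_eq, e2]; positivity
    · have key : ∀ r ∈ ball (v (j + 1)) ε, (0 < s * ef v j r ∨ 0 < s * ef v (j + 1) r) →
          r ∉ polyBoundary v := by
        intro r hr hh
        rw [not_mem_bd]
        intro k
        by_cases hk1 : k = j + 1
        · subst hk1
          intro hk
          obtain ⟨t, ht, he⟩ := ef_seg_next hk
          rw [he, ef_seg hk] at hh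
          rcases hh with hh | hh
          · nlinarith [mul_nonneg ht (neg_nonneg.2 hT)]
          · simp at hh
        · by_cases hk2 : k = j
          · subst hk2
            intro hk
            obtain ⟨t, ht, he⟩ := ef_seg_prev hk
            rw [he, ef_seg hk] at hh
            rcases hh with hh | hh
            · simp at hh
            · nlinarith [mul_nonneg ht (neg_nonneg.2 hT)]
          · exact hav r hr k ⟨hk1, hk2⟩
      rintro r (⟨h1, h2⟩ | ⟨h1, h2⟩)
      · exact key r h1 (Or.inl h2)
      · exact key r h1 (Or.inr h2)
    · intro p hp h1 h2
      exact Or.inl ⟨hp, h1⟩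
    · rintro - p hp (h1 | h1)
      · exact Or.inl ⟨hp, h1⟩
      · exact Or.inr ⟨hp, h1⟩
  · refine ⟨(ball (v (j + 1)) ε ∩ {p | 0 < s * ef v j p}) ∩ {p | 0 < s * ef v (j + 1) p},
      (((convex_ball _ _).inter (half_convex v j s)).inter
        (half_convex v (j + 1) s)).isPreconnected, ?_, ?_, fun h' => absurd h' hT⟩
    · rintro r ⟨⟨h1, h2⟩, h3⟩
      rw [Set.mem_compl_iff, not_mem_bd]
      intro k hk
      by_cases hk1 : k = j + 1
      · subst hk1
        rw [Set.mem_ofPred_eq, ef_seg hk] at h3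
        simp at h3
      · by_cases hk2 : k = j
        · subst hk2
          rw [Set.mem_ofPred_eq, ef_seg hk] at h2
          simp at h2
        · exact hav r h1 k ⟨hk1, hk2⟩ hk
    · intro p hp h1 h2
      exact ⟨⟨hp, h1⟩, h2⟩

/-- points of an open segment near its endpoint -/
lemma near_end {a b : Pt} {ε : ℝ} (hε : 0 < ε) : ∃ m ∈ openSegment ℝ a b, m ∈ ball a ε := by
  have : Filter.Tendsto (fun t : ℝ => (1 - t) • a + t • b)
      (nhdsWithin 0 (Set.Ioi 0)) (nhds a) := by
    have h1 : Continuous (fun t : ℝ => (1 - t) • a + t • b) := by fun_prop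
    have h2 := h1.tendsto 0
    simp only [sub_zero, one_smul, zero_smul, add_zero] at h2
    exact h2.mono_left nhdsWithin_le_nhds
  have hlt : ∀ᶠ t : ℝ in nhdsWithin 0 (Set.Ioi 0), t < 1 :=
    nhdsWithin_le_nhds (gt_mem_nhds one_pos)
  obtain ⟨t, ⟨h1, h2⟩, h3⟩ := ((this.eventually (ball_mem_nhds _ hε)).and
    self_mem_nhdsWithin |>.and hlt).exists
  exact ⟨_, ⟨1 - t, t, by linarith, h2, by ring, rfl⟩, h1⟩

/-- there are points on side `s` close to any point of the edge -/
lemma side_near {v : Fin n → Pt} (h : IsSimplePolygon v) (i : Fin n) {s : ℝ} (hs : s ≠ 0) {m : Pt}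
    (hm : ef v i m = 0) {δ : ℝ} (hδ : 0 < δ) : ∃ p ∈ ball m δ, 0 < s * ef v i p := by
  set e := v (i + 1) - v i with he
  have hcont : Filter.Tendsto (fun t : ℝ => m + (t * s) • ((-e.2, e.1) : Pt))
      (nhdsWithin 0 (Set.Ioi 0)) (nhds m) := by
    have : Continuous (fun t : ℝ => m + (t * s) • ((-e.2, e.1) : Pt)) := by fun_prop
    have h2 := this.tendsto 0
    simp only [zero_mul, zero_smul, add_zero] at h2
    exact h2.mono_left nhdsWithin_le_nhds
  obtain ⟨t, ht1, ht2⟩ := ((hcont.eventually (ball_mem_nhds _ hδ)).and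
    self_mem_nhdsWithin).exists
  refine ⟨_, ht1, ?_⟩
  have hs2 : 0 < s * s := mul_self_pos.2 hs
  have hd := dot_self_pos (edge_ne_zero h i)
  have : s * ef v i (m + (t * s) • ((-e.2, e.1) : Pt)) = s * ef v i m + t * (s * s) * dot e e := by
    simp only [ef, det2, dot, ← he, Prod.fst_sub, Prod.snd_sub, Prod.fst_add, Prod.snd_add,
      Prod.smul_fst, Prod.smul_snd, smul_eq_mul]
    ring
  rw [this, hm]
  have : 0 < t * (s * s) * dot e e := by positivity
  linarith

lemma LC_next {v : Fin n → Pt} (h : IsSimplePolygon v) {x : Pt} {s : ℝ} (hs : s ≠ 0) {j : Fin n}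
    (hL : LC v x s j) : LC v x s (j + 1) := by
  obtain ⟨ε, hε, S, hS1, hS2, hS3, hS4⟩ := vertex_local h j hs
  obtain ⟨m, hm, hmε⟩ := near_end (a := v (j + 1)) (b := v j) hε
  obtain ⟨m', hm', hmε'⟩ := near_end (a := v (j + 1)) (b := v (j + 1 + 1)) hε
  rw [openSegment_symm] at hm
  have hm0 : ef v j m = 0 := ef_seg (openSegment_subset_segment _ _ _ hm)
  have hm0' : ef v (j + 1) m' = 0 := ef_seg (openSegment_subset_segment _ _ _ hm')
  -- near `m`, side points of edge `j` are in `S`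
  have c1 : ∃ δ > 0, ∀ p ∈ ball m δ, 0 < s * ef v j p → p ∈ S := by
    by_cases hT : s * turn v j ≤ 0
    · obtain ⟨δ, hδ, hb⟩ := Metric.isOpen_iff.1 isOpen_ball m hmε
      exact ⟨δ, hδ, fun p hp hps => hS4 hT p (hb hp) (Or.inl hps)⟩
    · push Not at hT
      have hpos : 0 < s * ef v (j + 1) m := by
        obtain ⟨a, b, ha, hb, hab, rfl⟩ := hm
        rw [ef_comb v (j + 1) hab, ef_left]
        have : ef v (j + 1) (v j) = turn v j := by
          simp only [ef, turn, det2, Prod.fst_sub, Prod.snd_sub]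
          ring
        rw [this]
        nlinarith [mul_pos ha hT]
      have ho : IsOpen (ball (v (j + 1)) ε ∩ {p | 0 < s * ef v (j + 1) p}) :=
        isOpen_ball.inter (isOpen_lt continuous_const (continuous_const.mul (ef_continuous v _)))
      obtain ⟨δ, hδ, hb⟩ := Metric.isOpen_iff.1 ho m ⟨hmε, hpos⟩
      exact ⟨δ, hδ, fun p hp hps => hS3 p (hb hp).1 hps (hb hp).2⟩
  have c2 : ∃ δ > 0, ∀ p ∈ ball m' δ, 0 < s * ef v (j + 1) p → p ∈ S := by
    by_cases hT : s * turn v j ≤ 0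
    · obtain ⟨δ, hδ, hb⟩ := Metric.isOpen_iff.1 isOpen_ball m' hmε'
      exact ⟨δ, hδ, fun p hp hps => hS4 hT p (hb hp) (Or.inr hps)⟩
    · push Not at hT
      have hpos : 0 < s * ef v j m' := by
        obtain ⟨a, b, ha, hb, hab, rfl⟩ := hm'
        rw [ef_comb v j hab, ef_right]
        have : ef v j (v (j + 1 + 1)) = turn v j := by
          simp only [ef, turn, det2, Prod.fst_sub, Prod.snd_sub]
          ring
        rw [this]
        nlinarith [mul_pos hb hT]
      have ho : IsOpen (ball (v (j + 1)) ε ∩ {p | 0 < s * ef v j p}) :=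
        isOpen_ball.inter (isOpen_lt continuous_const (continuous_const.mul (ef_continuous v _)))
      obtain ⟨δ, hδ, hb⟩ := Metric.isOpen_iff.1 ho m' ⟨hmε', hpos⟩
      exact ⟨δ, hδ, fun p hp hps => hS3 p (hb hp).1 (hb hp).2 hps⟩
  obtain ⟨δ1, hδ1, d1⟩ := c1
  obtain ⟨δ2, hδ2, d2⟩ := c2
  obtain ⟨δ3, hδ3, d3⟩ := hL m hm
  obtain ⟨p, hp, hps⟩ := side_near h j hs hm0 (lt_min hδ1 hδ3)
  have hpS := d1 p (ball_subset_ball (min_le_left _ _) hp) hps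
  have hpC := d3 p (ball_subset_ball (min_le_right _ _) hp) hps
  refine LC_of_freq h hm' fun δ hδ => ?_
  obtain ⟨q, hq, hqs⟩ := side_near h (j + 1) hs hm0' (lt_min hδ hδ2)
  exact ⟨q, ball_subset_ball (min_le_left _ _) hq, hqs,
    hpC.trans ⟨S, hS1, hS2, hpS, d2 q (ball_subset_ball (min_le_right _ _) hq) hqs⟩⟩

lemma ofNat_succ (k : ℕ) : Fin.ofNat n (k + 1) = Fin.ofNat n k + 1 := by
  apply Fin.ext
  simp [Fin.val_add]

lemma LC_all {v : Fin n → Pt} (h : IsSimplePolygon v) {x : Pt} {s : ℝ} (hs : s ≠ 0) {j : Fin n}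
    (hL : LC v x s j) (i : Fin n) : LC v x s i := by
  have key : ∀ k : ℕ, LC v x s (j + Fin.ofNat n k) := by
    intro k
    induction k with
    | zero =>
      have : Fin.ofNat n 0 = 0 := by
        apply Fin.ext
        simp
      rw [this, add_zero]
      exact hL
    | succ k ih =>
      have := LC_next h hs ih
      rw [ofNat_succ, ← add_assoc]
      exact this
  have h1 := key (i - j).val
  have : Fin.ofNat n (i - j).val = i - j := by
    apply Fin.ext
    rw [Fin.val_ofNat]
    exact Nat.mod_eq_of_lt (i - j).isLt
  rw [this, add_sub_cancel] at h1
  exact h1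

end KW
end

section
namespace KW
open Metric

variable {n : ℕ} [NeZero n]

lemma generic {ι : Type*} [Finite ι] {U : Set Pt} (hU : IsOpen U) (hne : U.Nonempty)
    (a : ι → Pt) (c : ι → ℝ) (ha : ∀ i, a i ≠ 0) : ∃ p ∈ U, ∀ i, dot (a i) p ≠ c i := by
  have hd : Dense (⋂ i, {p : Pt | dot (a i) p ≠ c i}) := by
    have hcont : ∀ i, Continuous fun p : Pt => dot (a i) p := by
      intro i
      unfold dot
      fun_prop
    apply dense_iInter_of_isOpen
    · intro i
      exact isOpen_ne_fun (hcont i) continuous_const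
    · intro i
      rw [Metric.dense_iff]
      intro x r hr
      by_cases hx : dot (a i) x = c i
      · have hcont : Filter.Tendsto (fun t : ℝ => x + t • a i)
            (nhdsWithin 0 (Set.Ioi 0)) (nhds x) := by
          have : Continuous (fun t : ℝ => x + t • a i) := by fun_prop
          have h2 := this.tendsto 0
          simp only [zero_smul, add_zero] at h2
          exact h2.mono_left nhdsWithin_le_nhds
        obtain ⟨t, ht1, ht2⟩ := ((hcont.eventually (ball_mem_nhds _ hr)).and
          self_mem_nhdsWithin).exists
        refine ⟨_, ht1, ?_⟩
        have : dot (a i) (x + t • a i) = dot (a i) x + t * dot (a i) (a i) := by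
          simp [dot]
          ring
        rw [Set.mem_ofPred_eq, this, hx]
        have : 0 < t * dot (a i) (a i) := mul_pos ht2 (dot_self_pos (ha i))
        linarith
      · exact ⟨x, mem_ball_self hr, hx⟩
  obtain ⟨p, hp, hpU⟩ := hd.inter_open_nonempty U hU hne
  exact ⟨p, hp, fun i => Set.mem_iInter.1 hpU i⟩

/-- generic points avoid finitely many lines `{p | det2 (a i) (p - b i) = 0}` -/
lemma generic_det {ι : Type*} [Finite ι] {U : Set Pt} (hU : IsOpen U) (hne : U.Nonempty)
    (a b : ι → Pt) (ha : ∀ i, a i ≠ 0) : ∃ p ∈ U, ∀ i, det2 (a i) (p - b i) ≠ 0 := by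
  obtain ⟨p, hp, h⟩ := generic hU hne (fun i => ((-(a i).2, (a i).1) : Pt))
    (fun i => det2 (a i) (b i)) (fun i h0 => ha i (by
      simp only [Prod.mk_eq_zero, neg_eq_zero] at h0
      exact Prod.ext h0.2 h0.1))
  refine ⟨p, hp, fun i h0 => h i ?_⟩
  simp only [det2, dot, Prod.fst_sub, Prod.snd_sub] at h0 ⊢
  linarith

lemma first_hit {F : Set Pt} (hF : IsClosed F) {x m : Pt} (hx : x ∉ F) (hm : m ∈ F) :
    ∃ b ∈ F, ∃ t : ℝ, 0 < t ∧ t ≤ 1 ∧ b = (1 - t) • x + t • m ∧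
      ∀ r : ℝ, 0 ≤ r → r < 1 → (1 - r) • x + r • b ∉ F := by
  have hcont : Continuous (fun t : ℝ => (1 - t) • x + t • m) := by fun_prop
  have hcomp : IsCompact (Set.Icc (0 : ℝ) 1 ∩ (fun t : ℝ => (1 - t) • x + t • m) ⁻¹' F) :=
    isCompact_Icc.inter_right (hF.preimage hcont)
  obtain ⟨t, ⟨⟨ht0, ht1⟩, htF⟩, hleast⟩ := hcomp.exists_isLeast
    ⟨1, ⟨⟨zero_le_one, le_rfl⟩, by simpa using hm⟩⟩
  have htpos : 0 < t := by
    rcases ht0.lt_or_eq with h | h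
    · exact h
    · subst h
      exact absurd (by simpa using htF) hx
  refine ⟨_, htF, t, htpos, ht1, rfl, fun r hr0 hr1 hr => ?_⟩
  have hrt : r * t < t := by nlinarith
  have hmem : r * t ∈ Set.Icc (0 : ℝ) 1 ∩ (fun t : ℝ => (1 - t) • x + t • m) ⁻¹' F := by
    refine ⟨⟨by positivity, by linarith⟩, ?_⟩
    have : (1 - r * t) • x + (r * t) • m = (1 - r) • x + r • ((1 - t) • x + t • m) := by module
    rw [Set.mem_preimage, this]
    exact hr
  linarith [hleast hmem]

lemma det_dep {e A B : Pt} (he : e ≠ 0) (h1 : det2 e A = 0) (h2 : det2 e B = 0) :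
    det2 A B = 0 := by
  by_contra hc
  apply he
  have a1 : e.1 * det2 A B = A.1 * det2 e B - B.1 * det2 e A := by
    simp only [det2]; ring
  have a2 : e.2 * det2 A B = A.2 * det2 e B - B.2 * det2 e A := by
    simp only [det2]; ring
  rw [h1, h2] at a1 a2
  simp only [mul_zero, sub_zero, mul_eq_zero, hc, or_false] at a1 a2
  exact Prod.ext a1 a2

lemma midpt_mem (a b : Pt) : midpoint ℝ a b ∈ openSegment ℝ a b :=
  ⟨1 / 2, 1 / 2, by norm_num, by norm_num, by norm_num, by
    rw [midpoint_eq_smul_add]; simp⟩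

/-- Every point off the boundary is connected to one of the sides. -/
lemma exists_side {v : Fin n → Pt} (h : IsSimplePolygon v) {x : Pt} (hx : x ∉ polyBoundary v) :
    ∃ s : ℝ, (s = 1 ∨ s = -1) ∧ ∀ i, LC v x s i := by
  set m := midpoint ℝ (v 0) (v (0 + 1)) with hm
  have hmo : m ∈ openSegment ℝ (v 0) (v (0 + 1)) := midpt_mem _ _
  have hmb : m ∈ polyBoundary v :=
    Set.mem_iUnion.2 ⟨0, openSegment_subset_segment _ _ _ hmo⟩
  obtain ⟨ε, hε, hball⟩ := Metric.isOpen_iff.1 (bd_closed v).isOpen_compl x hx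
  have hne : ∀ j, v j - m ≠ 0 := by
    intro j h0
    rw [sub_eq_zero] at h0
    by_cases hj : j = 0
    · subst hj
      rw [← h0, left_mem_openSegment_iff] at hmo
      exact edge_ne h 0 hmo
    · apply open_not_mem h hj hmo
      rw [← h0]
      exact left_mem_segment _ _ _
  obtain ⟨y, hy, hgen⟩ := generic_det isOpen_ball ⟨x, mem_ball_self hε⟩ (fun j => v j - m)
    (fun _ => m) hne
  have hxy : Conn v x y :=
    ⟨ball x ε, (convex_ball _ _).isPreconnected, hball, mem_ball_self hε, hy⟩
  obtain ⟨b, hbF, t, ht0, ht1, hbt, hfree⟩ := first_hit (bd_closed v) (hball hy) hmb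
  obtain ⟨k, hk⟩ := Set.mem_iUnion.1 hbF
  have hnv : ∀ j, v j ≠ b := by
    intro j hj
    apply hgen j
    rw [hj, hbt]
    simp only [det2, Prod.fst_sub, Prod.snd_sub, Prod.fst_add, Prod.snd_add,
      Prod.smul_fst, Prod.smul_snd, smul_eq_mul]
    ring
  have hbo : b ∈ openSegment ℝ (v k) (v (k + 1)) :=
    mem_openSegment_of_ne_left_right (hnv k) (hnv (k + 1)) hk
  have hef : ef v k y ≠ 0 := by
    intro h0
    have h1 : ef v k m = 0 := by
      have := ef_seg hk
      rw [hbt, ef_comb v k (by ring), h0] at this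
      simp only [mul_zero, zero_add, mul_eq_zero, ht0.ne', false_or] at this
      exact this
    have h2 := det_dep (edge_ne_zero h k) h0 h1
    apply hgen k
    simp only [det2, Prod.fst_sub, Prod.snd_sub] at h2 ⊢
    linarith
  obtain ⟨s, hs, hspos⟩ : ∃ s : ℝ, (s = 1 ∨ s = -1) ∧ 0 < s * ef v k y := by
    rcases lt_or_gt_of_ne hef with h1 | h1
    · exact ⟨-1, Or.inr rfl, by linarith⟩
    · exact ⟨1, Or.inl rfl, by linarith⟩
  have hs0 : s ≠ 0 := by
    rcases hs with rfl | rfl <;> norm_num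
  refine ⟨s, hs, fun i => LC_all h hs0 (LC_of_freq h hbo fun δ hδ => ?_) i⟩
  obtain ⟨q, hq, hqb⟩ := near_end (a := b) (b := y) hδ
  refine ⟨q, hqb, ?_, ?_⟩
  · obtain ⟨a, c, ha, hc, hac, rfl⟩ := hq
    rw [ef_comb v k hac, ef_seg hk]
    nlinarith [mul_pos hc hspos]
  · refine hxy.trans ⟨segment ℝ y q, (convex_segment _ _).isPreconnected, ?_,
      left_mem_segment _ _ _, right_mem_segment _ _ _⟩
    rintro z ⟨a, c, ha, hc, hac, rfl⟩
    obtain ⟨a', c', ha', hc', hac', rfl⟩ := hq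
    have : a • y + c • (a' • b + c' • y) = (1 - c * a') • y + (c * a') • b := by
      have e1 : a = 1 - c := by linarith
      have e2 : c' = 1 - a' := by linarith
      subst e1 e2
      module
    rw [this]
    exact hfree _ (by positivity) (by nlinarith)

/-- Jump of the winding number across an edge. -/
lemma jump {v : Fin n → Pt} (h : IsSimplePolygon v) {i : Fin n} {m : Pt}
    (hm : m ∈ openSegment ℝ (v i) (v (i + 1))) :
    ∃ δ > 0, ∀ p ∈ ball m δ, ∀ q ∈ ball m δ, 0 < ef v i p → ef v i q < 0 →
      p ∉ polyBoundary v → q ∉ polyBoundary v → W v p = W v q + 2 * Real.pi := by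
  set R : Pt → ℝ := fun p => ∑ j ∈ Finset.univ.erase i, ang (v j - p) (v (j + 1) - p) with hR
  have hRc : ContinuousAt R m := by
    refine tendsto_finsetSum _ fun j hj => ang_continuousAt (open_not_mem h ?_ hm)
    exact Finset.ne_of_mem_erase hj
  have hW : ∀ p, W v p = ang (v i - p) (v (i + 1) - p) + R p := fun p =>
    (Finset.add_sum_erase _ _ (Finset.mem_univ i)).symm
  have hpi := Real.pi_pos
  obtain ⟨δ1, hδ1, hR1⟩ := Metric.continuousAt_iff.1 hRc (Real.pi / 4) (by positivity)
  have hdot : dot (v i - m) (v (i + 1) - m) < 0 := by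
    obtain ⟨a, b, ha, hb, hab, rfl⟩ := hm
    have e : dot (v i - (a • v i + b • v (i + 1))) (v (i + 1) - (a • v i + b • v (i + 1)))
        = -(a * b) * dot (v (i + 1) - v i) (v (i + 1) - v i) := by
      have e1 : a = 1 - b := by linarith
      subst e1
      simp only [dot, Prod.fst_sub, Prod.snd_sub, Prod.fst_add, Prod.snd_add,
        Prod.smul_fst, Prod.smul_snd, smul_eq_mul]
      ring
    rw [e]
    have := mul_pos (mul_pos ha hb) (dot_self_pos (edge_ne_zero h i))
    linarith
  have ho : IsOpen {p : Pt | dot (v i - p) (v (i + 1) - p) < 0} := by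
    refine isOpen_lt ?_ continuous_const
    unfold dot
    fun_prop
  obtain ⟨δ2, hδ2, hb2⟩ := Metric.isOpen_iff.1 ho m hdot
  have habs : ∀ p ∈ ball m δ2, Real.pi / 2 ≤ |ang (v i - p) (v (i + 1) - p)| := by
    intro p hp
    have hlt : dot (v i - p) (v (i + 1) - p) < 0 := hb2 hp
    by_contra hc
    push Not at hc
    rcases Complex.abs_arg_lt_pi_div_two_iff.1 hc with h1 | h1
    · rw [re_div] at h1
      have h3 : v i - p ≠ 0 := by
        intro h0
        rw [h0] at hlt
        simp [dot] at hlt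
      have := div_neg_of_neg_of_pos hlt (dot_self_pos h3)
      linarith
    · rw [div_eq_zero_iff, cp_eq_zero, cp_eq_zero] at h1
      rcases h1 with h1 | h1 <;> rw [h1] at hlt <;> simp [dot] at hlt
  have hdet : ∀ p, det2 (v i - p) (v (i + 1) - p) = ef v i p := by
    intro p
    simp only [ef, det2, Prod.fst_sub, Prod.snd_sub]
    ring
  refine ⟨min δ1 δ2, lt_min hδ1 hδ2, fun p hp q hq hpe hqe hpb hqb => ?_⟩
  have p1 := abs_lt.1 (hR1 (ball_subset_ball (min_le_left _ _) hp))
  have q1 := abs_lt.1 (hR1 (ball_subset_ball (min_le_left _ _) hq))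
  have p2 := habs p (ball_subset_ball (min_le_right _ _) hp)
  have q2 := habs q (ball_subset_ball (min_le_right _ _) hq)
  have p3 := ang_pos (by rw [hdet p]; exact hpe : 0 < det2 (v i - p) (v (i + 1) - p))
  have q3 := ang_neg (by rw [hdet q]; exact hqe : det2 (v i - q) (v (i + 1) - q) < 0)
  have q4 := ang_gt (v i - q) (v (i + 1) - q)
  rw [abs_of_pos p3.1] at p2
  rw [abs_of_neg q3] at q2
  obtain ⟨k, hk⟩ := W_int hpb
  obtain ⟨l, hl⟩ := W_int hqb
  have := hW p
  have := hW q
  have hz : k - l - 1 = 0 := by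
    apply int_zero (x := W v p - W v q - 2 * Real.pi)
    · push_cast
      rw [hk, hl]
      ring
    · linarith
    · linarith
  have : k = l + 1 := by omega
  rw [hk, hl, this]
  push_cast
  ring

lemma far_half {v : Fin n → Pt} : ∃ M : ℝ, ∀ y : Pt, M < ‖y‖ → ∀ i, 0 < dot (-y) (v i - y) := by
  refine ⟨2 * ∑ i, ‖v i‖, fun y hy i => ?_⟩
  have hi : ‖v i‖ ≤ ∑ i, ‖v i‖ :=
    Finset.single_le_sum (f := fun i => ‖v i‖) (fun j _ => norm_nonneg _) (Finset.mem_univ i)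
  have hb : 2 * ‖v i‖ < ‖y‖ := by linarith
  have h1 : |(v i).1| ≤ ‖v i‖ := by rw [← Real.norm_eq_abs]; exact norm_fst_le _
  have h2 : |(v i).2| ≤ ‖v i‖ := by rw [← Real.norm_eq_abs]; exact norm_snd_le _
  have h3 : |y.1| ≤ ‖y‖ := by rw [← Real.norm_eq_abs]; exact norm_fst_le _
  have h4 : |y.2| ≤ ‖y‖ := by rw [← Real.norm_eq_abs]; exact norm_snd_le _
  have h5 : ‖y‖ * ‖y‖ ≤ y.1 * y.1 + y.2 * y.2 := by
    have : ‖y‖ = max |y.1| |y.2| := Prod.norm_def _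
    rcases max_choice |y.1| |y.2| with h | h
    · rw [this, h, abs_mul_abs_self]
      nlinarith [mul_self_nonneg y.2]
    · rw [this, h, abs_mul_abs_self]
      nlinarith [mul_self_nonneg y.1]
  have h6 : y.1 * (v i).1 ≤ ‖y‖ * ‖v i‖ := by
    calc y.1 * (v i).1 ≤ |y.1 * (v i).1| := le_abs_self _
      _ = |y.1| * |(v i).1| := abs_mul _ _
      _ ≤ _ := by gcongr
  have h7 : y.2 * (v i).2 ≤ ‖y‖ * ‖v i‖ := by
    calc y.2 * (v i).2 ≤ |y.2 * (v i).2| := le_abs_self _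
      _ = |y.2| * |(v i).2| := abs_mul _ _
      _ ≤ _ := by gcongr
  have h8 : 0 < ‖y‖ := lt_of_le_of_lt (by positivity) hb
  simp only [dot, Prod.fst_sub, Prod.snd_sub, Prod.fst_neg, Prod.snd_neg]
  nlinarith [mul_lt_mul_of_pos_left hb h8]

end KW
end

section
namespace KW
open Metric

variable {n : ℕ} [NeZero n]

open Classical in
/-- signed crossing of the ray in direction `d` by the edge from `a` to `b` -/
noncomputable def kc (d a b : Pt) : ℤ :=
  if det2 d a < 0 ∧ 0 < det2 d b ∧ 0 < det2 a b then 1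
  else if det2 d b < 0 ∧ 0 < det2 d a ∧ det2 a b < 0 then -1 else 0

lemma int_eq {k l : ℤ} {x : ℝ} (h : x = 2 * Real.pi * k) (h1 : 2 * Real.pi * (l - 1) < x)
    (h2 : x < 2 * Real.pi * (l + 1)) : k = l := by
  have : k - l = 0 := int_zero (x := x - 2 * Real.pi * l) (by rw [h]; push_cast; ring)
    (by linarith) (by linarith)
  omega

lemma cross {d a b : Pt} (hd : d ≠ 0) (ha : det2 d a ≠ 0) (hb : det2 d b ≠ 0)
    (h0 : det2 a b = 0 → 0 < det2 d a * det2 d b) :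
    ang a b = ang (-d) b - ang (-d) a + 2 * Real.pi * kc d a b := by
  have ha0 : a ≠ 0 := by
    rintro rfl
    simp [det2] at ha
  have hb0 : b ≠ 0 := by
    rintro rfl
    simp [det2] at hb
  obtain ⟨k, hk⟩ := ang_add (neg_ne_zero.2 hd) ha0 hb0
  have hk' : ang a b - (ang (-d) b - ang (-d) a) = 2 * Real.pi * ((-k : ℤ) : ℝ) := by
    push_cast
    linarith
  have hneg : ∀ z, det2 (-d) z = - det2 d z := by
    intro z
    simp [det2]
    ring
  have hpi := Real.pi_pos
  have c1 := ang_gt a b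
  have c2 := ang_le a b
  have c3 := ang_gt (-d) a
  have c4 := ang_gt (-d) b
  have c5 := ang_le (-d) a
  have c6 := ang_le (-d) b
  have npos : ∀ z, det2 d z < 0 → 0 < ang (-d) z ∧ ang (-d) z < Real.pi := fun z hz =>
    ang_pos (by rw [hneg]; linarith)
  have nneg : ∀ z, 0 < det2 d z → ang (-d) z < 0 := fun z hz =>
    ang_neg (by rw [hneg]; linarith)
  suffices hs : -k = kc d a b by
    rw [← hs]
    linarith
  refine int_eq hk' ?_ ?_ <;> unfold kc <;> rcases lt_or_gt_of_ne ha with h1 | h1 <;>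
    rcases lt_or_gt_of_ne hb with h2 | h2
  all_goals first
    | have e1 := npos a h1
    | have e1 := nneg a h1
  all_goals first
    | have e2 := npos b h2
    | have e2 := nneg b h2
  all_goals first
    | (have e3 : ¬ (0 < det2 d a) := by linarith
       have e4 : ¬ (0 < det2 d b) := by linarith
       simp only [e3, e4, false_and, and_false, if_false]
       push_cast
       linarith)
    | (have e3 : ¬ (det2 d a < 0) := by linarith
       have e4 : ¬ (det2 d b < 0) := by linarith
       simp only [e3, e4, false_and, and_false, if_false]
       push_cast
       linarith)
    | skip
  all_goals
    rcases lt_trichotomy (det2 a b) 0 with h3 | h3 | h3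
    · have e5 := ang_neg h3
      have e6 : ¬ (0 < det2 a b) := by linarith
      try have e7 : ¬ (det2 d b < 0) := by linarith
      simp only [*, false_and, and_false, if_false, and_self, if_true]
      push_cast
      linarith
    · have := h0 h3
      nlinarith
    · have e5 := ang_pos h3
      have e6 : ¬ (det2 a b < 0) := by linarith
      try have e7 : ¬ (det2 d a < 0) := by linarith
      simp only [*, false_and, and_false, if_false, and_self, if_true]
      push_cast
      linarith

lemma W_cross {v : Fin n → Pt} {p d : Pt} (hp : p ∉ polyBoundary v) (hd : d ≠ 0)
    (hv : ∀ i, det2 d (v i - p) ≠ 0) :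
    W v p = 2 * Real.pi * (∑ i, kc d (v i - p) (v (i + 1) - p) : ℤ) := by
  refine W_tele (d := -d) _ fun i => cross hd (hv i) (hv (i + 1)) fun h0 => ?_
  have hs := slit_of_not_mem (not_mem_bd.1 hp i)
  rw [Complex.mem_slitPlane_iff, im_div, re_div, h0] at hs
  simp only [zero_div, ne_eq, not_true, or_false] at hs
  have haa := dot_self_pos (vert_ne hp i)
  have hab : 0 < dot (v i - p) (v (i + 1) - p) := by
    by_contra hc
    push Not at hc
    have := div_nonpos_of_nonpos_of_nonneg hc haa.le
    linarith
  have key : dot (v i - p) (v i - p) * det2 d (v (i + 1) - p) =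
      dot (v i - p) (v (i + 1) - p) * det2 d (v i - p) +
        det2 (v i - p) (v (i + 1) - p) * dot d (v i - p) := by
    simp only [dot, det2]
    ring
  rw [h0, zero_mul, add_zero] at key
  have h1 : 0 < det2 d (v i - p) * det2 d (v i - p) := mul_self_pos.2 (hv i)
  have h2 : dot (v i - p) (v i - p) * (det2 d (v i - p) * det2 d (v (i + 1) - p)) =
      dot (v i - p) (v (i + 1) - p) * (det2 d (v i - p) * det2 d (v i - p)) := by
    linear_combination det2 d (v i - p) * key
  have h3 := mul_pos hab h1
  rw [← h2] at h3
  exact (mul_pos_iff_of_pos_left haa).1 h3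

end KW
end

section
namespace KW
open MeasureTheory

variable {n : ℕ} [NeZero n]

/-- height of the line through edge `i` above abscissa `a` -/
noncomputable def gh (v : Fin n → Pt) (i : Fin n) (a : ℝ) : ℝ :=
  (v i).2 + ((v (i + 1)).2 - (v i).2) / ((v (i + 1)).1 - (v i).1) * (a - (v i).1)

/-- signed indicator of the abscissas below edge `i` -/
noncomputable def sg (v : Fin n → Pt) (i : Fin n) (a : ℝ) : ℝ :=
  (Set.Ioc (v (i + 1)).1 (v i).1).indicator (fun _ => (1 : ℝ)) a -
    (Set.Ioc (v i).1 (v (i + 1)).1).indicator (fun _ => (1 : ℝ)) a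

lemma gh_bound (v : Fin n → Pt) (i : Fin n) {a C : ℝ} (h1 : |(v i).2| ≤ C)
    (h2 : |(v (i + 1)).2| ≤ C) (hs : sg v i a ≠ 0) : -C ≤ gh v i a ∧ gh v i a ≤ C := by
  have hb : ∃ t : ℝ, 0 ≤ t ∧ t ≤ 1 ∧ gh v i a = (1 - t) * (v i).2 + t * (v (i + 1)).2 := by
    refine ⟨(a - (v i).1) / ((v (i + 1)).1 - (v i).1), ?_⟩
    rcases lt_trichotomy (v i).1 (v (i + 1)).1 with hx | hx | hx
    · have ha : a ∈ Set.Ioc (v i).1 (v (i + 1)).1 := by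
        by_contra hc
        apply hs
        unfold sg
        rw [Set.indicator_of_notMem hc, Set.indicator_of_notMem]
        · simp
        · rintro ⟨q1, q2⟩
          linarith
      have hd : 0 < (v (i + 1)).1 - (v i).1 := by linarith
      refine ⟨div_nonneg (by linarith [ha.1]) hd.le, (div_le_one hd).2 (by linarith [ha.2]), ?_⟩
      unfold gh
      field_simp
      ring
    · exfalso
      apply hs
      simp [sg, hx]
    · have ha : a ∈ Set.Ioc (v (i + 1)).1 (v i).1 := by
        by_contra hc
        apply hs
        unfold sg
        rw [Set.indicator_of_notMem hc, Set.indicator_of_notMem]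
        · simp
        · rintro ⟨q1, q2⟩
          linarith
      have hd : (v (i + 1)).1 - (v i).1 < 0 := by linarith
      refine ⟨div_nonneg_of_nonpos (by linarith [ha.2]) hd.le,
        (div_le_one_of_neg hd).2 (by linarith [ha.1]), ?_⟩
      have := hd.ne
      unfold gh
      field_simp
      ring
  obtain ⟨t, t0, t1, ht⟩ := hb
  rw [ht]
  have := abs_le.1 h1
  have := abs_le.1 h2
  constructor <;> nlinarith

lemma det_gh (v : Fin n → Pt) (i : Fin n) {a y : ℝ} (hx : (v i).1 ≠ (v (i + 1)).1) :
    det2 (v i - (a, y)) (v (i + 1) - (a, y)) =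
      ((v i).1 - (v (i + 1)).1) * (gh v i a - y) := by
  have : (v (i + 1)).1 - (v i).1 ≠ 0 := sub_ne_zero.2 hx.symm
  simp only [gh, det2, Prod.fst_sub, Prod.snd_sub]
  field_simp
  ring

lemma kc_sg (v : Fin n → Pt) (i : Fin n) {a y : ℝ} (h1 : a ≠ (v i).1) (h2 : a ≠ (v (i + 1)).1)
    (_hy : y ≠ gh v i a) :
    (kc (0, 1) (v i - (a, y)) (v (i + 1) - (a, y)) : ℝ) =
      sg v i a * (Set.Iio (gh v i a)).indicator (fun _ => (1 : ℝ)) y := by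
  have d1 : det2 (0, 1) (v i - (a, y)) = a - (v i).1 := by simp [det2]
  have d2 : det2 (0, 1) (v (i + 1) - (a, y)) = a - (v (i + 1)).1 := by simp [det2]
  unfold kc
  rw [d1, d2]
  by_cases hx : (v i).1 = (v (i + 1)).1
  · have : sg v i a = 0 := by simp [sg, hx]
    rw [this, ← hx]
    rw [if_neg, if_neg]
    · simp
    · rintro ⟨q1, q2, -⟩
      linarith
    · rintro ⟨q1, q2, -⟩
      linarith
  rw [det_gh v i hx]
  unfold sg
  simp only [Set.indicator_apply, Set.mem_Ioc, Set.mem_Iio]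
  rcases lt_or_gt_of_ne h1 with e1 | e1 <;> rcases lt_or_gt_of_ne h2 with e2 | e2
  · have : ¬ (v (i + 1)).1 < a := by linarith
    have : ¬ (v i).1 < a := by linarith
    have : ¬ (0 < a - (v (i + 1)).1) := by linarith
    have : ¬ (0 < a - (v i).1) := by linarith
    simp [*]
  · have hd : 0 < (v i).1 - (v (i + 1)).1 := by linarith
    have q1 : ¬ (v i).1 < a := by linarith
    have q2 : a - (v i).1 < 0 := by linarith
    have q3 : 0 < a - (v (i + 1)).1 := by linarith
    have q4 : ¬ (0 < a - (v i).1) := by linarith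
    simp only [q1, q2, q3, q4, mul_pos_iff_of_pos_left hd, sub_pos, e1.le, e2, true_and, false_and,
      and_false, and_self, if_true, if_false]
    by_cases hh : y < gh v i a <;> simp [hh, e2]
  · have hd : (v i).1 - (v (i + 1)).1 < 0 := by linarith
    have q1 : ¬ (v (i + 1)).1 < a := by linarith
    have q2 : a - (v (i + 1)).1 < 0 := by linarith
    have q3 : 0 < a - (v i).1 := by linarith
    have q4 : ¬ (a - (v i).1 < 0) := by linarith
    have q5 : ((v i).1 - (v (i + 1)).1) * (gh v i a - y) < 0 ↔ y < gh v i a := by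
      constructor
      · intro hh
        by_contra hc
        push Not at hc
        nlinarith
      · intro hh
        exact mul_neg_of_neg_of_pos hd (by linarith)
    simp only [q1, q2, q3, q4, q5, e2.le, true_and, false_and,
      and_false, and_self, if_true, if_false]
    by_cases hh : y < gh v i a
    · have e1' : (v i).1 < a := e1
      simp [hh, e1']
    · simp [hh]
  · have : ¬ (a ≤ (v (i + 1)).1) := by linarith
    have : ¬ (a ≤ (v i).1) := by linarith
    have : ¬ (a - (v (i + 1)).1 < 0) := by linarith
    have : ¬ (a - (v i).1 < 0) := by linarith
    simp [*]

lemma off_bd (v : Fin n → Pt) {a y : ℝ} (ha : ∀ i, a ≠ (v i).1) (hy : ∀ i, y ≠ gh v i a) :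
    ((a, y) : Pt) ∉ polyBoundary v := by
  rw [not_mem_bd]
  intro i hi
  have h0 := ef_seg hi
  have hx : (v i).1 ≠ (v (i + 1)).1 := by
    intro hx
    obtain ⟨s, t, hs, ht, hst, he⟩ := hi
    have := congrArg Prod.fst he
    simp only [Prod.fst_add, Prod.smul_fst, smul_eq_mul, ← hx] at this
    apply ha i
    rw [← this]
    linear_combination (v i).1 * hst
  have h1 : det2 (v i - (a, y)) (v (i + 1) - (a, y)) = ef v i (a, y) := by
    simp only [ef, det2, Prod.fst_sub, Prod.snd_sub]
    ring
  rw [det_gh v i hx, h0, mul_eq_zero] at h1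
  rcases h1 with h1 | h1
  · exact hx (sub_eq_zero.1 h1)
  · exact hy i (sub_eq_zero.1 h1).symm

lemma integral_ind {g C : ℝ} (h1 : -C ≤ g) (h2 : g ≤ C) :
    ∫ y in Set.Ioc (-C) C, (Set.Iio g).indicator (fun _ => (1 : ℝ)) y = g + C := by
  rw [setIntegral_indicator measurableSet_Iio]
  have : (Set.Ioc (-C) C ∩ Set.Iio g) = Set.Ioo (-C) g := by
    ext y
    simp only [Set.mem_inter_iff, Set.mem_Ioc, Set.mem_Iio, Set.mem_Ioo]
    constructor
    · rintro ⟨⟨a, b⟩, c⟩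
      exact ⟨a, c⟩
    · rintro ⟨a, c⟩
      exact ⟨⟨a, by linarith⟩, c⟩
  rw [this, setIntegral_const]
  simp only [smul_eq_mul, mul_one, Measure.real, Real.volume_Ioo]
  rw [ENNReal.toReal_ofReal (by linarith)]
  ring

lemma slice_nonpos {v : Fin n → Pt} (hW : ∀ p, p ∉ polyBoundary v → W v p ≤ 0) {C : ℝ}
    (hC : ∀ i, |(v i).2| ≤ C) {a : ℝ} (ha : ∀ i, a ≠ (v i).1) :
    ∑ i, sg v i a * (gh v i a + C) ≤ 0 := by
  have e1 : ∑ i, sg v i a * (gh v i a + C) = ∑ i, ∫ y in Set.Ioc (-C) C,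
      sg v i a * (Set.Iio (gh v i a)).indicator (fun _ => (1 : ℝ)) y := by
    refine Finset.sum_congr rfl fun i _ => ?_
    rw [integral_const_mul]
    by_cases hs : sg v i a = 0
    · rw [hs]; simp
    · obtain ⟨b1, b2⟩ := gh_bound v i (hC i) (hC (i + 1)) hs
      rw [integral_ind b1 b2]
  rw [e1, ← integral_finsetSum]
  · apply integral_nonpos_of_ae
    have hae : ∀ᵐ y : ℝ ∂(volume.restrict (Set.Ioc (-C) C)), ∀ i, y ≠ gh v i a := by
      rw [ae_all_iff]
      intro i
      exact ae_restrict_of_ae (by simp [ae_iff])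
    filter_upwards [hae] with y hy
    have hp := off_bd v ha hy
    have h1 := hW _ hp
    rw [W_cross (d := (0, 1)) hp (by simp) (fun i => by
      simp only [det2, Prod.fst_sub]
      intro h0
      apply ha i
      linarith)] at h1
    have h2 : ((∑ i, kc (0, 1) (v i - (a, y)) (v (i + 1) - (a, y)) : ℤ) : ℝ) ≤ 0 := by
      by_contra hc
      push Not at hc
      have := mul_pos (mul_pos two_pos Real.pi_pos) hc
      linarith
    push_cast at h2
    rw [Finset.sum_congr rfl (fun i _ => kc_sg v i (ha i) (ha (i + 1)) (hy i))] at h2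
    exact h2
  · intro i _
    apply Integrable.const_mul
    exact (integrable_const (1 : ℝ)).indicator measurableSet_Iio

lemma sg_integral (v : Fin n → Pt) (i : Fin n) (C : ℝ) :
    Integrable (fun a => sg v i a * (gh v i a + C)) ∧
    ∫ a, sg v i a * (gh v i a + C) =
      ((v i).1 - (v (i + 1)).1) * (((v i).2 + (v (i + 1)).2) / 2 + C) := by
  have hc : Continuous (fun a => gh v i a + C) := by
    unfold gh
    fun_prop
  have e : (fun a => sg v i a * (gh v i a + C)) = fun a =>
      (Set.Ioc (v (i + 1)).1 (v i).1).indicator (fun a => gh v i a + C) a -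
      (Set.Ioc (v i).1 (v (i + 1)).1).indicator (fun a => gh v i a + C) a := by
    funext a
    simp only [sg, Set.indicator_apply]
    split_ifs <;> ring
  have i1 : Integrable ((Set.Ioc (v (i + 1)).1 (v i).1).indicator (fun a => gh v i a + C)) :=
    (integrable_indicator_iff measurableSet_Ioc).2 hc.integrableOn_Ioc
  have i2 : Integrable ((Set.Ioc (v i).1 (v (i + 1)).1).indicator (fun a => gh v i a + C)) :=
    (integrable_indicator_iff measurableSet_Ioc).2 hc.integrableOn_Ioc
  rw [e]
  refine ⟨i1.sub i2, ?_⟩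
  rw [integral_sub i1 i2, integral_indicator measurableSet_Ioc,
    integral_indicator measurableSet_Ioc]
  change (∫ a in (v (i + 1)).1..(v i).1, (gh v i a + C)) = _
  by_cases hx : (v i).1 = (v (i + 1)).1
  · rw [hx]; simp
  have hx' : (v (i + 1)).1 - (v i).1 ≠ 0 := sub_ne_zero.2 (Ne.symm hx)
  rw [intervalIntegral.integral_eq_sub_of_hasDerivAt (f := fun a => ((v i).2 + C) * a +
    ((v (i + 1)).2 - (v i).2) / ((v (i + 1)).1 - (v i).1) * ((a - (v i).1) ^ 2 / 2))]
  · field_simp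
    ring
  · intro a _
    have h1 : HasDerivAt (fun a : ℝ => ((v i).2 + C) * a) (((v i).2 + C) * 1) a :=
      (hasDerivAt_id a).const_mul _
    have h2 : HasDerivAt (fun a : ℝ => (a - (v i).1) ^ 2 / 2) (a - (v i).1) a := by
      have := (((hasDerivAt_id a).sub_const (v i).1).pow 2).div_const 2
      refine HasDerivAt.congr_deriv (f := fun a : ℝ => (a - (v i).1) ^ 2 / 2) this ?_
      simp
    refine HasDerivAt.congr_deriv (h1.add (h2.const_mul
      (((v (i + 1)).2 - (v i).2) / ((v (i + 1)).1 - (v i).1)))) ?_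
    unfold gh
    ring
  · exact hc.intervalIntegrable _ _

lemma area_nonpos {v : Fin n → Pt} (hW : ∀ p, p ∉ polyBoundary v → W v p ≤ 0) :
    signedArea2 v ≤ 0 := by
  set C := ∑ i, |(v i).2| with hCdef
  have hC : ∀ i, |(v i).2| ≤ C := fun i =>
    Finset.single_le_sum (f := fun i => |(v i).2|) (fun j _ => abs_nonneg _) (Finset.mem_univ i)
  have h1 : ∫ a, ∑ i, sg v i a * (gh v i a + C) ≤ 0 := by
    apply integral_nonpos_of_ae
    have hae : ∀ᵐ a : ℝ, ∀ i, a ≠ (v i).1 := by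
      rw [ae_all_iff]
      intro i
      simp [ae_iff]
    filter_upwards [hae] with a ha
    exact slice_nonpos hW hC ha
  rw [integral_finsetSum _ (fun i _ => (sg_integral v i C).1),
    Finset.sum_congr rfl (fun i _ => (sg_integral v i C).2)] at h1
  have h2 : ∑ i, ((v i).1 - (v (i + 1)).1) * (((v i).2 + (v (i + 1)).2) / 2 + C) =
      signedArea2 v / 2 := by
    have : ∀ i, ((v i).1 - (v (i + 1)).1) * (((v i).2 + (v (i + 1)).2) / 2 + C) =
        det2 (v i) (v (i + 1)) / 2 + (((v i).1 * (v i).2 / 2 + C * (v i).1) -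
          ((v (i + 1)).1 * (v (i + 1)).2 / 2 + C * (v (i + 1)).1)) := by
      intro i
      simp only [det2]
      ring
    rw [Finset.sum_congr rfl (fun i _ => this i), Finset.sum_add_distrib,
      Finset.sum_sub_distrib, sum_shift (fun i => (v i).1 * (v i).2 / 2 + C * (v i).1), sub_self,
      add_zero, ← Finset.sum_div]
    rfl
  linarith

end KW
end

section
namespace KW
open Metric

variable {n : ℕ} [NeZero n]

lemma near_off {v : Fin n → Pt} (h : IsSimplePolygon v) {i : Fin n} {m : Pt}
    (hm : m ∈ openSegment ℝ (v i) (v (i + 1))) :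
    ∃ δ > 0, ∀ p ∈ ball m δ, ef v i p ≠ 0 → p ∉ polyBoundary v := by
  obtain ⟨δ, hδ, hav⟩ := near_avoid v (isCompact_singleton (x := m)) (fun k => k ≠ i)
    (fun k hk => by
      rw [Set.disjoint_singleton_left]
      exact open_not_mem h hk hm)
  refine ⟨δ, hδ, fun p hp hne => ?_⟩
  rw [not_mem_bd]
  intro j
  by_cases hj : j = i
  · subst hj
    intro hs
    exact hne (ef_seg hs)
  · exact hav p (by rwa [thickening_singleton]) j hj

lemma conn_of_LC {v : Fin n → Pt} (h : IsSimplePolygon v) {x y : Pt} {s : ℝ} (hs : s ≠ 0)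
    (hx : LC v x s 0) (hy : LC v y s 0) : Conn v x y := by
  have hm := midpt_mem (v 0) (v (0 + 1))
  obtain ⟨δ, hδ, d⟩ := hx _ hm
  obtain ⟨δ', hδ', d'⟩ := hy _ hm
  obtain ⟨p, hp, hps⟩ := side_near h 0 hs (ef_seg (openSegment_subset_segment _ _ _ hm))
    (lt_min hδ hδ')
  exact (d p (ball_subset_ball (min_le_left _ _) hp) hps).trans
    (d' p (ball_subset_ball (min_le_right _ _) hp) hps).symm

lemma two_val {v : Fin n → Pt} (h : IsSimplePolygon v) (hc : IsCCW v) {x : Pt}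
    (hx : x ∉ polyBoundary v) :
    (W v x = 2 * Real.pi ∧ ∀ i, LC v x 1 i) ∨ (W v x = 0 ∧ ∀ i, LC v x (-1) i) := by
  have hpi := Real.pi_pos
  have hm := midpt_mem (v 0) (v (0 + 1))
  have hm0 := ef_seg (openSegment_subset_segment _ _ _ hm)
  obtain ⟨δ, hδ, d⟩ := jump h hm
  obtain ⟨δ', hδ', d'⟩ := near_off h hm
  obtain ⟨p, hp, hps⟩ := side_near h 0 one_ne_zero hm0 (lt_min hδ hδ')
  obtain ⟨q, hq, hqs⟩ := side_near h 0 (neg_ne_zero.2 one_ne_zero) hm0 (lt_min hδ hδ')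
  have B1 : ∀ z, z ∈ ball (midpoint ℝ (v 0) (v (0 + 1))) (min δ δ') →
    z ∈ ball (midpoint ℝ (v 0) (v (0 + 1))) δ := fun z => fun hz => ball_subset_ball (min_le_left _ _) hz
  have B2 : ∀ z, z ∈ ball (midpoint ℝ (v 0) (v (0 + 1))) (min δ δ') →
    z ∈ ball (midpoint ℝ (v 0) (v (0 + 1))) δ' := fun z => fun hz => ball_subset_ball (min_le_right _ _) hz
  have J : ∀ p ∈ ball (midpoint ℝ (v 0) (v (0 + 1))) (min δ δ'),
      ∀ q ∈ ball (midpoint ℝ (v 0) (v (0 + 1))) (min δ δ'), 0 < ef v 0 p → ef v 0 q < 0 →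
      W v p = W v q + 2 * Real.pi := fun p hp q hq h1 h2 =>
    d p (B1 p hp) q (B1 q hq) h1 h2 (d' p (B2 p hp) h1.ne') (d' q (B2 q hq) h2.ne)
  have hpq := J p hp q hq (by linarith) (by linarith)
  have key : ∀ x, x ∉ polyBoundary v → (W v x = W v q + 2 * Real.pi ∧ ∀ i, LC v x 1 i) ∨
      (W v x = W v q ∧ ∀ i, LC v x (-1) i) := by
    intro x hx
    obtain ⟨s, hs, hL⟩ := exists_side h hx
    obtain ⟨δ3, hδ3, d3⟩ := hL 0 _ hm
    rcases hs with rfl | rfl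
    · left
      refine ⟨?_, hL⟩
      obtain ⟨r, hr, hrs⟩ := side_near h 0 one_ne_zero hm0 (lt_min (lt_min hδ hδ') hδ3)
      rw [(d3 r (ball_subset_ball (min_le_right _ _) hr) hrs).W_eq]
      exact J r (ball_subset_ball (min_le_left _ _) hr) q hq (by linarith) (by linarith)
    · right
      refine ⟨?_, hL⟩
      obtain ⟨r, hr, hrs⟩ := side_near h 0 (neg_ne_zero.2 one_ne_zero) hm0
        (lt_min (lt_min hδ hδ') hδ3)
      rw [(d3 r (ball_subset_ball (min_le_right _ _) hr) hrs).W_eq]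
      have := J p hp r (ball_subset_ball (min_le_left _ _) hr) (by linarith) (by linarith)
      linarith
  have hq0 : W v q = 0 := by
    obtain ⟨M, hM⟩ := far_half (v := v)
    have hfar := hM (|M| + 1, 0) (by
      rw [Prod.norm_mk, norm_zero]
      refine lt_max_of_lt_left ?_
      rw [Real.norm_eq_abs, abs_of_nonneg (by positivity)]
      linarith [le_abs_self M])
    have h0 := W_half hfar
    rcases key _ (half_not_mem hfar) with h1 | h1
    · exfalso
      have := area_nonpos (v := v) (fun p hp => by
        rcases key p hp with h2 | h2 <;> linarith [h1.1, h2.1])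
      unfold IsCCW at hc
      linarith
    · linarith [h1.1]
  have := key x hx
  rw [hq0, zero_add] at this
  exact this

lemma mem_int {v : Fin n → Pt} (h : IsSimplePolygon v) (hc : IsCCW v) {x : Pt} :
    x ∈ polyInterior v ↔ x ∉ polyBoundary v ∧ W v x = 2 * Real.pi := by
  have hpi := Real.pi_pos
  obtain ⟨M, hM⟩ := far_half (v := v)
  constructor
  · rintro ⟨hx, hb⟩
    refine ⟨hx, ?_⟩
    rcases two_val h hc hx with h1 | h1
    · exact h1.1
    · exfalso
      obtain ⟨R, hR⟩ := hb.subset_closedBall 0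
      have hn : ‖((max |M| |R| + 1, 0) : Pt)‖ = max |M| |R| + 1 := by
        rw [Prod.norm_mk, norm_zero, Real.norm_eq_abs, abs_of_nonneg (by positivity)]
        exact max_eq_left (by positivity)
      have hfar := hM (max |M| |R| + 1, 0) (by
        rw [hn]
        linarith [le_abs_self M, le_max_left |M| |R|])
      rcases two_val h hc (half_not_mem hfar) with h2 | h2
      · have := W_half hfar
        linarith [h2.1]
      · have := hR (conn_of_LC h (by norm_num) (h1.2 0) (h2.2 0)).mem_comp
        rw [mem_closedBall_zero_iff, hn] at this
        linarith [le_abs_self R, le_max_right |M| |R|]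
  · rintro ⟨hx, hW⟩
    refine ⟨hx, ?_⟩
    refine (isBounded_closedBall (x := (0 : Pt)) (r := M)).subset fun y hy => ?_
    rw [mem_closedBall_zero_iff]
    by_contra hlt
    push Not at hlt
    have h1 := W_eq_of_preconn isPreconnected_connectedComponentIn
      (connectedComponentIn_subset _ _) hy (mem_connectedComponentIn hx)
    have := W_half (hM y hlt)
    linarith

lemma not_mem_region {v : Fin n → Pt} (h : IsSimplePolygon v) (hc : IsCCW v) {x : Pt} :
    x ∉ polyRegion v ↔ x ∉ polyBoundary v ∧ W v x = 0 := by
  have hpi := Real.pi_pos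
  unfold polyRegion
  rw [Set.mem_union, not_or, mem_int h hc]
  constructor
  · rintro ⟨h1, h2⟩
    refine ⟨h1, ?_⟩
    rcases two_val h hc h1 with h3 | h3
    · exact absurd ⟨h1, h3.1⟩ h2
    · exact h3.1
  · rintro ⟨h1, h2⟩
    refine ⟨h1, fun h3 => ?_⟩
    linarith [h3.2]

lemma near_edge {v : Fin n → Pt} (h : IsSimplePolygon v) (hc : IsCCW v) {i : Fin n} {m : Pt}
    (hm : m ∈ openSegment ℝ (v i) (v (i + 1))) :
    ∃ δ > 0, ∀ p ∈ ball m δ, (0 < ef v i p → p ∈ polyInterior v) ∧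
      (ef v i p < 0 → p ∉ polyRegion v) := by
  have hpi := Real.pi_pos
  have hm0 := ef_seg (openSegment_subset_segment _ _ _ hm)
  obtain ⟨δ, hδ, d⟩ := jump h hm
  obtain ⟨δ', hδ', d'⟩ := near_off h hm
  obtain ⟨p, hp, hps⟩ := side_near h i one_ne_zero hm0 (lt_min hδ hδ')
  obtain ⟨q, hq, hqs⟩ := side_near h i (neg_ne_zero.2 one_ne_zero) hm0 (lt_min hδ hδ')
  have B1 : ∀ z, z ∈ ball m (min δ δ') → z ∈ ball m δ :=
    fun z => fun hz => ball_subset_ball (min_le_left _ _) hz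
  have B2 : ∀ z, z ∈ ball m (min δ δ') → z ∈ ball m δ' :=
    fun z => fun hz => ball_subset_ball (min_le_right _ _) hz
  have hp1 : 0 < ef v i p := by linarith
  have hq1 : ef v i q < 0 := by linarith
  refine ⟨min δ δ', lt_min hδ hδ', fun r hr => ⟨fun hpos => ?_, fun hneg => ?_⟩⟩
  · have ho := d' r (B2 r hr) hpos.ne'
    have hoq := d' q (B2 q hq) hq1.ne
    have := d r (B1 r hr) q (B1 q hq) hpos hq1 ho hoq
    rw [mem_int h hc]
    refine ⟨ho, ?_⟩
    rcases two_val h hc ho with h1 | h1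
    · exact h1.1
    · rcases two_val h hc hoq with h2 | h2 <;> linarith [h1.1, h2.1]
  · have ho := d' r (B2 r hr) hneg.ne
    have hop := d' p (B2 p hp) hp1.ne'
    have := d p (B1 p hp) r (B1 r hr) hp1 hneg hop ho
    rw [not_mem_region h hc]
    refine ⟨ho, ?_⟩
    rcases two_val h hc ho with h1 | h1
    · rcases two_val h hc hop with h2 | h2 <;> linarith [h1.1, h2.1]
    · exact h1.1

lemma int_open {v : Fin n → Pt} (h : IsSimplePolygon v) (hc : IsCCW v) :
    IsOpen (polyInterior v) := by
  rw [Metric.isOpen_iff]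
  intro x hx
  have hx' := (mem_int h hc).1 hx
  obtain ⟨δ, hδ, hb⟩ := Metric.isOpen_iff.1 (bd_closed v).isOpen_compl x hx'.1
  refine ⟨δ, hδ, fun y hy => ?_⟩
  rw [mem_int h hc]
  refine ⟨hb hy, ?_⟩
  rw [← hx'.2]
  exact W_eq_of_preconn (convex_ball x δ).isPreconnected hb hy (mem_ball_self hδ)

lemma region_closed {v : Fin n → Pt} (h : IsSimplePolygon v) (hc : IsCCW v) :
    IsOpen (polyRegion v)ᶜ := by
  rw [Metric.isOpen_iff]
  intro x hx
  have hx' := (not_mem_region h hc).1 hx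
  obtain ⟨δ, hδ, hb⟩ := Metric.isOpen_iff.1 (bd_closed v).isOpen_compl x hx'.1
  refine ⟨δ, hδ, fun y hy => ?_⟩
  rw [Set.mem_compl_iff, not_mem_region h hc]
  refine ⟨hb hy, ?_⟩
  rw [← hx'.2]
  exact W_eq_of_preconn (convex_ball x δ).isPreconnected hb hy (mem_ball_self hδ)

/-- every point of the region is a limit of interior points -/
lemma region_dense {v : Fin n → Pt} (h : IsSimplePolygon v) (hc : IsCCW v) {x : Pt}
    (hx : x ∈ polyRegion v) {ε : ℝ} (hε : 0 < ε) : (ball x ε ∩ polyInterior v).Nonempty := by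
  rcases hx with hx | hx
  · obtain ⟨i, hi⟩ := Set.mem_iUnion.1 hx
    have : ∃ m ∈ openSegment ℝ (v i) (v (i + 1)), m ∈ ball x ε := by
      have hcl : x ∈ closure (openSegment ℝ (v i) (v (i + 1))) := by
        rw [closure_openSegment]
        exact hi
      obtain ⟨m, hm, hd⟩ := Metric.mem_closure_iff.1 hcl ε hε
      exact ⟨m, hm, by rwa [mem_ball, dist_comm]⟩
    obtain ⟨m, hm, hmε⟩ := this
    obtain ⟨δ, hδ, d⟩ := near_edge h hc hm
    obtain ⟨δ', hδ', hb⟩ := Metric.isOpen_iff.1 isOpen_ball m hmε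
    obtain ⟨p, hp, hps⟩ := side_near h i one_ne_zero
      (ef_seg (openSegment_subset_segment _ _ _ hm)) (lt_min hδ hδ')
    exact ⟨p, hb (ball_subset_ball (min_le_right _ _) hp),
      (d p (ball_subset_ball (min_le_left _ _) hp)).1 (by linarith)⟩
  · exact ⟨x, mem_ball_self hε, hx⟩

end KW
end

section
namespace KW
open Metric

variable {n : ℕ} [NeZero n]

lemma farthest {v : Fin n → Pt} (h : IsSimplePolygon v) (hc : IsCCW v) :
    ∃ j, 0 < turn v j ∧ ∀ i, i ≠ j + 1 → dot (v (j + 1)) (v i - v (j + 1)) < 0 := by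
  have hpi := Real.pi_pos
  obtain ⟨b, hb⟩ := Finite.exists_max (fun i => dot (v i) (v i))
  obtain ⟨j, rfl⟩ : ∃ j, b = j + 1 := ⟨b - 1, by simp⟩
  have hfar : ∀ i, i ≠ j + 1 → dot (v (j + 1)) (v i - v (j + 1)) < 0 := by
    intro i hi
    have h1 := hb i
    have h2 : 0 < dot (v i - v (j + 1)) (v i - v (j + 1)) :=
      dot_self_pos (sub_ne_zero.2 fun e => hi (h.2.1 e))
    simp only [dot, Prod.fst_sub, Prod.snd_sub] at *
    nlinarith
  refine ⟨j, ?_, hfar⟩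
  have n1 : j ≠ j + 1 := fun e => one_ne h (by
    have : j + 0 = j + 1 := by rw [add_zero]; exact e
    exact (add_left_cancel this).symm)
  have n2 : j + 1 + 1 ≠ j + 1 := fun e => one_ne h (by
    have : j + 1 + 1 = j + 1 + 0 := by rw [add_zero]; exact e
    exact add_left_cancel this)
  have f1 := hfar j n1
  have f2 := hfar _ n2
  by_contra hT
  push Not at hT
  rcases hT.lt_or_eq with hT | hT
  · -- reflex turn at the farthest vertex
    obtain ⟨ε, hε, S, hS1, hS2, hS3, hS4⟩ := vertex_local h j (s := 1) one_ne_zero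
    set e := v (j + 1) - v j with he
    set f := v (j + 1 + 1) - v (j + 1) with hf
    obtain ⟨δ, hδ, hδb⟩ : ∃ δ : ℝ, δ > 0 ∧ v (j + 1) + δ • (e - f) ∈ ball (v (j + 1)) ε := by
      have hcont : Filter.Tendsto (fun t : ℝ => v (j + 1) + t • (e - f))
          (nhdsWithin 0 (Set.Ioi 0)) (nhds (v (j + 1))) := by
        have : Continuous (fun t : ℝ => v (j + 1) + t • (e - f)) := by fun_prop
        have h2 := this.tendsto 0
        simp only [zero_smul, add_zero] at h2
        exact h2.mono_left nhdsWithin_le_nhds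
      have := (hcont.eventually (isOpen_ball.mem_nhds (mem_ball_self hε))).and
        self_mem_nhdsWithin
      obtain ⟨t, ht1, ht2⟩ := this.exists
      exact ⟨t, ht2, ht1⟩
    set q := v (j + 1) + δ • (e - f) with hq
    have q1 : ef v j q = δ * -turn v j := by
      simp only [hq, he, hf, ef, turn, det2, Prod.fst_sub, Prod.snd_sub, Prod.fst_add, Prod.snd_add,
        Prod.smul_fst, Prod.smul_snd, smul_eq_mul]
      ring
    have q2 : ef v (j + 1) q = δ * -turn v j := by
      simp only [hq, he, hf, ef, turn, det2, Prod.fst_sub, Prod.snd_sub, Prod.fst_add, Prod.snd_add,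
        Prod.smul_fst, Prod.smul_snd, smul_eq_mul]
      ring
    have hpos : 0 < δ * -turn v j := mul_pos hδ (by linarith)
    have hqS : q ∈ S := hS3 q hδb (by rw [q1]; linarith) (by rw [q2]; linarith)
    have hqh : ∀ i, 0 < dot (-v (j + 1)) (v i - q) := by
      intro i
      have e1 : dot (-v (j + 1)) (v i - q) = -dot (v (j + 1)) (v i - v (j + 1)) +
          δ * (-dot (v (j + 1)) (v j - v (j + 1)) -
            dot (v (j + 1)) (v (j + 1 + 1) - v (j + 1))) := by
        simp only [hq, he, hf, dot, Prod.fst_sub, Prod.snd_sub, Prod.fst_add, Prod.snd_add,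
          Prod.smul_fst, Prod.smul_snd, smul_eq_mul, Prod.fst_neg, Prod.snd_neg]
        ring
      rw [e1]
      have : -dot (v (j + 1)) (v i - v (j + 1)) ≥ 0 := by
        by_cases hi : i = j + 1
        · subst hi; simp [dot]
        · linarith [hfar i hi]
      have : 0 < δ * (-dot (v (j + 1)) (v j - v (j + 1)) -
            dot (v (j + 1)) (v (j + 1 + 1) - v (j + 1))) := mul_pos hδ (by linarith)
      linarith
    have hWq := W_half hqh
    obtain ⟨m, hm, hmε⟩ := near_end (a := v (j + 1)) (b := v j) hε
    rw [openSegment_symm] at hm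
    obtain ⟨δ1, hδ1, d1⟩ := near_edge h hc hm
    obtain ⟨δ2, hδ2, d2⟩ := Metric.isOpen_iff.1 isOpen_ball m hmε
    obtain ⟨p, hp, hps⟩ := side_near h j (s := 1) one_ne_zero
      (ef_seg (openSegment_subset_segment _ _ _ hm)) (lt_min hδ1 hδ2)
    have hpS := hS4 (by linarith) p (d2 (ball_subset_ball (min_le_right _ _) hp)) (Or.inl hps)
    have hpI := (d1 p (ball_subset_ball (min_le_left _ _) hp)).1 (by linarith)
    have := ((mem_int h hc).1 hpI).2
    have := W_eq_of_preconn hS1 hS2 hpS hqS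
    linarith
  · obtain ⟨u, hu1, hu2⟩ := not_fold_sep h j
    have key : dot (v (j + 1)) (v (j + 1 + 1) - v (j + 1)) * dot u (v (j + 1) - v j) +
        dot (v (j + 1)) (v j - v (j + 1)) * dot u (v (j + 1 + 1) - v (j + 1)) =
        turn v j * det2 u (v (j + 1)) := by
      simp only [dot, turn, det2, Prod.fst_sub, Prod.snd_sub]
      ring
    rw [hT, zero_mul] at key
    nlinarith [mul_pos (neg_pos.2 f2) hu1, mul_pos (neg_pos.2 f1) hu2]

end KW
end

section
namespace KW
open Metric

variable {n : ℕ} [NeZero n]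

lemma dot_add (u a b : Pt) : dot u (a + b) = dot u a + dot u b := by
  simp only [dot, Prod.fst_add, Prod.snd_add]; ring

lemma dot_neg (u a : Pt) : dot u (-a) = -dot u a := by
  simp only [dot, Prod.fst_neg, Prod.snd_neg]; ring

lemma neg_dot (u a : Pt) : dot (-u) a = -dot u a := by
  simp only [dot, Prod.fst_neg, Prod.snd_neg]; ring

lemma ang_neg_neg (a b : Pt) : ang (-a) (-b) = ang a b := by
  have : ∀ a, cp (-a) = -cp a := fun a => by apply Complex.ext <;> simp [cp]
  unfold ang
  rw [this, this, neg_div_neg_eq]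

lemma ang_self_neg {a : Pt} (h : a ≠ 0) : ang a (-a) = Real.pi := by
  have : ∀ a, cp (-a) = -cp a := fun a => by apply Complex.ext <;> simp [cp]
  unfold ang
  rw [this, neg_div, div_self (cp_ne_zero h), Complex.arg_neg_one]

/-- four vectors in a common half-plane -/
lemma ang_square {u a b c d : Pt} (ha : 0 < dot u a) (hb : 0 < dot u b) (hc : 0 < dot u c)
    (hd : 0 < dot u d) : ang a b + ang b d = ang a c + ang c d := by
  rw [ang_half ha hb, ang_half hb hd, ang_half ha hc, ang_half hc hd]
  ring

lemma ang_tri {u a b c : Pt} (ha : 0 < dot u a) (hb : 0 < dot u b) (hc : 0 < dot u c) :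
    ang a b + ang b c = ang a c := by
  rw [ang_half ha hb, ang_half hb hc, ang_half ha hc]
  ring

lemma umlauf_abs (m : ℕ) (hm : 1 ≤ m) (V : ℕ → Pt) (hV0 : V (m + 2) = V 0) (hV1 : V (m + 3) = V 1)
    (hcell : ∀ i j, i + 1 < j → j + 1 ≤ m + 2 → ¬ (i = 0 ∧ j + 1 = m + 2) →
      ∃ u, 0 < dot u (V j - V i) ∧ 0 < dot u (V j - V (i + 1)) ∧
        0 < dot u (V (j + 1) - V i) ∧ 0 < dot u (V (j + 1) - V (i + 1)))
    (hfold : ∀ i, ∃ u, 0 < dot u (V (i + 1) - V i) ∧ 0 < dot u (V (i + 2) - V (i + 1)))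
    (w : Pt) (hw : ∀ j, 1 ≤ j → j ≤ m + 1 → 0 < dot w (V j - V 0))
    (hT : 0 < det2 (V (m + 2) - V (m + 1)) (V 1 - V 0)) :
    ∑ i ∈ Finset.range (m + 2), ang (V (i + 1) - V i) (V (i + 2) - V (i + 1)) = 2 * Real.pi := by
  have hpi := Real.pi_pos
  -- triangles
  have tri : ∀ i, ang (V (i + 1) - V i) (V (i + 2) - V i) +
      ang (V (i + 2) - V i) (V (i + 2) - V (i + 1)) =
      ang (V (i + 1) - V i) (V (i + 2) - V (i + 1)) := by
    intro i
    obtain ⟨u, h1, h2⟩ := hfold i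
    refine ang_tri h1 ?_ h2
    have : V (i + 2) - V i = (V (i + 1) - V i) + (V (i + 2) - V (i + 1)) := by abel
    rw [this, dot_add]
    linarith
  -- strips
  have strip : ∀ s j, (1 ≤ s ∨ j + 1 < m + 2) → j + 1 ≤ m + 2 → ∀ l, s ≤ l → l < j →
      ang (V j - V s) (V (j + 1) - V s) +
        ∑ i ∈ Finset.Ico s l, ang (V (j + 1) - V i) (V (j + 1) - V (i + 1)) =
      ∑ i ∈ Finset.Ico s l, ang (V j - V i) (V j - V (i + 1)) +
        ang (V j - V l) (V (j + 1) - V l) := by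
    intro s j hsj hj l hsl
    induction l, hsl using Nat.le_induction with
    | base => intro _; simp
    | succ l hl ih =>
      intro hlj
      have ih := ih (by omega)
      obtain ⟨u, h1, h2, h3, h4⟩ := hcell l j (by omega) hj (by omega)
      have sq := ang_square h1 h3 h2 h4
      rw [Finset.sum_Ico_succ_top hl, Finset.sum_Ico_succ_top hl]
      linarith
  have fan : ∀ k, k ≤ m → ∑ j ∈ Finset.range k, ang (V (j + 1) - V 0) (V (j + 2) - V 0) +
      ∑ i ∈ Finset.range k, ang (V (k + 1) - V i) (V (k + 1) - V (i + 1)) =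
      ∑ i ∈ Finset.range k, ang (V (i + 1) - V i) (V (i + 2) - V (i + 1)) := by
    intro k
    induction k with
    | zero => intro _; simp
    | succ k ih =>
      intro hk
      have ih := ih (by omega)
      have st := strip 0 (k + 1) (Or.inr (by omega)) (by omega) k (by omega) (by omega)
      rw [Nat.Ico_zero_eq_range] at st
      have t := tri k
      rw [Finset.sum_range_succ, Finset.sum_range_succ, Finset.sum_range_succ _ k]
      linarith
  have F := fan m le_rfl
  have st := strip 1 (m + 1) (Or.inl le_rfl) (by omega) m hm (by omega)
  have t := tri m
  -- the corner
  have hc : ang (V (m + 1) - V 0) (V (m + 1) - V 1) + ang (V (m + 1) - V 1) (V (m + 2) - V 1) =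
      ang (V (m + 2) - V (m + 1)) (V (m + 3) - V (m + 2)) := by
    obtain ⟨u, h1, h2⟩ := hfold (m + 1)
    rw [show m + 1 + 2 = m + 3 from rfl, show m + 1 + 1 = m + 2 from rfl, hV1, hV0] at h2
    rw [show m + 1 + 1 = m + 2 from rfl, hV0] at h1
    rw [hV1, hV0, ← ang_neg_neg (V 0 - V (m + 1)), neg_sub, neg_sub]
    refine ang_tri (u := -u) ?_ ?_ ?_
    · rw [neg_dot, ← dot_neg, neg_sub]; exact h1
    · have : V (m + 1) - V 1 = -((V 0 - V (m + 1)) + (V 1 - V 0)) := by abel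
      rw [this, neg_dot, dot_neg, dot_add]
      linarith
    · rw [neg_dot, ← dot_neg, neg_sub]; exact h2
  -- rows
  have row : ∀ k, k ≤ m → ∑ j ∈ Finset.range k, ang (V (j + 1) - V 0) (V (j + 2) - V 0) =
      ang w (V (k + 1) - V 0) - ang w (V 1 - V 0) := by
    intro k
    induction k with
    | zero => intro _; simp
    | succ k ih =>
      intro hk
      rw [Finset.sum_range_succ, ih (by omega),
        ang_half (hw (k + 1) (by omega) (by omega)) (hw (k + 2) (by omega) (by omega))]
      ring
  have row1 := row m le_rfl
  rw [← ang_half (hw 1 le_rfl (by omega)) (hw (m + 1) (by omega) (by omega))] at row1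
  have row2 : ∑ i ∈ Finset.Ico 1 (m + 1), ang (V (m + 2) - V i) (V (m + 2) - V (i + 1)) =
      ∑ j ∈ Finset.range m, ang (V (j + 1) - V 0) (V (j + 2) - V 0) := by
    rw [Finset.sum_Ico_eq_sum_range]
    refine Finset.sum_congr (by simp) fun j _ => ?_
    rw [hV0, ← ang_neg_neg, neg_sub, neg_sub, add_comm 1 j]
  rw [Finset.sum_Ico_succ_top hm] at row2
  have hsplit : ∑ i ∈ Finset.range m, ang (V (m + 1) - V i) (V (m + 1) - V (i + 1)) =
      ang (V (m + 1) - V 0) (V (m + 1) - V 1) +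
      ∑ i ∈ Finset.Ico 1 m, ang (V (m + 1) - V i) (V (m + 1) - V (i + 1)) := by
    rw [← Nat.Ico_zero_eq_range, Finset.sum_eq_sum_Ico_succ_bot (by omega)]
  have hγ : ang (V 1 - V 0) (V (m + 1) - V 0) +
      ang (V (m + 2) - V (m + 1)) (V (m + 3) - V (m + 2)) = Real.pi := by
    rw [hV1, hV0] at *
    have e : V (m + 1) - V 0 = -(V 0 - V (m + 1)) := by abel
    rw [e]
    set a := V 0 - V (m + 1)
    set b := V 1 - V 0
    have ha : a ≠ 0 := by
      intro h0
      rw [h0] at hT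
      simp [det2] at hT
    have hb : b ≠ 0 := by
      intro h0
      rw [h0] at hT
      simp [det2] at hT
    obtain ⟨k, hk⟩ := ang_add ha hb (neg_ne_zero.2 ha)
    rw [ang_self_neg ha] at hk
    have p1 := ang_pos hT
    have p2 : 0 < det2 b (-a) := by
      simp only [det2, Prod.fst_neg, Prod.snd_neg] at *
      linarith
    have p2 := ang_pos p2
    have := int_zero (k := k) (x := Real.pi - ang a b - ang b (-a)) (by linarith) (by linarith)
      (by linarith)
    subst this
    push_cast at hk
    linarith
  rw [Finset.sum_range_succ, Finset.sum_range_succ]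
  simp only [show m + 1 + 1 = m + 2 from rfl, show m + 1 + 2 = m + 3 from rfl] at *
  linarith

open scoped Pointwise in
lemma sep_edges {a b c d : Pt} (h : Disjoint (segment ℝ a b) (segment ℝ c d)) :
    ∃ u, 0 < dot u (c - a) ∧ 0 < dot u (c - b) ∧ 0 < dot u (d - a) ∧ 0 < dot u (d - b) := by
  have hcv : Convex ℝ (segment ℝ c d - segment ℝ a b) := (convex_segment _ _).sub (convex_segment _ _)
  have hcl : IsClosed (segment ℝ c d - segment ℝ a b) := by
    rw [← Set.sub_image_prod]
    exact (((seg_compact c d).prod (seg_compact a b)).image continuous_sub).isClosed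
  have h0 : (0 : Pt) ∉ segment ℝ c d - segment ℝ a b := by
    rintro ⟨x, hx, y, hy, hxy⟩
    have : x = y := sub_eq_zero.1 hxy
    subst this
    exact Set.disjoint_left.1 h hy hx
  obtain ⟨u, hu⟩ := sep hcv hcl h0
  have L := fun a b : Pt => left_mem_segment ℝ a b
  have R := fun a b : Pt => right_mem_segment ℝ a b
  exact ⟨u, hu _ (Set.sub_mem_sub (L _ _) (L _ _)), hu _ (Set.sub_mem_sub (L _ _) (R _ _)),
    hu _ (Set.sub_mem_sub (R _ _) (L _ _)), hu _ (Set.sub_mem_sub (R _ _) (R _ _))⟩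

lemma disj_edges {v : Fin n → Pt} (h : IsSimplePolygon v) {i j : Fin n} (h1 : i ≠ j)
    (h2 : i + 1 ≠ j) (h3 : j + 1 ≠ i) :
    Disjoint (segment ℝ (v i) (v (i + 1))) (segment ℝ (v j) (v (j + 1))) := by
  rw [Set.disjoint_left]
  intro x hx hy
  obtain ⟨ha, hb⟩ := h.2.2 i j h1 ⟨hx, hy⟩
  rcases ha with rfl | rfl <;> rcases hb with hb | hb
  · exact h1 (h.2.1 hb)
  · exact h3 (h.2.1 hb).symm
  · exact h2 (h.2.1 hb)
  · exact h1 (add_right_cancel (h.2.1 hb))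

lemma ofNat_inj {b : Fin n} {i j : ℕ} (hi : i < n) (hj : j < n)
    (h : b + Fin.ofNat n i = b + Fin.ofNat n j) : i = j := by
  have := congrArg Fin.val (add_left_cancel h)
  rwa [Fin.val_ofNat, Fin.val_ofNat, Nat.mod_eq_of_lt hi, Nat.mod_eq_of_lt hj] at this

lemma umlauf {v : Fin n → Pt} (h : IsSimplePolygon v) (hc : IsCCW v) :
    ∑ j, ang (v (j + 1) - v j) (v (j + 1 + 1) - v (j + 1)) = 2 * Real.pi := by
  obtain ⟨j0, hT, hfar⟩ := farthest h hc
  have h3 := h.1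
  obtain ⟨m, hmn⟩ : ∃ m, n = m + 2 := ⟨n - 2, by omega⟩
  set b := j0 + 1 with hb
  have hsucc : ∀ k, b + Fin.ofNat n (k + 1) = b + Fin.ofNat n k + 1 := fun k => by
    rw [ofNat_succ, ← add_assoc]
  have hz : b + Fin.ofNat n 0 = b := by
    have : Fin.ofNat n 0 = 0 := by apply Fin.ext; simp
    rw [this, add_zero]
  have hn0 : b + Fin.ofNat n (m + 2) = b := by
    have : Fin.ofNat n (m + 2) = 0 := by apply Fin.ext; simp [← hmn]
    rw [this, add_zero]
  have hlast : b + Fin.ofNat n (m + 1) = j0 := by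
    have := hsucc (m + 1)
    rw [hn0, hb] at this
    exact (add_right_cancel this).symm
  have hne : ∀ i j, i < n → j < n → i ≠ j → b + Fin.ofNat n i ≠ b + Fin.ofNat n j :=
    fun i j hi hj hij e => hij (ofNat_inj hi hj e)
  have key := umlauf_abs m (by omega) (fun k => v (b + Fin.ofNat n k))
    (by simp only [hn0, hz]) (by simp only [hsucc (m + 2), hn0, hsucc 0, hz])
    (by
      intro i j hij hj hn
      have := sep_edges (disj_edges h (i := b + Fin.ofNat n i) (j := b + Fin.ofNat n j)
        (hne i j (by omega) (by omega) (by omega))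
        (by
          rw [← hsucc]
          exact hne (i + 1) j (by omega) (by omega) (by omega))
        (by
          by_cases hjn : j + 1 = m + 2
          · rw [← hsucc, hjn, hn0, ← hz, add_comm b, add_comm _ (b)]
            nth_rw 1 [← hz]
            have := hne 0 i (by omega) (by omega) (by omega)
            simpa [hz] using this
          · rw [← hsucc]
            exact hne (j + 1) i (by omega) (by omega) (by omega)))
      simpa only [hsucc] using this)
    (by
      intro i
      have := not_fold_sep h (b + Fin.ofNat n i)
      simpa only [hsucc] using this)
    (-v b)
    (by
      intro j h1 h2
      rw [neg_dot, hz, neg_pos]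
      refine hfar _ ?_
      have := hne j 0 (by omega) (by omega) (by omega)
      rwa [hz] at this)
    (by
      have h1 := hsucc 0
      rw [hz] at h1
      simp only [hn0, hlast, hz]
      rw [show (1 : ℕ) = 0 + 1 from rfl, h1]
      exact hT)
  rw [← hmn, Finset.sum_range] at key
  have e : ∀ i : Fin n, Fin.ofNat n (i : ℕ) = i := fun i => by
    apply Fin.ext
    rw [Fin.val_ofNat]
    exact Nat.mod_eq_of_lt i.isLt
  simp only [hsucc, e] at key
  rw [← key]
  exact (Equiv.sum_comp (Equiv.addLeft b)
    (fun j => ang (v (j + 1) - v j) (v (j + 1 + 1) - v (j + 1)))).symm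

end KW
end

section
namespace KW
open Metric

variable {n : ℕ} [NeZero n]

lemma cyc_ind {P : Fin n → Prop} (hs : ∀ i, P i → P (i + 1)) {j : Fin n} (hj : P j) (i : Fin n) :
    P i := by
  have key : ∀ k : ℕ, P (j + Fin.ofNat n k) := by
    intro k
    induction k with
    | zero =>
      have : Fin.ofNat n 0 = 0 := by
        apply Fin.ext
        simp
      rw [this, add_zero]
      exact hj
    | succ k ih =>
      have := hs _ ih
      rw [ofNat_succ, ← add_assoc]
      exact this
  have h1 := key (i - j).val
  have : Fin.ofNat n (i - j).val = i - j := by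
    apply Fin.ext
    rw [Fin.val_ofNat]
    exact Nat.mod_eq_of_lt (i - j).isLt
  rw [this, add_sub_cancel] at h1
  exact h1

lemma ang_nonpos {u e f : Pt} (hu1 : 0 < dot u e) (hu2 : 0 < dot u f) (h : det2 e f ≤ 0) :
    ang e f ≤ 0 := by
  rcases h.lt_or_eq with h | h
  · exact (ang_neg h).le
  · have h1 := ang_half hu1 hu2
    have b1 := ang_half_bound hu1
    have b2 := ang_half_bound hu2
    have hlt : ang e f < Real.pi := by linarith
    have him : (cp f / cp e).im = 0 := by rw [im_div, h, zero_div]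
    by_cases hre : (cp f / cp e).re < 0
    · have : ang e f = Real.pi := Complex.arg_eq_pi_iff.2 ⟨hre, him⟩
      linarith
    · push Not at hre
      exact (Complex.arg_eq_zero_iff.2 ⟨hre, him⟩).le

lemma all_good_generic {v : Fin n → Pt} (h : IsSimplePolygon v) (hc : IsCCW v) {x : Pt}
    (hx : x ∈ polyInterior v) (hg : ∀ i, ef v i x ≠ 0)
    (hw : ∀ j, 0 < turn v j → 0 < ef v j x ∧ 0 < ef v (j + 1) x) (i : Fin n) : 0 < ef v i x := by
  have hpi := Real.pi_pos
  obtain ⟨hxb, hW⟩ := (mem_int h hc).1 hx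
  have ha : ∀ i, v i - x ≠ 0 := vert_ne hxb
  have d1 : ∀ i, det2 (v i - x) (v (i + 1) - v i) = ef v i x := fun i => by
    simp only [ef, det2, Prod.fst_sub, Prod.snd_sub]; ring
  have d2 : ∀ i, det2 (v (i + 1) - x) (v (i + 1) - v i) = ef v i x := fun i => by
    simp only [ef, det2, Prod.fst_sub, Prod.snd_sub]; ring
  have d3 : ∀ i, det2 (v i - x) (v (i + 1) - x) = ef v i x := fun i => by
    simp only [ef, det2, Prod.fst_sub, Prod.snd_sub]; ring
  set α : Fin n → ℝ := fun i => ang (v i - x) (v (i + 1) - v i) with hα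
  set β : Fin n → ℝ := fun i => ang (v (i + 1) - x) (v (i + 1) - v i) with hβ
  set θ : Fin n → ℝ := fun i => ang (v i - x) (v (i + 1) - x) with hθ
  set τ : Fin n → ℝ := fun i => ang (v (i + 1) - v i) (v (i + 1 + 1) - v (i + 1)) with hτ
  have gα : ∀ i, 0 < ef v i x → 0 < α i ∧ α i < Real.pi := fun i hi => ang_pos (by rwa [d1])
  have gβ : ∀ i, 0 < ef v i x → 0 < β i ∧ β i < Real.pi := fun i hi => ang_pos (by rwa [d2])
  have gθ : ∀ i, 0 < ef v i x → 0 < θ i ∧ θ i < Real.pi := fun i hi => ang_pos (by rwa [d3])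
  have bα : ∀ i, ef v i x < 0 → -Real.pi < α i ∧ α i < 0 :=
    fun i hi => ⟨ang_gt _ _, ang_neg (by rwa [d1])⟩
  have bβ : ∀ i, ef v i x < 0 → -Real.pi < β i ∧ β i < 0 :=
    fun i hi => ⟨ang_gt _ _, ang_neg (by rwa [d2])⟩
  have bθ : ∀ i, ef v i x < 0 → -Real.pi < θ i ∧ θ i < 0 :=
    fun i hi => ⟨ang_gt _ _, ang_neg (by rwa [d3])⟩
  have hαβ : ∀ i, α i = θ i + β i := by
    intro i
    obtain ⟨k, hk⟩ := ang_add (ha i) (ha (i + 1)) (edge_ne_zero h i)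
    change α i = θ i + β i + 2 * Real.pi * k at hk
    have : k = 0 := by
      refine int_zero (x := α i - θ i - β i) (by linarith) ?_ ?_
      all_goals
        rcases lt_or_gt_of_ne (hg i) with hi | hi
        · have := bα i hi; have := bβ i hi; have := bθ i hi; linarith
        · have := gα i hi; have := gβ i hi; have := gθ i hi; linarith
    subst this
    push_cast at hk
    linarith
  have hk : ∀ i, ∃ k : ℤ, α (i + 1) = β i + τ i + 2 * Real.pi * k := fun i =>
    ang_add (ha (i + 1)) (edge_ne_zero h i) (edge_ne_zero h (i + 1))
  choose k hk using hk
  have hτ0 : ∀ i, turn v i ≤ 0 → τ i ≤ 0 := by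
    intro i hi
    obtain ⟨u, h1, h2⟩ := not_fold_sep h i
    exact ang_nonpos h1 h2 hi
  have pos_of : ∀ z : ℤ, -(2 * Real.pi) < 2 * Real.pi * z → 0 ≤ z := by
    intro z hz
    have : (-1 : ℝ) < z := by nlinarith
    have : (-1 : ℤ) < z := by exact_mod_cast this
    omega
  have hk0 : ∀ i, 0 ≤ k i := by
    intro i
    apply pos_of
    have e := hk i
    by_cases ht : 0 < turn v i
    · obtain ⟨g1, g2⟩ := hw i ht
      have := gα _ g2
      have := gβ _ g1
      have := ang_pos ht
      have : τ i < Real.pi := this.2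
      linarith
    · push Not at ht
      have := hτ0 i ht
      rcases lt_or_gt_of_ne (hg i) with hi | hi <;>
      rcases lt_or_gt_of_ne (hg (i + 1)) with hi' | hi'
      · have := bα _ hi'; have := bβ _ hi; linarith
      · have := gα _ hi'; have := bβ _ hi; linarith
      · have := bα _ hi'; have := gβ _ hi; linarith
      · have := gα _ hi'; have := gβ _ hi; linarith
  have hsum : ∑ i, k i = 0 := by
    have s1 : ∑ i, α (i + 1) = ∑ i, α i := sum_shift α
    rw [Finset.sum_congr rfl (fun i _ => hk i), Finset.sum_congr rfl (fun i _ => hαβ i),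
      Finset.sum_add_distrib, Finset.sum_add_distrib, Finset.sum_add_distrib,
      ← Finset.mul_sum] at s1
    have s2 : ∑ i, τ i = 2 * Real.pi := umlauf h hc
    have s3 : ∑ i, θ i = 2 * Real.pi := hW
    rw [s2, s3] at s1
    have : (∑ i, (k i : ℝ)) = 0 := by
      have : 2 * Real.pi * (∑ i, (k i : ℝ)) = 0 := by linarith
      rcases mul_eq_zero.1 this with h1 | h1
      · linarith
      · exact h1
    exact_mod_cast this
  have hkz : ∀ i, k i = 0 := fun i =>
    (Finset.sum_eq_zero_iff_of_nonneg (fun i _ => hk0 i)).1 hsum i (Finset.mem_univ i)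
  have hstep : ∀ i, ef v i x < 0 → ef v (i + 1) x < 0 := by
    intro i hi
    rcases lt_or_gt_of_ne (hg (i + 1)) with hi' | hi'
    · exact hi'
    · exfalso
      have ht : turn v i ≤ 0 := by
        by_contra ht
        push Not at ht
        linarith [(hw i ht).1]
      have := hτ0 i ht
      have e := hk i
      rw [hkz i] at e
      push_cast at e
      have := gα _ hi'; have := bβ _ hi
      linarith
  rcases lt_or_gt_of_ne (hg i) with hi | hi
  · exfalso
    have hall := cyc_ind (P := fun i => ef v i x < 0) hstep hi
    have : W v x ≤ 0 := Finset.sum_nonpos fun j _ => (bθ j (hall j)).2.le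
    linarith
  · exact hi

def WS (v : Fin n → Pt) : Set Pt :=
  {x | x ∈ polyInterior v ∧ ∀ j, 0 < turn v j → 0 < ef v j x ∧ 0 < ef v (j + 1) x}

lemma WS_open {v : Fin n → Pt} (h : IsSimplePolygon v) (hc : IsCCW v) : IsOpen (WS v) := by
  have : WS v = polyInterior v ∩ ⋂ j : {j // 0 < turn v j},
      ({x | 0 < ef v j x} ∩ {x | 0 < ef v (j + 1) x}) := by
    ext x
    simp [WS]
  rw [this]
  refine (int_open h hc).inter (isOpen_iInter_of_finite fun j => ?_)
  exact (isOpen_lt continuous_const (ef_continuous v _)).inter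
    (isOpen_lt continuous_const (ef_continuous v _))

lemma all_good {v : Fin n → Pt} (h : IsSimplePolygon v) (hc : IsCCW v) {x : Pt}
    (hx : x ∈ WS v) (i : Fin n) : 0 < ef v i x := by
  by_contra hi
  push Not at hi
  have hne : (WS v ∩ {p | ef v i p < 0}).Nonempty := by
    rcases hi.lt_or_eq with hi | hi
    · exact ⟨x, hx, hi⟩
    · obtain ⟨δ, hδ, hb⟩ := Metric.isOpen_iff.1 (WS_open h hc) x hx
      obtain ⟨p, hp, hps⟩ := side_near h i (s := -1) (by norm_num) hi hδ
      exact ⟨p, hb hp, by change ef v i p < 0; linarith⟩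
  have ho : IsOpen (WS v ∩ {p | ef v i p < 0}) :=
    (WS_open h hc).inter (isOpen_lt (ef_continuous v _) continuous_const)
  obtain ⟨p, hp, hpg⟩ := generic_det ho hne (fun k => v (k + 1) - v k) v (edge_ne_zero h)
  have := all_good_generic h hc hp.1.1 hpg hp.1.2 i
  have h2 : ef v i p < 0 := hp.2
  linarith

end KW
end

section
namespace KW
open Metric

variable {n : ℕ} [NeZero n]

lemma kc_mono {d a b a' b' : Pt} (ha : det2 d a = det2 d a') (hb : det2 d b = det2 d b')
    (h1 : 0 < det2 a b → 0 < det2 a' b') (h2 : 0 ≤ det2 a b → 0 ≤ det2 a' b') :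
    kc d a b ≤ kc d a' b' := by
  unfold kc
  rw [ha, hb]
  by_cases c1 : det2 d a' < 0 ∧ 0 < det2 d b'
  · have n1 : ¬ (det2 d b' < 0) := by linarith [c1.2]
    by_cases c2 : 0 < det2 a b
    · simp [c1, c2, h1 c2]
    · simp only [c1, c2, n1, and_false, false_and, if_false, true_and]
      split_ifs <;> norm_num
  · have n1 : ¬ (det2 d a' < 0 ∧ 0 < det2 d b' ∧ 0 < det2 a b) := fun h => c1 ⟨h.1, h.2.1⟩
    have n2 : ¬ (det2 d a' < 0 ∧ 0 < det2 d b' ∧ 0 < det2 a' b') := fun h => c1 ⟨h.1, h.2.1⟩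
    rw [if_neg n1, if_neg n2]
    by_cases c2 : det2 a b < 0
    · split_ifs <;> norm_num
      all_goals tauto
    · have c3 : ¬ det2 a' b' < 0 := not_lt.2 (h2 (not_lt.1 c2))
      simp [c2, c3]

lemma star {v : Fin n → Pt} (h : IsSimplePolygon v) (hc : IsCCW v) {x : Pt}
    (hx : x ∈ polyInterior v) (hg : ∀ i, 0 < ef v i x) : x ∈ polyKernel v := by
  have hpi := Real.pi_pos
  refine ⟨Or.inr hx, ?_⟩
  rintro y hy z ⟨a, b, ha, hb, hab, rfl⟩
  by_contra hz
  have hb0 : 0 < b := by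
    rcases hb.lt_or_eq with h1 | h1
    · exact h1
    · subst h1
      have : a = 1 := by linarith
      subst this
      simp only [one_smul, zero_smul, add_zero] at hz
      exact absurd (Or.inr hx) hz
  have hU : IsOpen {p : Pt | a • x + b • p ∈ (polyRegion v)ᶜ} := by
    have : Continuous fun p : Pt => a • x + b • p := by fun_prop
    exact (region_closed h hc).preimage this
  obtain ⟨ε, hε, hball⟩ := Metric.isOpen_iff.1 hU y hz
  obtain ⟨p, hp, hpg⟩ := generic_det (isOpen_ball.inter (int_open h hc))
    (region_dense h hc hy hε) (fun i => v i - x) (fun _ => x) (vert_ne ((mem_int h hc).1 hx).1)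
  have hq := (not_mem_region h hc).1 (hball hp.1)
  have hpI := (mem_int h hc).1 hp.2
  set q := a • x + b • p with hqd
  have ha' : a = 1 - b := by linarith
  have dp : ∀ i, det2 (p - x) (v i - p) = -det2 (v i - x) (p - x) := fun i => by
    simp only [det2, Prod.fst_sub, Prod.snd_sub]; ring
  have dq : ∀ i, det2 (p - x) (v i - q) = -det2 (v i - x) (p - x) := fun i => by
    rw [hqd, ha']
    simp only [det2, Prod.fst_sub, Prod.snd_sub, Prod.fst_add, Prod.snd_add, Prod.smul_fst,
      Prod.smul_snd, smul_eq_mul]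
    ring
  have hd : p - x ≠ 0 := by
    intro h0
    have := hpg 0
    rw [h0] at this
    simp [det2] at this
  have Wp := W_cross hpI.1 hd (fun i => by rw [dp]; exact neg_ne_zero.2 (hpg i))
  have Wq := W_cross hq.1 hd (fun i => by rw [dq]; exact neg_ne_zero.2 (hpg i))
  have d3 : ∀ x i, det2 (v i - x) (v (i + 1) - x) = ef v i x := fun x i => by
    simp only [ef, det2, Prod.fst_sub, Prod.snd_sub]; ring
  have hle : ∑ i, kc (p - x) (v i - p) (v (i + 1) - p) ≤
      ∑ i, kc (p - x) (v i - q) (v (i + 1) - q) := by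
    refine Finset.sum_le_sum fun i _ => kc_mono ?_ ?_ ?_ ?_
    · rw [dp, dq]
    · rw [dp, dq]
    · rw [d3, d3, hqd, ef_comb v i hab]
      intro h1
      have := mul_pos hb0 h1
      have := mul_nonneg ha (hg i).le
      linarith
    · rw [d3, d3, hqd, ef_comb v i hab]
      intro h1
      have := mul_nonneg hb h1
      have := mul_nonneg ha (hg i).le
      linarith
  have hle' : ((∑ i, kc (p - x) (v i - p) (v (i + 1) - p) : ℤ) : ℝ) ≤
      ((∑ i, kc (p - x) (v i - q) (v (i + 1) - q) : ℤ) : ℝ) := by exact_mod_cast hle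
  have := mul_le_mul_of_nonneg_left hle' (by positivity : 0 ≤ 2 * Real.pi)
  rw [← Wp, ← Wq, hpI.2, hq.2] at this
  linarith

/-- points of the interior of the kernel are strictly left of every edge -/
lemma ker_good {v : Fin n → Pt} (h : IsSimplePolygon v) (hc : IsCCW v) {x : Pt}
    (hx : x ∈ interior (polyKernel v)) (i : Fin n) : 0 < ef v i x := by
  by_contra hi
  push Not at hi
  obtain ⟨δ, hδ, hb⟩ := Metric.isOpen_iff.1 isOpen_interior x hx
  obtain ⟨p, hp, hpi⟩ : ∃ p ∈ interior (polyKernel v), ef v i p < 0 := by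
    rcases hi.lt_or_eq with hi | hi
    · exact ⟨x, hx, hi⟩
    · obtain ⟨p, hp, hps⟩ := side_near h i (s := -1) (by norm_num) hi hδ
      exact ⟨p, hb hp, by linarith⟩
  have hm := midpt_mem (v i) (v (i + 1))
  set m := midpoint ℝ (v i) (v (i + 1))
  have hms := openSegment_subset_segment _ _ _ hm
  obtain ⟨δ1, hδ1, d1⟩ := near_edge h hc hm
  obtain ⟨r, hr, hr1⟩ := near_end (a := m) (b := p) hδ1
  have hrR : r ∈ polyRegion v := by
    have hmR : m ∈ polyRegion v := Or.inl (Set.mem_iUnion.2 ⟨i, hms⟩)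
    refine (interior_subset hp).2 m hmR ?_
    rw [segment_symm]
    exact openSegment_subset_segment _ _ _ hr
  refine (d1 r hr1).2 ?_ hrR
  obtain ⟨a, b, ha, hb', hab, rfl⟩ := hr
  rw [ef_comb v i hab, ef_seg hms]
  nlinarith

lemma ker_int {v : Fin n → Pt} (h : IsSimplePolygon v) (hc : IsCCW v) {x : Pt}
    (hx : x ∈ interior (polyKernel v)) : x ∈ polyInterior v := by
  rcases (interior_subset hx).1 with hb | hb
  · obtain ⟨i, hi⟩ := Set.mem_iUnion.1 hb
    have := ker_good h hc hx i
    rw [ef_seg hi] at this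
    exact absurd this (lt_irrefl _)
  · exact hb

end KW
end

/-- Equation (5) (eq:kernconv).  For a simple counterclockwise polygon, the interior of
the kernel equals the intersection of the wedges of its strictly convex vertices. -/
theorem interior_kernel_eq_iInter_convex_wedges
    (n : ℕ) [NeZero n] (v : Fin n → Pt)
    (hsimple : IsSimplePolygon v) (hccw : IsCCW v) :
    interior (polyKernel v) =
      ⋂ i : Fin n, ⋂ (_ : StrictlyConvexAt v i), Wedge v i := by
  apply Set.Subset.antisymm
  · intro x hx
    have hg := KW.ker_good hsimple hccw hx
    have hI := KW.ker_int hsimple hccw hx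
    simp only [Set.mem_iInter]
    intro i _
    refine ⟨⟨?_, ?_⟩, hI⟩
    · have := hg (i - 1)
      unfold KW.ef at this
      rw [sub_add_cancel] at this
      exact this
    · have := hg i
      change det2 (v i - v (i + 1)) (x - v (i + 1)) < 0
      simp only [KW.ef, det2, Prod.fst_sub, Prod.snd_sub] at this ⊢
      linarith
  · have hsub : (⋂ i : Fin n, ⋂ (_ : StrictlyConvexAt v i), Wedge v i) ⊆ KW.WS v := by
      intro x hx
      simp only [Set.mem_iInter] at hx
      have hconv : ∀ j, 0 < KW.turn v j → x ∈ Wedge v (j + 1) := fun j hj =>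
        hx (j + 1) (by
          unfold StrictlyConvexAt
          rw [add_sub_cancel_right]
          exact hj)
      obtain ⟨j0, hj0, -⟩ := KW.farthest hsimple hccw
      refine ⟨(hconv j0 hj0).2, fun j hj => ?_⟩
      obtain ⟨⟨h1, h2⟩, -⟩ := hconv j hj
      constructor
      · rw [add_sub_cancel_right] at h1
        exact h1
      · change det2 (v (j + 1) - v (j + 1 + 1)) (x - v (j + 1 + 1)) < 0 at h2
        simp only [KW.ef, det2, Prod.fst_sub, Prod.snd_sub] at h2 ⊢
        linarith
    refine hsub.trans (interior_maximal ?_ (KW.WS_open hsimple hccw))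
    intro x hx
    exact KW.star hsimple hccw hx.1 (KW.all_good hsimple hccw hx)
end

section
/- Let P = abcdef be a simple hexagon, counterclockwise, in which a is the only reflex vertex other than possibly c or e, and suppose c does not see e (the segment ce is not contained in P). Then (i) Wedge(a) ∩ Wedge(c) ≠ ∅, and (ii) Wedge(a) ⊆ L(a, c). -/
open scoped BigOperators
/-- Orientation determinant. -/
noncomputable def ori (p q r : Pt) : ℝ := det2 (q - p) (r - p)

/-- Algebraic consequence of two segments being disjoint. -/
def NoCross (p q r s : Pt) : Prop :=
  ori p q r * ori p q s ≤ 0 → ori r s p * ori r s q ≤ 0 → ori p q r ≠ ori p q s → False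

theorem noCross_of_disjoint (p q r s : Pt)
    (h : ∀ x, x ∈ segment ℝ p q → x ∈ segment ℝ r s → False) : NoCross p q r s := by
  intro h1 h2 h3
  have key : ∀ u w : ℝ, u * w ≤ 0 → u ≠ w → 0 ≤ u / (u - w) ∧ 0 ≤ (-w) / (u - w) := by
    intro u w huw hne
    have hs : 0 < (u - w) ^ 2 := by
      have : u - w ≠ 0 := sub_ne_zero.2 hne
      positivity
    have hd : u - w ≠ 0 := sub_ne_zero.2 hne
    constructor
    · have : u / (u - w) = u * (u - w) / (u - w) ^ 2 := by field_simp
      rw [this]; apply div_nonneg _ hs.le; nlinarith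
    · have : (-w) / (u - w) = (-w) * (u - w) / (u - w) ^ 2 := by field_simp
      rw [this]; apply div_nonneg _ hs.le; nlinarith
  have hrel : ori r s p - ori r s q = -(ori p q r - ori p q s) := by
    simp only [ori, det2, Prod.fst_sub, Prod.snd_sub]; ring
  have hd : ori p q r - ori p q s ≠ 0 := sub_ne_zero.2 h3
  have h3' : ori r s p ≠ ori r s q := by
    intro h; apply hd; linarith
  have hd' : ori r s p - ori r s q ≠ 0 := sub_ne_zero.2 h3'
  obtain ⟨k1, k2⟩ := key _ _ h1 h3
  obtain ⟨k3, k4⟩ := key _ _ h2 h3'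
  have e1 : (-ori p q s) / (ori p q r - ori p q s) + ori p q r / (ori p q r - ori p q s) = 1 := by
    field_simp; ring
  have e2 : (-ori r s q) / (ori r s p - ori r s q) + ori r s p / (ori r s p - ori r s q) = 1 := by
    field_simp; ring
  refine h _ ⟨_, _, k4, k3, e2, rfl⟩ ⟨_, _, k2, k1, e1, ?_⟩
  rw [hrel]
  have : -(ori p q r - ori p q s) ≠ 0 := neg_ne_zero.2 hd
  ext <;> simp only [Prod.fst_add, Prod.snd_add, Prod.smul_fst, Prod.smul_snd, smul_eq_mul] <;>
    field_simp <;> simp only [ori, det2, Prod.fst_sub, Prod.snd_sub] <;> ring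

theorem core_norm (b1 b2 d1 d2 f1 f2 : ℝ) (hf2 : 0 < f2) (hb1 : 0 < b1) (hd : d1 + d2 < 1)
    (hfb : f2 * b1 ≤ f1 * b2)
    (X1 : ¬ (f1 + f2 > 1 ∧ f1 ≤ 0)) (X2 : ¬ (b1 + b2 > 1 ∧ b2 ≤ 0))
    (area : 0 < b1 + f2 - d1 - d2)
    (n_bc_ef : NoCross (b1, b2) (0, 1) (1, 0) (f1, f2))
    (n_fa_cd : NoCross (f1, f2) (0, 0) (0, 1) (d1, d2))
    (n_ef_cd : NoCross (1, 0) (f1, f2) (0, 1) (d1, d2))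
    (n_ab_de : NoCross (0, 0) (b1, b2) (d1, d2) (1, 0))
    (n_bc_de : NoCross (b1, b2) (0, 1) (d1, d2) (1, 0))
    (n_fa_de : NoCross (f1, f2) (0, 0) (d1, d2) (1, 0))
    (n_ab_cd : NoCross (0, 0) (b1, b2) (0, 1) (d1, d2)) :
    d1 < 0 ∧ d2 < 0 ∧ 0 < f1 ∧ 0 < b2 := by
  simp only [NoCross, ori, det2, Prod.mk_sub_mk] at *
  have hp : 0 < f1 * b2 := lt_of_lt_of_le (mul_pos hf2 hb1) hfb
  have hpos : 0 < f1 ∧ 0 < b2 := by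
    rcases pos_and_pos_or_neg_and_neg_of_mul_pos hp with h | ⟨h1, h2⟩
    · exact h
    · exfalso
      have x1 : f1 + f2 ≤ 1 := by
        by_contra h; exact X1 ⟨by linarith, h1.le⟩
      have x2 : b1 + b2 ≤ 1 := by
        by_contra h; exact X2 ⟨by linarith, h2.le⟩
      apply n_bc_ef
      · apply mul_nonpos_of_nonpos_of_nonneg <;> nlinarith
      · apply mul_nonpos_of_nonneg_of_nonpos <;> nlinarith
      · intro h; nlinarith
  obtain ⟨hf1, hb2⟩ := hpos
  -- the two crossing cases
  have case1 : ¬ (0 ≤ d1 ∧ d2 ≤ 0) := by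
    rintro ⟨g1, g2⟩
    have q1 : 0 ≤ f1 * (-d2) := mul_nonneg hf1.le (by linarith)
    have q2 : 0 ≤ f2 * d1 := mul_nonneg hf2.le g1
    have hcdf : d1 * f2 - d1 - d2 * f1 + f1 < 0 := by
      by_contra h
      apply n_fa_cd
      · apply mul_nonpos_of_nonpos_of_nonneg <;> linarith
      · apply mul_nonpos_of_nonneg_of_nonpos <;> linarith
      · intro h'; linarith
    have hsum : 0 < (f1 + f2 - 1) * (-d2) + (f1 * d2 - d2 - f2 * d1 + f2) := by
      have : 0 < f2 * (1 - d1 - d2) := mul_pos hf2 (by linarith)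
      linarith
    have hc : f1 + f2 - 1 ≤ 0 := by
      by_contra h
      have : 0 ≤ d1 * (f1 + f2 - 1) := mul_nonneg g1 (by linarith)
      have : 0 < f1 * (1 - d1 - d2) := mul_pos hf1 (by linarith)
      linarith
    have hdd : 0 < f1 * d2 - d2 - f2 * d1 + f2 := by
      have : 0 ≤ (1 - f1 - f2) * (-d2) := mul_nonneg (by linarith) (by linarith)
      linarith
    apply n_ef_cd
    · apply mul_nonpos_of_nonpos_of_nonneg <;> linarith
    · apply mul_nonpos_of_nonneg_of_nonpos <;> linarith
    · intro h'; linarith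
  have case2 : ¬ (d1 ≤ 0 ∧ 0 ≤ d2) := by
    rintro ⟨g2, g1⟩
    have q1 : 0 ≤ b2 * (-d1) := mul_nonneg hb2.le (by linarith)
    have q2 : 0 ≤ b1 * d2 := mul_nonneg hb1.le g1
    have hcdf : d2 * b1 - d2 - d1 * b2 + b2 < 0 := by
      by_contra h
      apply n_ab_de
      · apply mul_nonpos_of_nonneg_of_nonpos <;> linarith
      · apply mul_nonpos_of_nonpos_of_nonneg <;> linarith
      · intro h'; linarith
    have hsum : 0 < (b2 + b1 - 1) * (-d1) + (b2 * d1 - d1 - b1 * d2 + b1) := by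
      have : 0 < b1 * (1 - d2 - d1) := mul_pos hb1 (by linarith)
      linarith
    have hc : b2 + b1 - 1 ≤ 0 := by
      by_contra h
      have : 0 ≤ d2 * (b2 + b1 - 1) := mul_nonneg g1 (by linarith)
      have : 0 < b2 * (1 - d2 - d1) := mul_pos hb2 (by linarith)
      linarith
    have hdd : 0 < b2 * d1 - d1 - b1 * d2 + b1 := by
      have : 0 ≤ (1 - b2 - b1) * (-d1) := mul_nonneg (by linarith) (by linarith)
      linarith
    apply n_bc_de
    · apply mul_nonpos_of_nonneg_of_nonpos <;> linarith
    · apply mul_nonpos_of_nonpos_of_nonneg <;> linarith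
    · intro h'; linarith
  -- the star case
  have case3 : ¬ (0 < d1 ∧ 0 < d2) := by
    rintro ⟨g1, g2⟩
    have A : 0 ≤ f1 * d2 - f2 * d1 → f2 * (1 - d1) < d2 * (1 - f1) := by
      intro hA
      by_contra h
      apply n_fa_de
      · apply mul_nonpos_of_nonpos_of_nonneg <;> linarith
      · apply mul_nonpos_of_nonneg_of_nonpos <;> linarith
      · intro h'; linarith
    have A' : 0 ≤ b2 * d1 - b1 * d2 → b1 * (1 - d2) < d1 * (1 - b2) := by
      intro hA
      by_contra h
      apply n_ab_cd
      · apply mul_nonpos_of_nonneg_of_nonpos <;> linarith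
      · apply mul_nonpos_of_nonpos_of_nonneg <;> linarith
      · intro h'; linarith
    rcases le_or_gt 0 (f1 * d2 - f2 * d1) with hA | hA
    · have P := A hA
      rcases le_or_gt 0 (b2 * d1 - b1 * d2) with hB | hB
      · have := A' hB
        linarith
      · have Q : b2 * (1 - d1) < d2 * (1 - b1) := by
          by_contra h
          apply n_ab_de
          · apply mul_nonpos_of_nonneg_of_nonpos <;> linarith
          · apply mul_nonpos_of_nonpos_of_nonneg <;> linarith
          · intro h'; linarith
        have hbb : b1 + b2 < 1 := by
          have : 0 < b2 * (1 - d1 - d2) := mul_pos hb2 (by linarith)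
          have : 0 < d2 * (1 - b1 - b2) := by linarith
          have := (mul_pos_iff_of_pos_left g2).1 this
          linarith
        have R : b1 * (1 - d2) < d1 * (1 - b2) := by
          by_contra h
          apply n_bc_de
          · apply mul_nonpos_of_nonneg_of_nonpos <;> linarith
          · apply mul_nonpos_of_nonpos_of_nonneg <;> linarith
          · intro h'; linarith
        rcases le_or_gt f2 b2 with hh | hh
        · linarith
        · have k1 : (f2 - b2) * b1 ≤ (f1 - b1) * b2 := by linarith
          have k2 : 0 < (f2 - b2) * (b1 * d2 - b2 * d1) := mul_pos (by linarith) (by linarith)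
          have k3 : (f2 - b2) * b1 * d2 ≤ (f1 - b1) * b2 * d2 := mul_le_mul_of_nonneg_right k1 g2.le
          have k4 : 0 < b2 * (d2 * (f1 - b1) - d1 * (f2 - b2)) := by linarith
          have k5 := (mul_pos_iff_of_pos_left hb2).1 k4
          linarith
    · rcases le_or_gt 0 (b2 * d1 - b1 * d2) with hB | hB
      · have P := A' hB
        have Q : f1 * (1 - d2) < d1 * (1 - f2) := by
          by_contra h
          apply n_fa_cd
          · apply mul_nonpos_of_nonpos_of_nonneg <;> linarith
          · apply mul_nonpos_of_nonneg_of_nonpos <;> linarith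
          · intro h'; linarith
        have hbb : f2 + f1 < 1 := by
          have : 0 < f1 * (1 - d2 - d1) := mul_pos hf1 (by linarith)
          have : 0 < d1 * (1 - f2 - f1) := by linarith
          have := (mul_pos_iff_of_pos_left g1).1 this
          linarith
        have R : f2 * (1 - d1) < d2 * (1 - f1) := by
          by_contra h
          apply n_ef_cd
          · apply mul_nonpos_of_nonpos_of_nonneg <;> linarith
          · apply mul_nonpos_of_nonneg_of_nonpos <;> linarith
          · intro h'; linarith
        rcases le_or_gt b1 f1 with hh | hh
        · linarith
        · have k1 : (b1 - f1) * f2 ≤ (b2 - f2) * f1 := by linarith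
          have k2 : 0 < (b1 - f1) * (f2 * d1 - f1 * d2) := mul_pos (by linarith) (by linarith)
          have k3 : (b1 - f1) * f2 * d1 ≤ (b2 - f2) * f1 * d1 := mul_le_mul_of_nonneg_right k1 g1.le
          have k4 : 0 < f1 * (d1 * (b2 - f2) - d2 * (b1 - f1)) := by linarith
          have k5 := (mul_pos_iff_of_pos_left hf1).1 k4
          linarith
      · have k1 : 0 < b1 * (f2 * d1 - f1 * d2) := mul_pos hb1 (by linarith)
        have k2 : 0 < f1 * (b1 * d2 - b2 * d1) := mul_pos hf1 (by linarith)
        have k3 : 0 ≤ d1 * (f1 * b2 - f2 * b1) := mul_nonneg g1.le (by linarith)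
        linarith
  refine ⟨?_, ?_, hf1, hb2⟩
  · by_contra h
    rcases le_or_gt d2 0 with h' | h'
    · exact case1 ⟨by linarith, h'⟩
    · rcases le_or_gt d1 0 with h'' | h''
      · exact case2 ⟨h'', h'.le⟩
      · exact case3 ⟨h'', h'⟩
  · by_contra h
    rcases le_or_gt d1 0 with h' | h'
    · exact case2 ⟨h', by linarith⟩
    · rcases le_or_gt d2 0 with h'' | h''
      · exact case1 ⟨h'.le, h''⟩
      · exact case3 ⟨h', h''⟩

theorem exists_coords (a c e p : Pt) (h : 0 < ori a e c) :
    ∃ p1 p2 : ℝ, p = a + p1 • (e - a) + p2 • (c - a) := by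
  refine ⟨ori a p c / ori a e c, ori a e p / ori a e c, ?_⟩
  have h' := h.ne'
  ext <;> simp only [Prod.fst_add, Prod.snd_add, Prod.smul_fst, Prod.smul_snd, smul_eq_mul,
    Prod.fst_sub, Prod.snd_sub] <;>
    field_simp <;> simp only [ori, det2, Prod.fst_sub, Prod.snd_sub] <;> ring

/-- Affine chart sending the standard frame to `a`, `e`, `c`. -/
noncomputable def chart (a e c p : Pt) : Pt := a + p.1 • (e - a) + p.2 • (c - a)

theorem ori_chart (a e c p q r : Pt) :
    ori (chart a e c p) (chart a e c q) (chart a e c r) = ori a e c * ori p q r := by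
  simp only [ori, det2, chart, Prod.fst_add, Prod.snd_add, Prod.smul_fst, Prod.smul_snd,
    smul_eq_mul, Prod.fst_sub, Prod.snd_sub]
  ring

theorem noCross_chart (a e c p q r s : Pt) (h : 0 < ori a e c)
    (hn : NoCross (chart a e c p) (chart a e c q) (chart a e c r) (chart a e c s)) :
    NoCross p q r s := by
  intro h1 h2 h3
  apply hn
  · simp only [ori_chart]
    have : 0 < ori a e c * ori a e c := mul_pos h h
    nlinarith
  · simp only [ori_chart]
    have : 0 < ori a e c * ori a e c := mul_pos h h
    nlinarith
  · simp only [ori_chart]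
    intro h'
    exact h3 (mul_left_cancel₀ h.ne' h')

theorem core (a b c d e f : Pt) (habc : 0 < ori a b c) (hcde : 0 < ori c d e)
    (hefa : 0 < ori e f a) (hfab : ori f a b ≤ 0) (hcea : ori c e a < 0)
    (X1 : ¬ (0 < ori e f c ∧ 0 ≤ ori f a c)) (X2 : ¬ (0 < ori b c e ∧ 0 ≤ ori a b e))
    (area : 0 < ori a c e + ori a b c + ori c d e + ori e f a)
    (n_bc_ef : NoCross b c e f)
    (n_fa_cd : NoCross f a c d)
    (n_ef_cd : NoCross e f c d)
    (n_ab_de : NoCross a b d e)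
    (n_bc_de : NoCross b c d e)
    (n_fa_de : NoCross f a d e)
    (n_ab_cd : NoCross a b c d) :
    0 < ori c d a ∧ 0 < ori d e a ∧ ori f a c < 0 ∧ ori a b e < 0 := by
  have hD : 0 < ori a e c := by
    have : ori a e c = - ori c e a := by
      simp only [ori, det2, Prod.fst_sub, Prod.snd_sub]; ring
    linarith
  obtain ⟨b1, b2, hb⟩ : ∃ b1 b2, b = chart a e c (b1, b2) := exists_coords a c e b hD
  obtain ⟨d1, d2, hd⟩ : ∃ d1 d2, d = chart a e c (d1, d2) := exists_coords a c e d hD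
  obtain ⟨f1, f2, hf⟩ : ∃ f1 f2, f = chart a e c (f1, f2) := exists_coords a c e f hD
  have ha : a = chart a e c (0, 0) := by simp [chart]
  have he : e = chart a e c (1, 0) := by simp [chart]
  have hc : c = chart a e c (0, 1) := by simp [chart]
  have O : ∀ p q r P Q R : Pt, P = chart a e c p → Q = chart a e c q → R = chart a e c r →
      ori P Q R = ori a e c * ori p q r := by
    intro p q r P Q R hP hQ hR
    rw [hP, hQ, hR, ori_chart]
  have N : ∀ p q r s P Q R S : Pt, P = chart a e c p → Q = chart a e c q → R = chart a e c r →
      S = chart a e c s → NoCross P Q R S → NoCross p q r s := by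
    intro p q r s P Q R S hP hQ hR hS h
    rw [hP, hQ, hR, hS] at h
    exact noCross_chart a e c p q r s hD h
  have o_abc := O _ _ _ _ _ _ ha hb hc
  have o_cde := O _ _ _ _ _ _ hc hd he
  have o_efa := O _ _ _ _ _ _ he hf ha
  have o_fab := O _ _ _ _ _ _ hf ha hb
  have o_efc := O _ _ _ _ _ _ he hf hc
  have o_fac := O _ _ _ _ _ _ hf ha hc
  have o_bce := O _ _ _ _ _ _ hb hc he
  have o_abe := O _ _ _ _ _ _ ha hb he
  have o_ace := O _ _ _ _ _ _ ha hc he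
  have o_cda := O _ _ _ _ _ _ hc hd ha
  have o_dea := O _ _ _ _ _ _ hd he ha
  generalize ori a e c = D at *
  rw [o_abc, mul_pos_iff_of_pos_left hD] at habc
  rw [o_cde, mul_pos_iff_of_pos_left hD] at hcde
  rw [o_efa, mul_pos_iff_of_pos_left hD] at hefa
  rw [o_efc, o_fac, mul_pos_iff_of_pos_left hD, mul_nonneg_iff_of_pos_left hD] at X1
  rw [o_bce, o_abe, mul_pos_iff_of_pos_left hD, mul_nonneg_iff_of_pos_left hD] at X2
  rw [o_fab] at hfab
  have hfab' := nonpos_of_mul_nonpos_right hfab hD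
  rw [o_ace, o_abc, o_cde, o_efa, ← mul_add, ← mul_add, ← mul_add,
    mul_pos_iff_of_pos_left hD] at area
  rw [o_cda, o_dea, o_fac, o_abe]
  have res := core_norm b1 b2 d1 d2 f1 f2 ?_ ?_ ?_ ?_ ?_ ?_ ?_
    (N _ _ _ _ _ _ _ _ hb hc he hf n_bc_ef)
    (N _ _ _ _ _ _ _ _ hf ha hc hd n_fa_cd)
    (N _ _ _ _ _ _ _ _ he hf hc hd n_ef_cd)
    (N _ _ _ _ _ _ _ _ ha hb hd he n_ab_de)
    (N _ _ _ _ _ _ _ _ hb hc hd he n_bc_de)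
    (N _ _ _ _ _ _ _ _ hf ha hd he n_fa_de)
    (N _ _ _ _ _ _ _ _ ha hb hc hd n_ab_cd)
  · obtain ⟨r1, r2, r3, r4⟩ := res
    simp only [ori, det2, Prod.mk_sub_mk]
    refine ⟨mul_pos hD ?_, mul_pos hD ?_, mul_neg_of_pos_of_neg hD ?_, mul_neg_of_pos_of_neg hD ?_⟩ <;>
      linarith
  all_goals simp only [ori, det2, Prod.mk_sub_mk] at habc hcde hefa X1 X2 hfab' area
  · linarith
  · linarith
  · linarith
  · linarith
  · rintro ⟨h1, h2⟩; exact X1 ⟨by linarith, by linarith⟩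
  · rintro ⟨h1, h2⟩; exact X2 ⟨by linarith, by linarith⟩
  · linarith

/-! ### Winding numbers -/

/-- The plane as the complex numbers. -/
noncomputable def toC (p : Pt) : ℂ := ⟨p.1, p.2⟩

/-- Signed angle at `x` from `p` to `q`. -/
noncomputable def ang (x p q : Pt) : ℝ := Complex.arg ((toC q - toC x) / (toC p - toC x))

theorem toC_inj {p q : Pt} (h : toC p = toC q) : p = q := by
  have h1 := congrArg Complex.re h
  have h2 := congrArg Complex.im h
  exact Prod.ext h1 h2

theorem toC_sub_ne {p q : Pt} (h : p ≠ q) : toC p - toC q ≠ 0 :=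
  sub_ne_zero.2 fun h' => h (toC_inj h')

theorem normSq_pos' {p x : Pt} (h : x ≠ p) : 0 < (p.1 - x.1) ^ 2 + (p.2 - x.2) ^ 2 := by
  by_contra hc
  have h1 : p.1 - x.1 = 0 := by nlinarith [sq_nonneg (p.1 - x.1), sq_nonneg (p.2 - x.2)]
  have h2 : p.2 - x.2 = 0 := by nlinarith [sq_nonneg (p.1 - x.1), sq_nonneg (p.2 - x.2)]
  exact h (Prod.ext (by linarith) (by linarith))

theorem ang_im (x p q : Pt) : ((toC q - toC x) / (toC p - toC x)).im =
    ori x p q / ((p.1 - x.1) ^ 2 + (p.2 - x.2) ^ 2) := by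
  simp only [Complex.div_im, toC, Complex.sub_im, Complex.sub_re, Complex.normSq_apply, ori, det2,
    Prod.fst_sub, Prod.snd_sub]
  ring

theorem ang_re (x p q : Pt) : ((toC q - toC x) / (toC p - toC x)).re =
    ((p.1 - x.1) * (q.1 - x.1) + (p.2 - x.2) * (q.2 - x.2)) /
      ((p.1 - x.1) ^ 2 + (p.2 - x.2) ^ 2) := by
  simp only [Complex.div_re, toC, Complex.sub_im, Complex.sub_re, Complex.normSq_apply]
  ring

theorem ang_nonneg {x p q : Pt} (h : 0 ≤ ori x p q) : 0 ≤ ang x p q := by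
  rw [ang, Complex.arg_nonneg_iff, ang_im]
  positivity

theorem ang_pos {x p q : Pt} (h : 0 < ori x p q) : 0 < ang x p q := by
  have hx : x ≠ p := by
    rintro rfl
    simp [ori, det2] at h
  have h1 := normSq_pos' hx
  rcases (ang_nonneg h.le).lt_or_eq with h2 | h2
  · exact h2
  · exfalso
    have := (Complex.arg_eq_zero_iff.1 h2.symm).2
    rw [ang_im] at this
    have : 0 < ori x p q / ((p.1 - x.1) ^ 2 + (p.2 - x.2) ^ 2) := by positivity
    linarith

theorem ang_neg {x p q : Pt} (h : ori x p q < 0) : ang x p q < 0 := by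
  have hx : x ≠ p := by
    rintro rfl
    simp [ori, det2] at h
  have h1 := normSq_pos' hx
  rw [ang, Complex.arg_neg_iff, ang_im]
  exact div_neg_of_neg_of_pos h h1

theorem ang_gt (x p q : Pt) : -Real.pi < ang x p q := Complex.neg_pi_lt_arg _

theorem mem_segment_of_ang {x p q : Pt} (h : ang x p q = Real.pi) : x ∈ segment ℝ p q := by
  obtain ⟨h1, h2⟩ := Complex.arg_eq_pi_iff.1 h
  by_cases hx : x = p
  · rw [hx]; exact left_mem_segment ℝ p q
  have hp := normSq_pos' hx
  set k := ((toC q - toC x) / (toC p - toC x)).re with hk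
  have hz : (toC q - toC x) / (toC p - toC x) = (k : ℂ) := Complex.ext (by simp [hk]) (by simpa using h2)
  have hne : toC p - toC x ≠ 0 := toC_sub_ne (Ne.symm hx)
  rw [div_eq_iff hne] at hz
  have r1 := congrArg Complex.re hz
  have r2 := congrArg Complex.im hz
  simp [toC] at r1 r2
  have hk1 : 0 < 1 - k := by linarith
  refine ⟨-k / (1 - k), 1 / (1 - k), div_nonneg (by linarith) hk1.le, by positivity, by field_simp; ring, ?_⟩
  ext
  · simp only [Prod.fst_add, Prod.smul_fst, smul_eq_mul]
    field_simp
    linarith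
  · simp only [Prod.snd_add, Prod.smul_snd, smul_eq_mul]
    field_simp
    linarith

theorem ang_lt {x p q : Pt} (h : x ∉ segment ℝ p q) : ang x p q < Real.pi :=
  lt_of_le_of_ne (Complex.arg_le_pi _) fun h' => h (mem_segment_of_ang h')

theorem ang_nonpos {x p q : Pt} (h : ori x p q ≤ 0) (hx : x ∉ segment ℝ p q) : ang x p q ≤ 0 := by
  rcases h.lt_or_eq with h1 | h1
  · exact (ang_neg h1).le
  · by_contra hc
    have him : ((toC q - toC x) / (toC p - toC x)).im = 0 := by rw [ang_im, h1, zero_div]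
    rcases le_or_gt 0 ((toC q - toC x) / (toC p - toC x)).re with h2 | h2
    · exact hc (le_of_eq (Complex.arg_eq_zero_iff.2 ⟨h2, him⟩))
    · exact hx (mem_segment_of_ang (Complex.arg_eq_pi_iff.2 ⟨h2, him⟩))

theorem ang_symm {x p q : Pt} (h : x ∉ segment ℝ p q) : ang x q p = - ang x p q := by
  have h1 := (ang_lt h).ne
  rw [ang] at h1
  rw [ang, ang, ← inv_div, Complex.arg_inv, if_neg h1]

theorem ang_coe {x p q : Pt} (hp : p ≠ x) (hq : q ≠ x) :
    (ang x p q : Real.Angle) = (Complex.arg (toC q - toC x) : Real.Angle) -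
      (Complex.arg (toC p - toC x) : Real.Angle) :=
  Complex.arg_div_coe_angle (toC_sub_ne hq) (toC_sub_ne hp)

theorem int_of_coe {t : ℝ} (h : (t : Real.Angle) = 0) : ∃ n : ℤ, t = n * (2 * Real.pi) := by
  obtain ⟨n, hn⟩ := Real.Angle.coe_eq_zero_iff.1 h
  exact ⟨n, by rw [← hn]; simp⟩

theorem nonneg_of_int {t : ℝ} (h : ∃ n : ℤ, t = n * (2 * Real.pi)) (ht : -(2 * Real.pi) < t) :
    0 ≤ t := by
  obtain ⟨n, rfl⟩ := h
  have hpi := Real.pi_pos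
  have : (-1 : ℝ) < n := by
    by_contra hc
    nlinarith
  have : (-1 : ℤ) < n := by exact_mod_cast this
  have : (0 : ℝ) ≤ n := by exact_mod_cast (by omega : (0 : ℤ) ≤ n)
  positivity

theorem zero_of_int {t : ℝ} (h : ∃ n : ℤ, t = n * (2 * Real.pi)) (ht : -(2 * Real.pi) < t)
    (ht' : t < 2 * Real.pi) : t = 0 := by
  have h1 := nonneg_of_int h ht
  have h2 : 0 ≤ -t := by
    apply nonneg_of_int _ (by linarith)
    obtain ⟨n, hn⟩ := h
    exact ⟨-n, by rw [hn]; push_cast; ring⟩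
  linarith

/-- Angle sum of a triangle. -/
noncomputable def T3 (x p q r : Pt) : ℝ := ang x p q + ang x q r + ang x r p

theorem T3_int {x p q r : Pt} (hp : p ≠ x) (hq : q ≠ x) (hr : r ≠ x) :
    ∃ n : ℤ, T3 x p q r = n * (2 * Real.pi) := by
  apply int_of_coe
  simp only [T3, Real.Angle.coe_add, ang_coe hp hq, ang_coe hq hr, ang_coe hr hp]
  abel

theorem T3_nonneg {x p q r : Pt} (hp : p ≠ x) (hq : q ≠ x) (hr : r ≠ x)
    (h : 0 ≤ ori x p q ∨ 0 ≤ ori x q r ∨ 0 ≤ ori x r p) : 0 ≤ T3 x p q r := by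
  apply nonneg_of_int (T3_int hp hq hr)
  have h1 := ang_gt x p q
  have h2 := ang_gt x q r
  have h3 := ang_gt x r p
  unfold T3
  rcases h with h | h | h <;> have := ang_nonneg h <;> linarith

theorem T3_nonneg' {x p q r : Pt} (hp : p ≠ x) (hq : q ≠ x) (hr : r ≠ x)
    (h : 0 ≤ ori p q r) : 0 ≤ T3 x p q r := by
  apply T3_nonneg hp hq hr
  by_contra hc
  push Not at hc
  have : ori x p q + ori x q r + ori x r p = ori p q r := by
    simp only [ori, det2, Prod.fst_sub, Prod.snd_sub]; ring
  linarith [hc.1, hc.2.1, hc.2.2]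

theorem T3_pos {x p q r : Pt} (h1 : 0 < ori x p q) (h2 : 0 < ori x q r) (h3 : 0 < ori x r p) :
    0 < T3 x p q r := by
  have := ang_pos h1
  have := ang_pos h2
  have := ang_pos h3
  unfold T3
  linarith

theorem two_nonneg {x p q r : Pt} (hp : p ≠ x) (hq : q ≠ x) (hr : r ≠ x)
    (h : 0 ≤ ori p q r) (h' : ori x r p ≤ 0) : 0 ≤ ang x p q + ang x q r := by
  by_cases hx : x ∈ segment ℝ r p
  · obtain ⟨s, t, hs, ht, hst, rfl⟩ := hx
    have hs' : s = 1 - t := by linarith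
    apply add_nonneg <;> apply ang_nonneg
    · have : ori (s • r + t • p) p q = s * ori p q r := by
        subst hs'
        simp only [ori, det2, Prod.fst_sub, Prod.snd_sub, Prod.fst_add, Prod.snd_add,
          Prod.smul_fst, Prod.smul_snd, smul_eq_mul]; ring
      rw [this]; positivity
    · have : ori (s • r + t • p) q r = t * ori p q r := by
        subst hs'
        simp only [ori, det2, Prod.fst_sub, Prod.snd_sub, Prod.fst_add, Prod.snd_add,
          Prod.smul_fst, Prod.smul_snd, smul_eq_mul]; ring
      rw [this]; positivity
  · have h1 := T3_nonneg' hp hq hr h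
    have h2 := ang_nonpos h' hx
    unfold T3 at h1
    linarith

theorem continuous_toC : Continuous toC := Complex.equivRealProdCLM.symm.continuous

theorem ang_continuousAt {x p q : Pt} (h : x ∉ segment ℝ p q) :
    ContinuousAt (fun y => ang y p q) x := by
  have hp : p ≠ x := by rintro rfl; exact h (left_mem_segment ℝ _ _)
  have hq : q ≠ x := by rintro rfl; exact h (right_mem_segment ℝ _ _)
  have h1 : ContinuousAt (fun y => (toC q - toC y) / (toC p - toC y)) x :=
    (continuousAt_const.sub continuous_toC.continuousAt).div
      (continuousAt_const.sub continuous_toC.continuousAt) (toC_sub_ne hp)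
  have h2 : (toC q - toC x) / (toC p - toC x) ∈ Complex.slitPlane := by
    rw [Complex.mem_slitPlane_iff_arg]
    exact ⟨(ang_lt h).ne, div_ne_zero (toC_sub_ne hq) (toC_sub_ne hp)⟩
  exact ContinuousAt.comp (f := fun y => (toC q - toC y) / (toC p - toC y))
    (g := Complex.arg) (Complex.continuousAt_arg h2) h1

theorem ang_tendsto (p q : Pt) :
    Filter.Tendsto (fun y => ang y p q) (Bornology.cobounded Pt) (nhds 0) := by
  have h0 : Filter.Tendsto (fun y => toC p - toC y) (Bornology.cobounded Pt)
      (Bornology.cobounded ℂ) := by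
    rw [Metric.cobounded_eq_cocompact, Metric.cobounded_eq_cocompact]
    have := ((Complex.equivRealProdCLM.symm.toHomeomorph.trans
      (Homeomorph.subLeft (toC p))).isClosedEmbedding).tendsto_cocompact
    exact this
  have h1 : Filter.Tendsto (fun y => 1 + (toC q - toC p) * (toC p - toC y)⁻¹)
      (Bornology.cobounded Pt) (nhds (1 + (toC q - toC p) * 0)) :=
    (((Filter.tendsto_inv₀_cobounded (α := ℂ)).comp h0).const_mul _).const_add 1
  have h2 : Filter.Tendsto (fun y => (toC q - toC y) / (toC p - toC y))
      (Bornology.cobounded Pt) (nhds 1) := by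
    have h3 : (1 + (toC q - toC p) * 0) = 1 := by ring
    rw [h3] at h1
    refine h1.congr' ?_
    have : ∀ᶠ y in Bornology.cobounded Pt, y ≠ p := by
      have : Bornology.IsBounded ({p} : Set Pt) := Bornology.isBounded_singleton
      rw [Bornology.isBounded_def] at this
      exact this
    filter_upwards [this] with y hy
    have := toC_sub_ne (Ne.symm hy)
    field_simp
    ring
  have h4 : ContinuousAt Complex.arg 1 := Complex.continuousAt_arg Complex.one_mem_slitPlane
  have := h4.tendsto.comp h2
  rw [Complex.arg_one] at this
  exact this

/-- Total angle of a hexagon. -/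
noncomputable def W6 (v : Fin 6 → Pt) (x : Pt) : ℝ := ∑ i : Fin 6, ang x (v i) (v (i + 1))

theorem not_mem_seg {v : Fin 6 → Pt} {x : Pt} (h : x ∉ polyBoundary v) (i : Fin 6) :
    x ∉ segment ℝ (v i) (v (i + 1)) := fun h' => h (Set.mem_iUnion.2 ⟨i, h'⟩)

theorem ne_vertex {v : Fin 6 → Pt} {x : Pt} (h : x ∉ polyBoundary v) (i : Fin 6) : v i ≠ x := by
  rintro rfl
  exact not_mem_seg h i (left_mem_segment ℝ _ _)

theorem W6_int {v : Fin 6 → Pt} {x : Pt} (h : x ∉ polyBoundary v) :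
    ∃ n : ℤ, W6 v x = n * (2 * Real.pi) := by
  apply int_of_coe
  have h0 := ne_vertex h
  have : ((W6 v x : ℝ) : Real.Angle) = ∑ i : Fin 6, (ang x (v i) (v (i + 1)) : Real.Angle) := by
    simp only [W6, Fin.sum_univ_six, Real.Angle.coe_add]
  rw [this]
  simp only [ang_coe (h0 _) (h0 _), Finset.sum_sub_distrib]
  rw [sub_eq_zero]
  exact Equiv.sum_comp (Equiv.addRight (1 : Fin 6))
    (fun i => (Complex.arg (toC (v i) - toC x) : Real.Angle))

theorem mem_interior_of_W6 {v : Fin 6 → Pt} {x : Pt} (h : x ∉ polyBoundary v)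
    (hW : W6 v x ≠ 0) : x ∈ polyInterior v := by
  refine ⟨h, ?_⟩
  have hpi := Real.pi_pos
  have hsub := connectedComponentIn_subset (polyBoundary v)ᶜ x
  have hcont : ContinuousOn (W6 v) (connectedComponentIn (polyBoundary v)ᶜ x) := by
    intro y hy
    apply ContinuousAt.continuousWithinAt
    have hy' : y ∉ polyBoundary v := hsub hy
    show ContinuousAt (fun y => ∑ i : Fin 6, ang y (v i) (v (i + 1))) y
    exact tendsto_finsetSum _ fun i _ => ang_continuousAt (not_mem_seg hy' i)
  have hne : ∀ y ∈ connectedComponentIn (polyBoundary v)ᶜ x, W6 v y ≠ 0 := by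
    intro y hy hy0
    have hpre : IsPreconnected (connectedComponentIn (polyBoundary v)ᶜ x) :=
      isPreconnected_connectedComponentIn
    have hx : x ∈ connectedComponentIn (polyBoundary v)ᶜ x := mem_connectedComponentIn h
    have hpi' : ∀ z ∈ connectedComponentIn (polyBoundary v)ᶜ x,
        W6 v z ≠ Real.pi ∧ W6 v z ≠ -Real.pi := by
      intro z hz
      have hi := W6_int (hsub hz)
      constructor <;> intro h' <;>
        · have := zero_of_int hi (by rw [h']; linarith) (by rw [h']; linarith)
          linarith
    have hix := W6_int h
    rcases lt_or_gt_of_ne hW with h1 | h1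
    · have h2 : W6 v x ≤ -Real.pi := by
        by_contra hc
        have := zero_of_int hix (by linarith) (by linarith)
        exact hW this
      obtain ⟨z, hz, hz'⟩ := hpre.intermediate_value hx hy hcont (⟨h2, by linarith⟩)
      exact (hpi' z hz).2 hz'
    · have h2 : Real.pi ≤ W6 v x := by
        by_contra hc
        have := zero_of_int hix (by linarith) (by linarith)
        exact hW this
      obtain ⟨z, hz, hz'⟩ := hpre.intermediate_value hy hx hcont (⟨by linarith, h2⟩)
      exact (hpi' z hz).1 hz'
  have hlim : Filter.Tendsto (W6 v) (Bornology.cobounded Pt) (nhds 0) := by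
    have : Filter.Tendsto (fun y => ∑ i : Fin 6, ang y (v i) (v (i + 1)))
        (Bornology.cobounded Pt) (nhds (∑ i : Fin 6, (0 : ℝ))) :=
      tendsto_finsetSum _ fun i _ => ang_tendsto _ _
    rw [Finset.sum_const_zero] at this
    exact this
  have hsmall : ∀ᶠ y in Bornology.cobounded Pt, W6 v y ∈ Set.Ioo (-Real.pi) Real.pi :=
    hlim (Ioo_mem_nhds (by linarith) hpi)
  rw [Bornology.isBounded_def]
  filter_upwards [hsmall] with y hy hyc
  exact hne y hyc (zero_of_int (W6_int (hsub hyc)) (by linarith [hy.1]) (by linarith [hy.2]))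

theorem W6_eq (v : Fin 6 → Pt) (x : Pt) : W6 v x = ang x (v 0) (v 1) + ang x (v 1) (v 2) +
    ang x (v 2) (v 3) + ang x (v 3) (v 4) + ang x (v 4) (v 5) + ang x (v 5) (v 0) := by
  rw [W6, Fin.sum_univ_six]
  rfl

theorem ori_rot (p q r : Pt) : ori q r p = ori p q r := by
  simp only [ori, det2, Prod.fst_sub, Prod.snd_sub]; ring

theorem ori_swap (p q r : Pt) : ori p r q = -ori p q r := by
  simp only [ori, det2, Prod.fst_sub, Prod.snd_sub]; ring

theorem ori_seg (p q c e : Pt) (s t : ℝ) (h : s + t = 1) :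
    ori p q (s • c + t • e) = s * ori p q c + t * ori p q e := by
  have hs' : s = 1 - t := by linarith
  subst hs'
  simp only [ori, det2, Prod.fst_sub, Prod.snd_sub, Prod.fst_add, Prod.snd_add,
    Prod.smul_fst, Prod.smul_snd, smul_eq_mul]; ring

theorem ori_self (p q : Pt) : ori p q p = 0 ∧ ori p q q = 0 := by
  constructor <;> simp only [ori, det2, Prod.fst_sub, Prod.snd_sub] <;> ring

theorem ori_seg_zero {p q x : Pt} (h : x ∈ segment ℝ p q) : ori p q x = 0 := by
  obtain ⟨s, t, _, _, hst, rfl⟩ := h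
  rw [ori_seg _ _ _ _ _ _ hst, (ori_self p q).1, (ori_self p q).2]; ring

/-- The blocking analysis: if `x` on `ce` has winding number zero, then `a` lies strictly on the
side of `d` and the triangles `efa`, `abc` do not contain `ce`. -/
theorem block (a b c d e f x : Pt) (habc : 0 < ori a b c) (hcde : 0 < ori c d e)
    (hefa : 0 < ori e f a)
    (ha : a ≠ x) (hb : b ≠ x) (hc : c ≠ x) (hd : d ≠ x) (he : e ≠ x) (hf : f ≠ x)
    (hx : x ∈ segment ℝ c e)
    (hW : ang x a b + ang x b c + ang x c d + ang x d e + ang x e f + ang x f a = 0) :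
    ori c e a < 0 ∧ ¬ (0 < ori e f c ∧ 0 ≤ ori f a c) ∧ ¬ (0 < ori b c e ∧ 0 ≤ ori a b e) := by
  obtain ⟨s, t, hs, ht, hst, hxe⟩ := hx
  have hs0 : 0 < s := by
    rcases hs.lt_or_eq with h | h
    · exact h
    · exfalso; apply he; rw [← hxe, ← h]
      have : t = 1 := by linarith
      simp [this]
  have ht0 : 0 < t := by
    rcases ht.lt_or_eq with h | h
    · exact h
    · exfalso; apply hc; rw [← hxe, ← h]
      have : s = 1 := by linarith
      simp [this]
  have S : ∀ p q, ori x p q = s * ori p q c + t * ori p q e := by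
    intro p q
    rw [← ori_seg p q c e s t hst, hxe]
    exact (ori_rot x p q).symm
  have o_cd : 0 < ori x c d := by
    rw [S, (ori_self c d).1]
    have : 0 < t * ori c d e := mul_pos ht0 hcde
    linarith
  have o_de : 0 < ori x d e := by
    rw [S, (ori_self d e).2, ori_rot]
    have : 0 < s * ori c d e := mul_pos hs0 hcde
    linarith
  have o_ca : ori x c a = -(t * ori c e a) := by
    rw [S, (ori_self c a).1, ori_swap]; ring
  have o_ae : ori x a e = -(s * ori c e a) := by
    rw [S, (ori_self a e).2, ori_rot, ori_swap]; ring
  have hside : ori c e a < 0 := by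
    by_contra h
    push Not at h
    have h1 := two_nonneg ha hb hc habc.le
      (by rw [o_ca]; have := mul_nonneg ht h; linarith)
    have h2 := two_nonneg he hf ha hefa.le
      (by rw [o_ae]; have := mul_nonneg hs h; linarith)
    have := ang_pos o_cd
    have := ang_pos o_de
    linarith
  have p_ca : 0 < ori x c a := by
    rw [o_ca]; have := mul_neg_of_pos_of_neg ht0 hside; linarith
  have p_ae : 0 < ori x a e := by
    rw [o_ae]; have := mul_neg_of_pos_of_neg hs0 hside; linarith
  have x_ca : x ∉ segment ℝ c a := by
    intro h; have := ori_seg_zero h; rw [ori_rot x c a] at this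
    linarith
  have x_ae : x ∉ segment ℝ a e := by
    intro h; have := ori_seg_zero h; rw [ori_rot x a e] at this
    linarith
  have hac := ang_symm x_ca
  have hea := ang_symm x_ae
  have T1 := T3_nonneg' he hf ha hefa.le
  have T2 := T3_nonneg' ha hb hc habc.le
  have hQ : ang x c d + ang x d e + ang x e a + ang x a c = 0 := by
    apply zero_of_int
    · apply int_of_coe
      simp only [Real.Angle.coe_add, ang_coe hc hd, ang_coe hd he, ang_coe he ha, ang_coe ha hc]
      abel
    · have := ang_pos o_cd
      have := ang_pos o_de
      have := ang_gt x e a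
      have := ang_gt x a c
      linarith
    · have := ang_pos p_ca
      have := ang_pos p_ae
      have h1 : ang x c d ≤ Real.pi := Complex.arg_le_pi _
      have h2 : ang x d e ≤ Real.pi := Complex.arg_le_pi _
      linarith
  have hT : T3 x e f a + T3 x a b c = 0 := by
    unfold T3
    linarith
  refine ⟨hside, ?_, ?_⟩
  · rintro ⟨h1, h2⟩
    have : 0 < T3 x e f a := by
      apply T3_pos _ _ p_ae
      · rw [S, (ori_self e f).1]
        have := mul_pos hs0 h1
        linarith
      · rw [S, ori_rot e f a]
        have := mul_nonneg hs h2
        have := mul_pos ht0 hefa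
        linarith
    linarith
  · rintro ⟨h1, h2⟩
    have : 0 < T3 x a b c := by
      apply T3_pos _ _ p_ca
      · rw [S]
        have := mul_nonneg ht h2
        have := mul_pos hs0 habc
        linarith
      · rw [S, (ori_self b c).2]
        have := mul_pos ht0 h1
        linarith
    linarith

/-- A direction strictly left of both `fa` and `ab`. -/
theorem exists_dir (a b f : Pt) (hab : a ≠ b) (haf : a ≠ f) (h : ori f a b ≤ 0)
    (hseg : ∀ x, x ∈ segment ℝ f a → x ∈ segment ℝ a b → x = a) :
    ∃ u : Pt, 0 < det2 (b - a) u ∧ 0 < det2 (a - f) u := by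
  rcases h.lt_or_eq with h | h
  · refine ⟨(a - f) - (b - a), ?_, ?_⟩ <;>
    · simp only [ori, det2, Prod.fst_sub, Prod.snd_sub] at *
      linarith
  · refine ⟨(-(b - a).2, (b - a).1), ?_, ?_⟩
    · have := normSq_pos' hab
      simp only [det2, Prod.fst_sub, Prod.snd_sub] at *
      linarith
    · by_contra hc
      have n1 := normSq_pos' hab
      have n2 := normSq_pos' haf
      set m := (f.1 - a.1) * (b.1 - a.1) + (f.2 - a.2) * (b.2 - a.2) with hm
      have hm0 : 0 ≤ m := by
        simp only [det2, Prod.fst_sub, Prod.snd_sub] at hc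
        linarith
      have hcr : (f.1 - a.1) * (b.2 - a.2) - (f.2 - a.2) * (b.1 - a.1) = 0 := by
        simp only [ori, det2, Prod.fst_sub, Prod.snd_sub] at h
        linarith
      set N := (b.1 - a.1) ^ 2 + (b.2 - a.2) ^ 2 with hN
      have hk1 : f.1 - a.1 = m / N * (b.1 - a.1) := by
        rw [div_mul_eq_mul_div, eq_div_iff n1.ne', hm, hN]
        linear_combination (b.2 - a.2) * hcr
      have hk2 : f.2 - a.2 = m / N * (b.2 - a.2) := by
        rw [div_mul_eq_mul_div, eq_div_iff n1.ne', hm, hN]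
        linear_combination -(b.1 - a.1) * hcr
      have hk : 0 ≤ m / N := div_nonneg hm0 n1.le
      set k := m / N with hkdef
      rcases le_or_gt k 1 with hk' | hk'
      · skip
        refine haf (hseg f (left_mem_segment ℝ _ _) ⟨1 - k, k, by linarith, hk, by ring, ?_⟩).symm
        ext
        · simp only [Prod.fst_add, Prod.smul_fst, smul_eq_mul]; linarith
        · simp only [Prod.snd_add, Prod.smul_snd, smul_eq_mul]; linarith
      · have hk0 : 0 < k := by linarith
        refine hab (hseg b ⟨1 / k, 1 - 1 / k, by positivity, ?_, by ring, ?_⟩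
          (right_mem_segment ℝ _ _)).symm
        · rw [sub_nonneg, div_le_one hk0]; exact hk'.le
        · ext
          · simp only [Prod.fst_add, Prod.smul_fst, smul_eq_mul]; field_simp; linarith
          · simp only [Prod.snd_add, Prod.smul_snd, smul_eq_mul]; field_simp; linarith

/-- Points left of `fa` and `ab` are left of `ac`. -/
theorem left_of (a b c f y : Pt) (habc : 0 < ori a b c) (hfab : ori f a b ≤ 0)
    (hfac : ori f a c < 0) (h1 : 0 < ori f a y) (h2 : 0 < ori a b y) : 0 < ori a c y := by
  have key : -ori f a b * ori a c y = ori a b c * ori f a y - ori a b y * ori f a c := by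
    simp only [ori, det2, Prod.fst_sub, Prod.snd_sub]; ring
  have k1 := mul_pos habc h1
  have k2 := mul_neg_of_pos_of_neg h2 hfac
  by_contra hc
  have : 0 ≤ -ori f a b * -ori a c y := mul_nonneg (by linarith) (by linarith)
  linarith

/-- Points left of `fa` and `ab` are left of `ea`. -/
theorem left_of' (a b e f y : Pt) (hefa : 0 < ori e f a) (hfab : ori f a b ≤ 0)
    (habe : ori a b e < 0) (h1 : 0 < ori f a y) (h2 : 0 < ori a b y) : 0 < ori e a y := by
  have key : -ori f a b * ori e a y = ori e f a * ori a b y - ori f a y * ori a b e := by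
    simp only [ori, det2, Prod.fst_sub, Prod.snd_sub]; ring
  have k1 := mul_pos hefa h2
  have k2 := mul_neg_of_pos_of_neg h1 habe
  by_contra hc
  have : 0 ≤ -ori f a b * -ori e a y := mul_nonneg (by linarith) (by linarith)
  linarith

theorem eventually_pos (p q a u : Pt) (h : 0 < ori p q a) :
    ∀ᶠ t : ℝ in nhdsWithin 0 (Set.Ioi 0), 0 < ori p q (a + t • u) := by
  have hc : Continuous fun t : ℝ => ori p q (a + t • u) := by
    simp only [ori, det2, Prod.fst_sub, Prod.snd_sub, Prod.fst_add, Prod.snd_add,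
      Prod.smul_fst, Prod.smul_snd, smul_eq_mul]
    fun_prop
  have h0 : 0 < ori p q (a + (0 : ℝ) • u) := by simpa using h
  exact (hc.continuousAt.eventually (lt_mem_nhds h0)).filter_mono nhdsWithin_le_nhds

/-- Lemma 5 (lemma:obstruct).  Let `abcdef` be a simple counterclockwise hexagon in
which `a` is the only reflex vertex other than possibly `c` or `e` (so `b`, `d`, `f`
are strictly convex and `a` is reflex).  If `c` does not see `e`, then
(i) `Wedge(a) ∩ Wedge(c) ≠ ∅` and (ii) `Wedge(a) ⊆ L(a, c)`. -/
theorem lemma_obstruct (v : Fin 6 → Pt)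
    (hsimple : IsSimplePolygon v) (hccw : IsCCW v)
    (ha : ReflexAt v 0)
    (hb : StrictlyConvexAt v 1) (hd : StrictlyConvexAt v 3) (hf : StrictlyConvexAt v 5)
    (hce : ¬ Sees v (v 2) (v 4)) :
    (Wedge v 0 ∩ Wedge v 2).Nonempty ∧ Wedge v 0 ⊆ Lhp (v 0) (v 2) := by
  obtain ⟨-, hinj, hseg⟩ := hsimple
  have habc : 0 < ori (v 0) (v 1) (v 2) := by
    have h : 0 < det2 (v 1 - v 0) (v 2 - v 1) := hb
    simp only [ori, det2, Prod.fst_sub, Prod.snd_sub] at *; linarith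
  have hcde : 0 < ori (v 2) (v 3) (v 4) := by
    have h : 0 < det2 (v 3 - v 2) (v 4 - v 3) := hd
    simp only [ori, det2, Prod.fst_sub, Prod.snd_sub] at *; linarith
  have hefa : 0 < ori (v 4) (v 5) (v 0) := by
    have h : 0 < det2 (v 5 - v 4) (v 0 - v 5) := hf
    simp only [ori, det2, Prod.fst_sub, Prod.snd_sub] at *; linarith
  have hfab : ori (v 5) (v 0) (v 1) ≤ 0 := by
    have h : det2 (v 0 - v 5) (v 1 - v 0) ≤ 0 := ha
    simp only [ori, det2, Prod.fst_sub, Prod.snd_sub] at *; linarith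
  have harea : 0 < ori (v 0) (v 2) (v 4) + ori (v 0) (v 1) (v 2) + ori (v 2) (v 3) (v 4)
      + ori (v 4) (v 5) (v 0) := by
    have h : 0 < det2 (v 0) (v 1) + det2 (v 1) (v 2) + det2 (v 2) (v 3) + det2 (v 3) (v 4)
        + det2 (v 4) (v 5) + det2 (v 5) (v 0) := by
      have h := hccw
      rw [IsCCW, signedArea2, Fin.sum_univ_six] at h
      exact h
    simp only [ori, det2, Prod.fst_sub, Prod.snd_sub] at *; linarith
  have ne : ∀ i j : Fin 6, i ≠ j → v i ≠ v j := fun i j h h' => h (hinj h')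
  have nc : ∀ i j : Fin 6, i ≠ j → i ≠ j + 1 → i + 1 ≠ j →
      NoCross (v i) (v (i + 1)) (v j) (v (j + 1)) := by
    intro i j h1 h2 h3
    apply noCross_of_disjoint
    intro x hx hx'
    obtain ⟨k1, k2⟩ := hseg i j h1 ⟨hx, hx'⟩
    simp only [Set.mem_insert_iff, Set.mem_singleton_iff] at k1 k2
    rcases k1 with k1 | k1 <;> rcases k2 with k2 | k2
    · exact ne i j h1 (k1.symm.trans k2)
    · exact ne i (j + 1) h2 (k1.symm.trans k2)
    · exact ne (i + 1) j h3 (k1.symm.trans k2)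
    · exact ne (i + 1) (j + 1) (fun h => h1 (add_right_cancel h)) (k1.symm.trans k2)
  -- the blocked point
  obtain ⟨x, hx, hxr⟩ := Set.not_subset.1 hce
  have hxb : x ∉ polyBoundary v := fun h => hxr (Or.inl h)
  have hxi : x ∉ polyInterior v := fun h => hxr (Or.inr h)
  have hW : W6 v x = 0 := by
    by_contra h
    exact hxi (mem_interior_of_W6 hxb h)
  rw [W6_eq] at hW
  have nx := ne_vertex hxb
  obtain ⟨hcea, X1, X2⟩ := block (v 0) (v 1) (v 2) (v 3) (v 4) (v 5) x habc hcde hefa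
    (nx 0) (nx 1) (nx 2) (nx 3) (nx 4) (nx 5) hx hW
  obtain ⟨hcda, hdea, hfac, habe⟩ := core (v 0) (v 1) (v 2) (v 3) (v 4) (v 5) habc hcde hefa
    hfab hcea X1 X2 harea
    (nc 1 4 (by decide) (by decide) (by decide))
    (nc 5 2 (by decide) (by decide) (by decide))
    (nc 4 2 (by decide) (by decide) (by decide))
    (nc 0 3 (by decide) (by decide) (by decide))
    (nc 1 3 (by decide) (by decide) (by decide))
    (nc 5 3 (by decide) (by decide) (by decide))
    (nc 0 2 (by decide) (by decide) (by decide))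
  refine ⟨?_, ?_⟩
  · obtain ⟨u, hu1, hu2⟩ := exists_dir (v 0) (v 1) (v 5) (ne 0 1 (by decide))
      (ne 0 5 (by decide)) hfab (by
        intro x hx hx'
        obtain ⟨k1, k2⟩ := hseg 5 0 (by decide) ⟨hx, hx'⟩
        have k1' : x = v 5 ∨ x = v 0 := k1
        have k2' : x = v 0 ∨ x = v 1 := k2
        rcases k1' with k1' | k1'
        · rcases k2' with k2' | k2'
          · exact k2'
          · exact absurd (k1'.symm.trans k2') (ne 5 1 (by decide))
        · exact k1')
    have hbca : 0 < ori (v 1) (v 2) (v 0) := by rw [ori_rot]; exact habc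
    have heca : 0 < ori (v 4) (v 2) (v 0) := by
      have : ori (v 4) (v 2) (v 0) = -ori (v 2) (v 4) (v 0) := by
        simp only [ori, det2, Prod.fst_sub, Prod.snd_sub]; ring
      linarith
    obtain ⟨t, ⟨⟨⟨⟨⟨t1, t2⟩, t3⟩, t4⟩, t5⟩, ht⟩⟩ := ((((((eventually_pos _ _ _ u hbca).and
      (eventually_pos _ _ _ u hcda)).and (eventually_pos _ _ _ u hdea)).and
      (eventually_pos _ _ _ u hefa)).and (eventually_pos _ _ _ u heca)).and
      self_mem_nhdsWithin).exists
    have ht0 : 0 < t := ht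
    have y1 : 0 < ori (v 0) (v 1) (v 0 + t • u) := by
      have : ori (v 0) (v 1) (v 0 + t • u) = t * det2 (v 1 - v 0) u := by
        simp only [ori, det2, Prod.fst_sub, Prod.snd_sub, Prod.fst_add, Prod.snd_add,
          Prod.smul_fst, Prod.smul_snd, smul_eq_mul]; ring
      rw [this]; positivity
    have y2 : 0 < ori (v 5) (v 0) (v 0 + t • u) := by
      have : ori (v 5) (v 0) (v 0 + t • u) = t * det2 (v 0 - v 5) u := by
        simp only [ori, det2, Prod.fst_sub, Prod.snd_sub, Prod.fst_add, Prod.snd_add,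
          Prod.smul_fst, Prod.smul_snd, smul_eq_mul]; ring
      rw [this]; positivity
    generalize v 0 + t • u = y at *
    have y3 := left_of _ _ _ _ y habc hfab hfac y2 y1
    have y4 := left_of' _ _ _ _ y hefa hfab habe y2 y1
    have off : ∀ p q : Pt, 0 < ori p q y → y ∉ segment ℝ p q := by
      intro p q h h'
      rw [ori_seg_zero h'] at h
      exact lt_irrefl _ h
    have hyb : y ∉ polyBoundary v := by
      intro h
      obtain ⟨i, hi⟩ := Set.mem_iUnion.1 h
      fin_cases i
      · exact off _ _ y1 hi
      · exact off _ _ t1 hi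
      · exact off _ _ t2 hi
      · exact off _ _ t3 hi
      · exact off _ _ t4 hi
      · exact off _ _ y2 hi
    have ny := ne_vertex hyb
    have hyi : y ∈ polyInterior v := by
      apply mem_interior_of_W6 hyb
      rw [W6_eq]
      have s1 := ang_symm (off _ _ t5)
      have s2 := ang_symm (off _ _ y3)
      have s3 := ang_symm (off _ _ y4)
      have R : ∀ p q, ori y p q = ori p q y := fun p q => (ori_rot y p q).symm
      have T1 : 0 < T3 y (v 2) (v 3) (v 4) := T3_pos (by rw [R]; exact t2) (by rw [R]; exact t3)
        (by rw [R]; exact t5)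
      have T2 := T3_nonneg' (ny 4) (ny 5) (ny 0) hefa.le
      have T3' := T3_nonneg' (ny 0) (ny 1) (ny 2) habc.le
      have T4 : 0 ≤ T3 y (v 0) (v 2) (v 4) := T3_nonneg (ny 0) (ny 2) (ny 4)
        (Or.inl (by rw [R]; exact y3.le))
      unfold T3 at *
      apply ne_of_gt
      linarith
    have flip : ∀ p q : Pt, ori q p y = -ori p q y := by
      intro p q
      simp only [ori, det2, Prod.fst_sub, Prod.snd_sub]; ring
    refine ⟨y, ⟨⟨y2, ?_⟩, hyi⟩, ⟨⟨t1, ?_⟩, hyi⟩⟩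
    · show ori (v 1) (v 0) y < 0
      rw [flip]; linarith
    · show ori (v 3) (v 2) y < 0
      rw [flip]; linarith
  · rintro y ⟨⟨h1, h2⟩, -⟩
    have h1' : 0 < ori (v 5) (v 0) y := h1
    have h2' : ori (v 1) (v 0) y < 0 := h2
    refine left_of _ _ _ _ y habc hfab hfac h1' ?_
    have : ori (v 1) (v 0) y = -ori (v 0) (v 1) y := by
      simp only [ori, det2, Prod.fst_sub, Prod.snd_sub]; ring
    linarith
end
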